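/- There exist constants ε > 0 and K < ∞ depending only on p such that for every t > 0 and every natural number L₀: ‖ μ̃ − ν^{μ̃}_{t,L₀} ‖_TV ≤ K·e^{−ε·L₀}, where ν^{μ̃}_{t,L₀} is the law of θ_{L₀} η when the initial configuration is distributed according to μ̃ and η according to the time-t distribution, i.e. ν^{μ̃}_{t,L₀} is the pushforward under θ_{L₀} of the measure ∫ P_t(ω, ·) dμ̃(ω). (Starting from μ̃, the configuration at distance L₀ behind the front at any time t is exponentially close in total variation to μ̃ itself.) -/

import Mathlib

open MeasureTheory ProbabilityTheory Filter Topology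

noncomputable section

/-- The configuration space of the East model on `ℤ`: `0` ↔ `false` (empty), `1` ↔ `true`. -/
abbrev Config : Type := ℤ → Bool

/-- The configuration `ω` flipped at site `x`. -/
def flipAt (ω : Config) (x : ℤ) : Config := fun y => if y = x then !ω x else ω y

/-- `f` depends only on the coordinates in `S`. -/
def DependsOnF (f : Config → ℝ) (S : Set ℤ) : Prop :=
  ∀ ω ω' : Config, (∀ x ∈ S, ω x = ω' x) → f ω = f ω'

/-- The set `A` depends only on the coordinates in `S`. -/
def DependsOnSet (A : Set Config) (S : Set ℤ) : Prop :=
  ∀ ω ω' : Config, (∀ x ∈ S, ω x = ω' x) → (ω ∈ A ↔ ω' ∈ A)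

/-- A cylinder (local) function: depends on finitely many coordinates. -/
def IsCylinder (f : Config → ℝ) : Prop := ∃ S : Finset ℤ, DependsOnF f ↑S

/-- The East generator at density `p` of ones. -/
def eastGen (p : ℝ) (f : Config → ℝ) (ω : Config) : ℝ :=
  ∑' x : ℤ, (if ω (x + 1) = false then (1 : ℝ) else 0) *
    (if ω x = false then p else 1 - p) * (f (flipAt ω x) - f ω)

/-- Spatial translation: `(shift y ω) x = ω (x + y)`. -/
def shift (y : ℤ) (ω : Config) : Config := fun x => ω (x + y)

/-- Left-occupied configurations: identically `1` on a left half-line, with an empty site. -/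
def LO : Set Config := {ω | (∃ y : ℤ, ∀ x < y, ω x = true) ∧ ∃ x, ω x = false}

/-- The front: position of the left-most zero. -/
def front (ω : Config) : ℤ := sInf {x : ℤ | ω x = false}

/-- Left-occupied configurations with front at the origin. -/
def LO₀ : Set Config := {ω ∈ LO | front ω = 0}

/-- The configuration seen at distance `L` behind the front. -/
def θL (L : ℤ) (ω : Config) : Config := fun x =>
  if x < 0 then true else if x = 0 then false else ω (front ω + L + x)

/-- `f` averaged over the coordinate at site `1` w.r.t. Bernoulli(p). -/
def avg1 (p : ℝ) (f : Config → ℝ) (ω : Config) : ℝ :=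
  p * f (Function.update ω 1 true) + (1 - p) * f (Function.update ω 1 false)

/-- The East process on `ℤ` at density `p`, together with its equilibrium measure. -/
structure EastProcess where
  /-- equilibrium density of ones -/
  p : ℝ
  hp0 : 0 < p
  hp1 : p < 1
  /-- the Markov semigroup -/
  P : ℝ → Kernel Config Config
  markov : ∀ t : ℝ, IsMarkovKernel (P t)
  P0 : P 0 = Kernel.id
  semigroup : ∀ s t : ℝ, 0 ≤ s → 0 ≤ t → P (t + s) = (P s).comp (P t)
  feller : ∀ t : ℝ, 0 ≤ t → ∀ f : Config → ℝ, Continuous f →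
    Continuous fun ω : Config => ∫ η, f η ∂(P t ω)
  timeCont : ∀ f : Config → ℝ, Continuous f → ∀ ω : Config,
    Continuous fun t : ℝ => ∫ η, f η ∂(P t ω)
  shiftComm : ∀ t : ℝ, 0 ≤ t → ∀ y : ℤ, ∀ ω : Config,
    P t (shift y ω) = Measure.map (shift y) (P t ω)
  generator : ∀ f : Config → ℝ, IsCylinder f → ∀ ω : Config,
    HasDerivWithinAt (fun u : ℝ => ∫ η, f η ∂(P u ω)) (eastGen p f ω) (Set.Ici 0) 0
  /-- the product Bernoulli(p) measure -/
  μ : Measure Config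
  μprob : IsProbabilityMeasure μ
  μprod : ∀ (S : Finset ℤ) (σ : ℤ → Bool),
    μ {ω : Config | ∀ x ∈ S, ω x = σ x} = ∏ x ∈ S, ENNReal.ofReal (if σ x then p else 1 - p)
  /-- LO is stable for the dynamics -/
  loStable : ∀ t : ℝ, 0 ≤ t → ∀ ω ∈ LO, P t ω LO = 1

/-- The set of Rayleigh quotients defining the spectral gap. -/
def gapSet (E : EastProcess) : Set ℝ :=
  {r | ∃ f : Config → ℝ, IsCylinder f ∧ 0 < variance f E.μ ∧
    r = (-∫ ω, f ω * eastGen E.p f ω ∂E.μ) / variance f E.μ}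

/-- The spectral gap of the East process. -/
def gap (E : EastProcess) : ℝ := sInf (gapSet E)

/-- The product measure `μ̃`: all ones on the negative half-line, a zero at the origin,
Bernoulli(p) on the positive half-line. -/
def IsMuTilde (p : ℝ) (μt : Measure Config) : Prop :=
  IsProbabilityMeasure μt ∧
  ∀ (S : Finset ℤ) (σ : ℤ → Bool),
    μt {ω : Config | ∀ x ∈ S, ω x = σ x} =
      ∏ x ∈ S, ENNReal.ofReal
        (if x < 0 then (if σ x then 1 else 0)
         else if x = 0 then (if σ x then 0 else 1)
         else (if σ x then p else 1 - p))

/-- The law at time `t` of the process seen from the front started from `π`. -/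
def Qt (E : EastProcess) (t : ℝ) (π : Measure Config) : Measure Config :=
  Measure.map (θL 0) (π.bind fun ω => E.P t ω)

/-!
Replace the sites farther than `L` behind the front, one after the other, by fresh Bernoulli
variables. Each replacement changes a bounded observable of the configuration seen from the front by
a function with zero mean at a site `y` at distance `d > L` behind the front, so it suffices that
the expectation of such a function is exponentially small in `d`, uniformly in time.

Over the last time span of length `d / 16`, finite speed of propagation and an exponential moment of
the displacement of the front make the position of the front almost independent of what happens at
`y`. The zero mean at `y` persists until the constraint at `y` is satisfied and `y` is resampled, so
what remains is at most the survival probability of the process killed at rate one while `y + 1` is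
empty. It decays exponentially: for a block of sites starting at `y + 1` and followed by a zero, the
Poincaré inequality makes the squared survival probability, averaged over the block, decay, and the
maximum principle over all such blocks copes with the motion of the final zero. Pointwise bounds
then cost a factor exponential in the length of the block.

Hence it is enough to find a zero within a small multiple of `d` to the right of `y`. On a time grid
with steps proportional to `d`, every site passed by the front during a step has such a zero, namely
the front at the beginning of the step. If the time elapsed is of order `d`, the sites that the
front has not passed still see the Bernoulli law of the initial configuration; if it is larger,
relaxation to equilibrium to the left of the initial front forces the front to have passed `y`. All
of this takes place in a finite box, and finite speed of propagation lets the box grow to `ℤ`.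
-/

namespace East

/-! ### Maximum principle, linear flows and exponentially small sequences -/

lemma eventually_slope_sup'_lt {κ : Type*} {J : Finset κ} (hJ : J.Nonempty) {w : ℝ → κ → ℝ}
    {w' : κ → ℝ} {s r : ℝ} (hw : ∀ k ∈ J, HasDerivAt (fun z => w z k) (w' k) s)
    (hr : ∀ k ∈ J, (∀ l ∈ J, w s l ≤ w s k) → w' k < r) :
    ∀ᶠ z in 𝓝[>] s, slope (fun z => J.sup' hJ (w z)) s z < r := by
  set M : ℝ → ℝ := fun z => J.sup' hJ (w z)
  have below_line : ∀ k ∈ J, ∀ᶠ z in 𝓝[>] s, w z k < M s + r * (z - s) := by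
    intro k hk
    rcases (Finset.le_sup' (w s) hk).lt_or_eq with hlt | heq
    · have hline : HasDerivAt (fun z => M s + r * (z - s)) r s := by
        simpa using (((hasDerivAt_id s).sub_const s).const_mul r).const_add (M s)
      refine nhdsWithin_le_nhds ((hw k hk).continuousAt.eventually_lt hline.continuousAt ?_)
      simpa using hlt
    · have hslope := (hasDerivWithinAt_iff_tendsto_slope' (by simp)).1
        ((hw k hk).hasDerivWithinAt (s := Set.Ioi s))
      have hw' := hr k hk fun l hl => (Finset.le_sup' (w s) hl).trans_eq heq.symm
      filter_upwards [hslope.eventually_lt_const hw', self_mem_nhdsWithin] with z hz hsz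
      rw [slope_def_field, div_lt_iff₀ (sub_pos.2 hsz)] at hz
      have : w s k = M s := heq
      linarith
  filter_upwards [(eventually_all_finset _).2 below_line, self_mem_nhdsWithin] with z hz hsz
  rw [slope_def_field, div_lt_iff₀ (sub_pos.2 hsz), sub_lt_iff_lt_add']
  exact (Finset.sup'_lt_iff hJ).2 hz

lemma le_of_hasDerivAt_le_at_max {ι : Type*} {I : Finset ι} {u u' : ℝ → ι → ℝ} {B B' : ℝ → ℝ}
    (hu : ∀ s, 0 ≤ s → ∀ i ∈ I, HasDerivAt (fun r => u r i) (u' s i) s)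
    (hB : ∀ s, 0 ≤ s → HasDerivAt B (B' s) s) (h0 : ∀ i ∈ I, u 0 i ≤ B 0)
    (hmax : ∀ s, 0 ≤ s → ∀ i ∈ I, (∀ j ∈ I, u s j ≤ u s i) → B s ≤ u s i → u' s i ≤ B' s)
    {t : ℝ} (ht : 0 ≤ t) {i : ι} (hi : i ∈ I) : u t i ≤ B t := by
  -- `w` adds the barrier `B` to the family, so that the running maximum never drops below it.
  let w : ℝ → Option ι → ℝ := fun s k => k.elim (B s) (u s)
  let w' : ℝ → Option ι → ℝ := fun s k => k.elim (B' s) (u' s)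
  have hne : I.insertNone.Nonempty := ⟨none, by simp⟩
  have hw : ∀ s, 0 ≤ s → ∀ k ∈ I.insertNone, HasDerivAt (fun r => w r k) (w' s k) s := by
    rintro s hs (_ | j) hj
    exacts [hB s hs, hu s hs j (by simpa using hj)]
  let M : ℝ → ℝ := fun s => I.insertNone.sup' hne (w s)
  have hM : ContinuousOn M (Set.Icc 0 t) :=
    ContinuousOn.finset_sup'_apply hne fun k hk s hs =>
      (hw s hs.1 k hk).continuousAt.continuousWithinAt
  have hM0 : M 0 ≤ B 0 := by
    refine Finset.sup'_le hne _ ?_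
    rintro (_ | j) hj
    exacts [le_rfl, h0 j (by simpa using hj)]
  have hslope : ∀ s ∈ Set.Ico 0 t, ∀ r, B' s < r → ∃ᶠ z in 𝓝[>] s, slope M s z < r := by
    refine fun s hs r hr => (eventually_slope_sup'_lt hne (hw s hs.1) ?_).frequently
    rintro (_ | j) hj hle
    · exact hr
    · refine (hmax s hs.1 j (by simpa using hj) (fun k hk => hle (some k) (by simpa using hk))
        (hle none (by simp))).trans_lt hr
  have hMB : M t ≤ B t := image_le_of_liminf_slope_right_le_deriv_boundary hM hM0
    (fun s hs => (hB s hs.1).continuousAt.continuousWithinAt)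
    (fun s hs => (hB s hs.1).hasDerivWithinAt) hslope (Set.right_mem_Icc.2 ht)
  exact (Finset.le_sup' (w t) (Finset.some_mem_insertNone.2 hi)).trans hMB

section LinearFlow

variable {S : Type*} [Fintype S] (A : (S → ℝ) →ₗ[ℝ] (S → ℝ)) (s t : ℝ) (f : S → ℝ)

/-- The one-parameter group `e^{tA}` of a linear operator `A` on the functions on a finite set. -/
def linearFlow : (S → ℝ) →L[ℝ] (S → ℝ) :=
  NormedSpace.exp (t • LinearMap.toContinuousLinearMap A)

@[simp] lemma linearFlow_zero : linearFlow A 0 f = f := by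
  simp [linearFlow]

lemma linearFlow_add : linearFlow A (s + t) f = linearFlow A s (linearFlow A t f) := by
  let _ : NormedAlgebra ℚ ((S → ℝ) →L[ℝ] (S → ℝ)) := NormedAlgebra.restrictScalars ℚ ℝ _
  rw [linearFlow, add_smul, NormedSpace.exp_add_of_commute]
  · rfl
  · exact ((Commute.refl _).smul_left s).smul_right t

lemma hasDerivAt_linearFlow : HasDerivAt (fun r => linearFlow A r f) (A (linearFlow A t f)) t :=
  ((hasDerivAt_exp_smul_const' (𝕂 := ℝ) (LinearMap.toContinuousLinearMap A) t).clm_apply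
    (hasDerivAt_const t f)).congr_deriv (by simp [linearFlow])

lemma hasDerivAt_linearFlow_apply (i : S) :
    HasDerivAt (fun r => linearFlow A r f i) (A (linearFlow A t f) i) t :=
  hasDerivAt_pi.1 (hasDerivAt_linearFlow A t f) i

variable {A f} in
lemma linearFlow_eq_self (hf : A f = 0) : linearFlow A t f = f := by
  have hderiv : ∀ r, HasDerivAt (fun r => linearFlow A r f) 0 r := fun r =>
    ((hasDerivAt_exp_smul_const (𝕂 := ℝ) (LinearMap.toContinuousLinearMap A) r).clm_apply
      (hasDerivAt_const r f)).congr_deriv (by simp [hf])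
  rw [is_const_of_deriv_eq_zero (fun r => (hderiv r).differentiableAt) (fun r => (hderiv r).deriv)
    t 0, linearFlow_zero]

end LinearFlow

/-- `f d` is at most of order `e^{-εd}` for some `ε > 0`. No lower bound is required. -/
def ExpSmall (f : ℕ → ℝ) : Prop :=
  ∃ ε > 0, ∃ K : ℝ, 0 ≤ K ∧ ∀ d : ℕ, f d ≤ K * Real.exp (-ε * d)

namespace ExpSmall

variable {f g : ℕ → ℝ}

lemma mono (hg : ExpSmall g) (h : ∀ d, f d ≤ g d) : ExpSmall f := by
  obtain ⟨ε, hε, K, hK, hgK⟩ := hg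
  exact ⟨ε, hε, K, hK, fun d => (h d).trans (hgK d)⟩

lemma add (hf : ExpSmall f) (hg : ExpSmall g) : ExpSmall (fun d => f d + g d) := by
  obtain ⟨ε, hε, K, hK, hfK⟩ := hf
  obtain ⟨ε', hε', K', hK', hgK⟩ := hg
  refine ⟨min ε ε', lt_min hε hε', K + K', by positivity, fun d => ?_⟩
  have slower : ∀ η, min ε ε' ≤ η → Real.exp (-η * d) ≤ Real.exp (-(min ε ε') * d) :=
    fun η hη => Real.exp_le_exp.2 (by gcongr)
  calc f d + g d ≤ K * Real.exp (-ε * d) + K' * Real.exp (-ε' * d) := add_le_add (hfK d) (hgK d)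
    _ ≤ K * Real.exp (-(min ε ε') * d) + K' * Real.exp (-(min ε ε') * d) := by
        gcongr ?_ * ?_ + ?_ * ?_
        exacts [slower ε (min_le_left _ _), slower ε' (min_le_right _ _)]
    _ = (K + K') * Real.exp (-(min ε ε') * d) := by ring

lemma const_mul {c : ℝ} (hc : 0 ≤ c) (hf : ExpSmall f) : ExpSmall (fun d => c * f d) := by
  obtain ⟨ε, hε, K, hK, hfK⟩ := hf
  refine ⟨ε, hε, c * K, by positivity, fun d => ?_⟩
  rw [mul_assoc]
  exact mul_le_mul_of_nonneg_left (hfK d) hc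

lemma natCast_mul (hf : ExpSmall f) : ExpSmall (fun d => (d : ℝ) * f d) := by
  obtain ⟨ε, hε, K, hK, hfK⟩ := hf
  refine ⟨ε / 2, by positivity, K * (2 / ε), by positivity, fun d => ?_⟩
  have hlin : (d : ℝ) ≤ 2 / ε * Real.exp (ε / 2 * d) := by
    have := Real.add_one_le_exp (ε / 2 * d)
    rw [div_mul_eq_mul_div, le_div_iff₀ hε]
    linarith
  calc (d : ℝ) * f d ≤ d * (K * Real.exp (-ε * d)) :=
        mul_le_mul_of_nonneg_left (hfK d) d.cast_nonneg
    _ ≤ (2 / ε * Real.exp (ε / 2 * d)) * (K * Real.exp (-ε * d)) := by gcongr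
    _ = K * (2 / ε) * (Real.exp (ε / 2 * d) * Real.exp (-ε * d)) := by ring
    _ = K * (2 / ε) * Real.exp (-(ε / 2) * d) := by rw [← Real.exp_add]; congr 2; ring

lemma exp {ε : ℝ} (hε : 0 < ε) (c : ℝ) : ExpSmall (fun d => Real.exp (c - ε * d)) :=
  ⟨ε, hε, Real.exp c, (Real.exp_pos _).le, fun d => by rw [← Real.exp_add]; ring_nf; rfl⟩

lemma exp_neg {ε : ℝ} (hε : 0 < ε) : ExpSmall (fun d => Real.exp (-(ε * d))) := by
  simpa using exp hε 0

lemma pow {p : ℝ} (hp0 : 0 < p) (hp1 : p < 1) : ExpSmall (fun d => p ^ d) := by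
  refine (exp_neg (neg_pos.2 (Real.log_neg hp0 hp1))).mono fun d => le_of_eq ?_
  rw [neg_mul, neg_neg, mul_comm, Real.exp_nat_mul, Real.exp_log hp0]

end ExpSmall

/-! ### The killed East dynamics in a box -/

/-- Configurations on the box `[a, b]`. -/
abbrev BoxConfig (a b : ℤ) : Type := Finset.Icc a b → Bool

variable {a b : ℤ}

/-- The configuration on `ℤ` obtained from a box configuration by putting ones to the left of the
box and zeros to its right. -/
def extend (ω : BoxConfig a b) : Config := fun x =>
  if h : x ∈ Finset.Icc a b then ω ⟨x, h⟩ else decide (x < a)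

/-- The box configuration with the value at `x` set to `c`; nothing happens if `x` is outside the
box. -/
def setSite (x : ℤ) (c : Bool) (ω : BoxConfig a b) : BoxConfig a b :=
  fun i => if i.1 = x then c else ω i

lemma extend_setSite (x : ℤ) (c : Bool) (ω : BoxConfig a b) (y : ℤ) :
    extend (setSite x c ω) y = if y = x ∧ x ∈ Finset.Icc a b then c else extend ω y := by
  unfold extend setSite
  by_cases h : y ∈ Finset.Icc a b <;> by_cases hxy : y = x
  · subst hxy; simp [h]
  · simp [h, hxy]
  · subst hxy; simp [h]
  · simp [h, hxy]

lemma extend_setSite_of_ne {x y : ℤ} (h : y ≠ x) (c : Bool) (ω : BoxConfig a b) :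
    extend (setSite x c ω) y = extend ω y := by
  rw [extend_setSite, if_neg fun h' => h h'.1]

lemma extend_setSite_self {x : ℤ} (h : x ∈ Finset.Icc a b) (c : Bool) (ω : BoxConfig a b) :
    extend (setSite x c ω) x = c := by
  rw [extend_setSite, if_pos ⟨rfl, h⟩]

lemma extend_of_lt {x : ℤ} (h : x < a) (ω : BoxConfig a b) : extend ω x = true := by
  rw [extend, dif_neg fun h' => (Finset.mem_Icc.1 h').1.not_gt h, decide_eq_true h]

lemma extend_of_gt (hab : a ≤ b + 1) {x : ℤ} (h : b < x) (ω : BoxConfig a b) :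
    extend ω x = false := by
  rw [extend, dif_neg fun h' => (Finset.mem_Icc.1 h').2.not_gt h, decide_eq_false (by omega)]

lemma extend_injective : Function.Injective (extend : BoxConfig a b → Config) := by
  intro ω ω' h
  funext i
  simpa [extend, i.2] using congrFun h i.1

lemma setSite_setSite (x : ℤ) (c c' : Bool) (ω : BoxConfig a b) :
    setSite x c (setSite x c' ω) = setSite x c ω := by
  funext i; simp only [setSite]; split_ifs <;> rfl

lemma setSite_comm {x y : ℤ} (h : x ≠ y) (c c' : Bool) (ω : BoxConfig a b) :
    setSite x c (setSite y c' ω) = setSite y c' (setSite x c ω) := by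
  funext i; simp only [setSite]; split_ifs with hx hy
  exacts [(h (hx.symm.trans hy)).elim, rfl, rfl, rfl]

lemma setSite_of_notMem {x : ℤ} (h : x ∉ Finset.Icc a b) (c : Bool) (ω : BoxConfig a b) :
    setSite x c ω = ω := by
  funext i
  exact if_neg fun hi : i.1 = x => h (hi ▸ i.2)

lemma setSite_extend (x : ℤ) (ω : BoxConfig a b) : setSite x (extend ω x) ω = ω := by
  apply extend_injective
  funext y
  rw [extend_setSite]
  split_ifs with h
  · rw [h.1]
  · rfl

/-- The observable `f` does not depend on the site `x`. -/
def IgnoresSite (x : ℤ) (f : BoxConfig a b → ℝ) : Prop := ∀ ω c, f (setSite x c ω) = f ω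

/-- Averaging over the Bernoulli(`p`) resampling of the site `x`. -/
def siteAvg (p : ℝ) (x : ℤ) : (BoxConfig a b → ℝ) →ₗ[ℝ] (BoxConfig a b → ℝ) :=
  p • LinearMap.funLeft ℝ ℝ (setSite x true) + (1 - p) • LinearMap.funLeft ℝ ℝ (setSite x false)

lemma siteAvg_apply (p : ℝ) (x : ℤ) (f : BoxConfig a b → ℝ) (ω : BoxConfig a b) :
    siteAvg p x f ω = p * f (setSite x true ω) + (1 - p) * f (setSite x false ω) := rfl

lemma ignoresSite_of_notMem {x : ℤ} (h : x ∉ Finset.Icc a b) (f : BoxConfig a b → ℝ) :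
    IgnoresSite x f := fun ω c => by
  rw [setSite_of_notMem h]

lemma ignoresSite_siteAvg (p : ℝ) (x : ℤ) (f : BoxConfig a b → ℝ) :
    IgnoresSite x (siteAvg p x f) := fun ω c => by
  simp only [siteAvg_apply, setSite_setSite]

lemma IgnoresSite.siteAvg_eq {x : ℤ} {f : BoxConfig a b → ℝ} (h : IgnoresSite x f) (p : ℝ) :
    siteAvg p x f = f := by
  funext ω
  rw [siteAvg_apply, h ω, h ω]
  ring

lemma siteAvg_comm (p : ℝ) (x y : ℤ) (f : BoxConfig a b → ℝ) :
    siteAvg p x (siteAvg p y f) = siteAvg p y (siteAvg p x f) := by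
  by_cases h : x = y
  · rw [h]
  · funext ω
    simp only [siteAvg_apply, setSite_comm h]
    ring

protected lemma IgnoresSite.siteAvg {x : ℤ} {f : BoxConfig a b → ℝ} (h : IgnoresSite x f)
    (p : ℝ) (y : ℤ) :
    IgnoresSite x (siteAvg p y f) := by
  rw [← h.siteAvg_eq p, siteAvg_comm]
  exact ignoresSite_siteAvg p x _

lemma IgnoresSite.siteAvg_mul {x : ℤ} {f : BoxConfig a b → ℝ} (h : IgnoresSite x f) (p : ℝ)
    (g : BoxConfig a b → ℝ) : siteAvg p x (f * g) = f * siteAvg p x g := by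
  funext ω
  simp only [siteAvg_apply, Pi.mul_apply, h ω]
  ring

section Order

variable {p c : ℝ} {x : ℤ} {f g : BoxConfig a b → ℝ} {ω : BoxConfig a b}

lemma siteAvg_mono (hp : p ∈ Set.Icc (0 : ℝ) 1) (h : ∀ e, f (setSite x e ω) ≤ g (setSite x e ω)) :
    siteAvg p x f ω ≤ siteAvg p x g ω :=
  add_le_add (mul_le_mul_of_nonneg_left (h true) hp.1)
    (mul_le_mul_of_nonneg_left (h false) (sub_nonneg.2 hp.2))

lemma siteAvg_le (hp : p ∈ Set.Icc (0 : ℝ) 1) (h : ∀ e, f (setSite x e ω) ≤ c) :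
    siteAvg p x f ω ≤ c :=
  (siteAvg_mono hp (g := fun _ => c) h).trans_eq (by rw [siteAvg_apply]; ring)

lemma abs_siteAvg_le (hp : p ∈ Set.Icc (0 : ℝ) 1) (h : ∀ e, |f (setSite x e ω)| ≤ c) :
    |siteAvg p x f ω| ≤ c := by
  have hneg : siteAvg p x (-f) ω ≤ c := siteAvg_le hp fun e => (neg_le_abs _).trans (h e)
  rw [map_neg, Pi.neg_apply] at hneg
  exact abs_le.2 ⟨by linarith, siteAvg_le hp fun e => (le_abs_self _).trans (h e)⟩

end Order

/-- The indicator that `x` may be updated in the East dynamics, i.e. that `x + 1` is empty. -/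
def constraint (x : ℤ) (ω : Config) : ℝ := if ω (x + 1) = false then 1 else 0

lemma constraint_nonneg (x : ℤ) (ω : Config) : 0 ≤ constraint x ω := by
  unfold constraint; split_ifs <;> norm_num

lemma constraint_le_one (x : ℤ) (ω : Config) : constraint x ω ≤ 1 := by
  unfold constraint; split_ifs <;> norm_num

/-- The constraint as an observable in the box `[a, b]`. -/
def boxConstraint (x : ℤ) (ω : BoxConfig a b) : ℝ := constraint x (extend ω)

lemma boxConstraint_nonneg (x : ℤ) (ω : BoxConfig a b) : 0 ≤ boxConstraint x ω :=
  constraint_nonneg x _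

lemma boxConstraint_le_one (x : ℤ) (ω : BoxConfig a b) : boxConstraint x ω ≤ 1 :=
  constraint_le_one x _

lemma ignoresSite_boxConstraint {x z : ℤ} (h : x ≠ z + 1) :
    IgnoresSite x (boxConstraint z : BoxConfig a b → ℝ) := fun ω c => by
  simp only [boxConstraint, constraint, extend_setSite_of_ne h.symm]

/-- The part of the East generator that resamples the site `x`. -/
def siteGen (p : ℝ) (x : ℤ) : (BoxConfig a b → ℝ) →ₗ[ℝ] (BoxConfig a b → ℝ) :=
  LinearMap.mulLeft ℝ (boxConstraint x) ∘ₗ (siteAvg p x - LinearMap.id)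

lemma siteGen_apply (p : ℝ) (x : ℤ) (f : BoxConfig a b → ℝ) (ω : BoxConfig a b) :
    siteGen p x f ω = boxConstraint x ω * (siteAvg p x f ω - f ω) := rfl

/-- The East generator in the box `[a, b]` with killing rate `V`. -/
def killedGen (p : ℝ) (V : BoxConfig a b → ℝ) : (BoxConfig a b → ℝ) →ₗ[ℝ] (BoxConfig a b → ℝ) :=
  ∑ x ∈ Finset.Icc a b, siteGen p x - LinearMap.mulLeft ℝ V

lemma killedGen_apply (p : ℝ) (V f : BoxConfig a b → ℝ) (ω : BoxConfig a b) : killedGen p V f ω =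
    ∑ x ∈ Finset.Icc a b, boxConstraint x ω * (siteAvg p x f ω - f ω) - V ω * f ω := by
  simp [killedGen, siteGen_apply]

/-- The semigroup of the East dynamics in the box `[a, b]` killed at rate `V`. -/
def killedSemigroup (p : ℝ) (V : BoxConfig a b → ℝ) (t : ℝ) :
    (BoxConfig a b → ℝ) →L[ℝ] (BoxConfig a b → ℝ) :=
  linearFlow (killedGen p V) t

/-- The semigroup of the East dynamics in the box `[a, b]`. -/
def boxSemigroup (p t : ℝ) : (BoxConfig a b → ℝ) →L[ℝ] (BoxConfig a b → ℝ) :=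
  killedSemigroup p 0 t

@[simp] lemma killedSemigroup_zero (p : ℝ) (V f : BoxConfig a b → ℝ) :
    killedSemigroup p V 0 f = f :=
  linearFlow_zero _ f

@[simp] lemma boxSemigroup_zero (p : ℝ) (f : BoxConfig a b → ℝ) : boxSemigroup p 0 f = f :=
  killedSemigroup_zero p 0 f

lemma boxSemigroup_add (p s t : ℝ) (f : BoxConfig a b → ℝ) :
    boxSemigroup p (s + t) f = boxSemigroup p s (boxSemigroup p t f) :=
  linearFlow_add _ s t f

lemma hasDerivAt_killedSemigroup (p : ℝ) (V f : BoxConfig a b → ℝ) (t : ℝ) (ω : BoxConfig a b) :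
    HasDerivAt (fun s => killedSemigroup p V s f ω) (killedGen p V (killedSemigroup p V t f) ω) t :=
  hasDerivAt_linearFlow_apply _ t f ω

lemma hasDerivAt_boxSemigroup (p : ℝ) (f : BoxConfig a b → ℝ) (t : ℝ) (ω : BoxConfig a b) :
    HasDerivAt (fun s => boxSemigroup p s f ω) (killedGen p 0 (boxSemigroup p t f) ω) t :=
  hasDerivAt_killedSemigroup p 0 f t ω

lemma boxSemigroup_const (p t c : ℝ) (ω : BoxConfig a b) :
    boxSemigroup p t (fun _ => c) ω = c := by
  refine congrFun (linearFlow_eq_self t (funext fun η => ?_)) ω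
  simp only [killedGen_apply, siteAvg_apply, Pi.zero_apply, zero_mul, sub_zero]
  exact Finset.sum_eq_zero fun x _ => by ring

section Comparison

variable {p : ℝ} (hp : p ∈ Set.Icc (0 : ℝ) 1) {V : BoxConfig a b → ℝ} (hV : ∀ ω, 0 ≤ V ω)
include hp hV

lemma le_of_hasDerivAt_killedGen_add {u F : ℝ → BoxConfig a b → ℝ} {B B' : ℝ → ℝ}
    (hu : ∀ s, 0 ≤ s → ∀ ω, HasDerivAt (fun r => u r ω) (killedGen p V (u s) ω + F s ω) s)
    (hF : ∀ s, 0 ≤ s → ∀ ω, F s ω ≤ B' s) (hB : ∀ s, 0 ≤ s → HasDerivAt B (B' s) s)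
    (hB0 : ∀ s, 0 ≤ s → 0 ≤ B s) (h0 : ∀ ω, u 0 ω ≤ B 0) {t : ℝ} (ht : 0 ≤ t)
    (ω : BoxConfig a b) : u t ω ≤ B t := by
  refine le_of_hasDerivAt_le_at_max (I := Finset.univ) (fun s hs ω _ => hu s hs ω) hB
    (fun ω _ => h0 ω) (fun s hs ω _ hmax hBu => ?_) ht (Finset.mem_univ ω)
  have hgen : ∑ x ∈ Finset.Icc a b, boxConstraint x ω * (siteAvg p x (u s) ω - u s ω) ≤ 0 :=
    Finset.sum_nonpos fun x _ => mul_nonpos_of_nonneg_of_nonpos (boxConstraint_nonneg x ω)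
      (sub_nonpos.2 (siteAvg_le hp fun e => hmax _ (Finset.mem_univ _)))
  have hkill := mul_nonneg (hV ω) ((hB0 s hs).trans hBu)
  rw [killedGen_apply]
  linarith [hF s hs ω]

lemma killedSemigroup_le {f : BoxConfig a b → ℝ} {c : ℝ} (hc : 0 ≤ c) (hf : ∀ ω, f ω ≤ c)
    {t : ℝ} (ht : 0 ≤ t) (ω : BoxConfig a b) : killedSemigroup p V t f ω ≤ c :=
  le_of_hasDerivAt_killedGen_add hp hV (u := fun s => killedSemigroup p V s f) (F := 0)
    (B := fun _ => c) (B' := 0) (fun s _ ω => by simpa using hasDerivAt_killedSemigroup p V f s ω)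
    (fun _ _ _ => le_rfl) (fun s _ => hasDerivAt_const s c) (fun _ _ => hc) (by simpa using hf) ht ω

lemma killedSemigroup_nonneg {f : BoxConfig a b → ℝ} (hf : ∀ ω, 0 ≤ f ω) {t : ℝ} (ht : 0 ≤ t)
    (ω : BoxConfig a b) : 0 ≤ killedSemigroup p V t f ω := by
  simpa using killedSemigroup_le hp hV (f := -f) le_rfl (fun ω => by simpa using hf ω) ht ω

lemma killedSemigroup_mono {f g : BoxConfig a b → ℝ} (h : ∀ ω, f ω ≤ g ω) {t : ℝ} (ht : 0 ≤ t)
    (ω : BoxConfig a b) : killedSemigroup p V t f ω ≤ killedSemigroup p V t g ω := by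
  simpa using killedSemigroup_nonneg hp hV (f := g - f) (fun ω => by simpa using h ω) ht ω

lemma abs_killedSemigroup_le {f : BoxConfig a b → ℝ} {c : ℝ} (hf : ∀ ω, |f ω| ≤ c) {t : ℝ}
    (ht : 0 ≤ t) (ω : BoxConfig a b) : |killedSemigroup p V t f ω| ≤ c := by
  have hc : 0 ≤ c := (abs_nonneg _).trans (hf ω)
  have hneg : killedSemigroup p V t (-f) ω ≤ c :=
    killedSemigroup_le hp hV hc (fun ω => (neg_le_abs _).trans (hf ω)) ht ω
  rw [map_neg, Pi.neg_apply] at hneg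
  exact abs_le.2 ⟨by linarith,
    killedSemigroup_le hp hV hc (fun ω => (le_abs_self _).trans (hf ω)) ht ω⟩

end Comparison

/-! ### Gradient estimates and finite speed of propagation -/

section Gradient

variable {p : ℝ} {V F : BoxConfig a b → ℝ} {x z : ℤ}

lemma siteGen_sub_siteAvg_siteGen (hzx : z ≠ x - 1) (ω : BoxConfig a b) :
    siteGen p z F ω - siteAvg p x (siteGen p z F) ω = siteGen p z (F - siteAvg p x F) ω := by
  have hfactor : siteGen p z F = boxConstraint z * (siteAvg p z F - F) := rfl
  rw [hfactor, (ignoresSite_boxConstraint (by omega)).siteAvg_mul, map_sub, siteAvg_comm p x z,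
    siteGen_apply, map_sub]
  simp only [Pi.mul_apply, Pi.sub_apply]
  ring

/-- At a maximum of the gradient `F - siteAvg p x F`, only the site `x - 1`, whose constraint sits
at `x`, can make the gradient grow. -/
lemma siteGen_sub_siteAvg_siteGen_le (hp : p ∈ Set.Icc (0 : ℝ) 1) {β : ℝ} {ω : BoxConfig a b}
    (hβ : ∀ η, |F η - siteAvg p (x - 1) F η| ≤ β)
    (hmax : ∀ η, F η - siteAvg p x F η ≤ F ω - siteAvg p x F ω) (z : ℤ) :
    siteGen p z F ω - siteAvg p x (siteGen p z F) ω ≤ if z = x - 1 then 2 * β else 0 := by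
  split_ifs with hz
  · have hbound : ∀ η, |siteGen p z F η| ≤ β := fun η => by
      rw [siteGen_apply, abs_mul, abs_of_nonneg (boxConstraint_nonneg z η), abs_sub_comm, hz]
      exact (mul_le_of_le_one_left (abs_nonneg _) (boxConstraint_le_one _ η)).trans (hβ η)
    have h1 := (abs_le.1 (hbound ω)).2
    have h2 := (abs_le.1 (abs_siteAvg_le hp (x := x) fun e => hbound (setSite x e ω))).1
    linarith
  · rw [siteGen_sub_siteAvg_siteGen hz, siteGen_apply]
    exact mul_nonpos_of_nonneg_of_nonpos (boxConstraint_nonneg z ω)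
      (sub_nonpos.2 (siteAvg_le hp fun e => hmax _))

lemma killedGen_sub_siteAvg_killedGen (hV : IgnoresSite x V) (ω : BoxConfig a b) :
    killedGen p V F ω - siteAvg p x (killedGen p V F) ω =
      ∑ z ∈ Finset.Icc a b, (siteGen p z F ω - siteAvg p x (siteGen p z F) ω)
        - V ω * (F ω - siteAvg p x F ω) := by
  have hgen : killedGen p V F = ∑ z ∈ Finset.Icc a b, siteGen p z F - V * F := by
    simp [killedGen]
  rw [hgen, map_sub, map_sum, hV.siteAvg_mul, Finset.sum_sub_distrib]
  simp only [Pi.sub_apply, Pi.mul_apply, Finset.sum_apply]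
  ring

end Gradient

section FiniteSpeed

variable {p : ℝ} (hp : p ∈ Set.Icc (0 : ℝ) 1) {V f : BoxConfig a b → ℝ} {x : ℤ}
include hp

lemma killedSemigroup_sub_siteAvg_le (hVx : IgnoresSite x V) (hV : ∀ ω, 0 ≤ V ω) {β B : ℝ → ℝ}
    (hβ : ∀ s, 0 ≤ s → ∀ ω,
      |killedSemigroup p V s f ω - siteAvg p (x - 1) (killedSemigroup p V s f) ω| ≤ β s)
    (hB : ∀ s, 0 ≤ s → HasDerivAt B (2 * β s) s) (hB0 : ∀ s, 0 ≤ s → 0 ≤ B s)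
    (h0 : ∀ ω, f ω - siteAvg p x f ω ≤ B 0) {t : ℝ} (ht : 0 ≤ t) (ω : BoxConfig a b) :
    killedSemigroup p V t f ω - siteAvg p x (killedSemigroup p V t f) ω ≤ B t := by
  refine le_of_hasDerivAt_le_at_max (I := Finset.univ)
    (u := fun s ω => killedSemigroup p V s f ω - siteAvg p x (killedSemigroup p V s f) ω)
    (u' := fun s ω => killedGen p V (killedSemigroup p V s f) ω -
      siteAvg p x (killedGen p V (killedSemigroup p V s f)) ω)
    (fun s _ ω _ => ?_) hB (fun ω _ => by simpa using h0 ω) (fun s hs ω _ hmax hBu => ?_) ht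
    (Finset.mem_univ ω)
  · have h := fun ω => hasDerivAt_killedSemigroup p V f s ω
    exact (h ω).sub (((h _).const_mul p).add ((h _).const_mul (1 - p)))
  set F := killedSemigroup p V s f
  have hβ0 : 0 ≤ β s := (abs_nonneg _).trans (hβ s hs ω)
  have hterms := Finset.sum_le_sum fun z (_ : z ∈ Finset.Icc a b) =>
    siteGen_sub_siteAvg_siteGen_le hp (hβ s hs) (fun η => hmax η (Finset.mem_univ _)) z
  have hsingle : (∑ z ∈ Finset.Icc a b, if z = x - 1 then 2 * β s else 0) ≤ 2 * β s := by
    rw [Finset.sum_ite_eq']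
    split_ifs <;> linarith
  have hkill := mul_nonneg (hV ω) ((hB0 s hs).trans hBu)
  calc killedGen p V F ω - siteAvg p x (killedGen p V F) ω
      = ∑ z ∈ Finset.Icc a b, (siteGen p z F ω - siteAvg p x (siteGen p z F) ω)
        - V ω * (F ω - siteAvg p x F ω) := killedGen_sub_siteAvg_killedGen hVx ω
    _ ≤ 2 * β s := by linarith

lemma abs_killedSemigroup_sub_siteAvg_le (hVx : IgnoresSite x V) (hV : ∀ ω, 0 ≤ V ω) {β B : ℝ → ℝ}
    (hβ : ∀ s, 0 ≤ s → ∀ ω,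
      |killedSemigroup p V s f ω - siteAvg p (x - 1) (killedSemigroup p V s f) ω| ≤ β s)
    (hB : ∀ s, 0 ≤ s → HasDerivAt B (2 * β s) s) (hB0 : ∀ s, 0 ≤ s → 0 ≤ B s)
    (h0 : ∀ ω, |f ω - siteAvg p x f ω| ≤ B 0) {t : ℝ} (ht : 0 ≤ t) (ω : BoxConfig a b) :
    |killedSemigroup p V t f ω - siteAvg p x (killedSemigroup p V t f) ω| ≤ B t := by
  have hneg : ∀ (y : ℤ) (g : BoxConfig a b → ℝ) (η : BoxConfig a b),
      (-g) η - siteAvg p y (-g) η = -(g η - siteAvg p y g η) := fun y g η => by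
    rw [map_neg, Pi.neg_apply, Pi.neg_apply]
    ring
  have hlow := killedSemigroup_sub_siteAvg_le hp hVx hV (f := -f) (β := β) (B := B)
    (fun s hs η => by rw [map_neg, hneg, abs_neg]; exact hβ s hs η) hB hB0
    (fun η => by rw [hneg]; linarith [(abs_le.1 (h0 η)).1]) ht ω
  rw [map_neg, hneg] at hlow
  exact abs_le.2 ⟨by linarith, killedSemigroup_sub_siteAvg_le hp hVx hV hβ hB hB0
    (fun η => (abs_le.1 (h0 η)).2) ht ω⟩

lemma ignoresSite_killedSemigroup {y : ℤ} (hV : ∀ ω, 0 ≤ V ω) (hVy : ∀ x < y, IgnoresSite x V)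
    (hf : ∀ x < y, IgnoresSite x f) {t : ℝ} (ht : 0 ≤ t) (hx : x < y) :
    IgnoresSite x (killedSemigroup p V t f) := by
  obtain ⟨n, hn⟩ : ∃ n : ℕ, x < a + n := ⟨(x + 1 - a).toNat, by omega⟩
  induction n generalizing x t with
  | zero => exact ignoresSite_of_notMem (fun h => by simp only [Finset.mem_Icc] at h; omega) _
  | succ n ih =>
    have hzero := fun ω => abs_killedSemigroup_sub_siteAvg_le hp (hVy x hx) hV (f := f)
      (β := fun _ => 0) (B := fun _ => 0)
      (fun s hs ω => by rw [(ih hs (by omega) (by omega)).siteAvg_eq, sub_self, abs_zero])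
      (fun s _ => by simpa using hasDerivAt_const s (0 : ℝ)) (fun _ _ => le_rfl)
      (fun ω => by rw [(hf x hx).siteAvg_eq, sub_self, abs_zero]) ht ω
    have havg : killedSemigroup p V t f = siteAvg p x (killedSemigroup p V t f) :=
      funext fun ω => sub_eq_zero.1 (abs_nonpos_iff.1 (hzero ω))
    rw [havg]
    exact ignoresSite_siteAvg p x _

lemma abs_boxSemigroup_sub_siteAvg_le {z : ℤ} {f : BoxConfig a b → ℝ}
    (hf : ∀ x, z < x → IgnoresSite x f) {c : ℝ} (hc : ∀ ω, |f ω| ≤ c) (j : ℕ) {t : ℝ} (ht : 0 ≤ t)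
    (ω : BoxConfig a b) :
    |boxSemigroup p t f ω - siteAvg p (z + j) (boxSemigroup p t f) ω| ≤
      2 * c * ((2 * t) ^ j / j.factorial) := by
  induction j generalizing t ω with
  | zero =>
    have hbound := abs_killedSemigroup_le hp (V := 0) (fun _ => le_rfl) hc ht
    have havg := abs_siteAvg_le hp (x := z + (0 : ℕ)) (ω := ω) fun e => hbound (setSite _ e ω)
    have htri := (abs_sub _ _).trans (add_le_add (hbound ω) havg)
    simpa [two_mul, boxSemigroup] using htri
  | succ j ih =>
    have hc0 : 0 ≤ c := (abs_nonneg _).trans (hc ω)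
    refine abs_killedSemigroup_sub_siteAvg_le hp (V := 0) (fun _ _ => rfl) (fun _ => le_rfl)
      (β := fun s => 2 * c * ((2 * s) ^ j / j.factorial))
      (B := fun s => 2 * c * ((2 * s) ^ (j + 1) / (j + 1).factorial))
      (fun s hs η => ?_) (fun s _ => ?_)
      (fun s hs => by positivity) (fun η => ?_) ht ω
    · have : z + ((j + 1 : ℕ) : ℤ) - 1 = z + j := by push_cast; ring
      rw [this]
      exact ih hs η
    · have hlin : HasDerivAt (fun s : ℝ => 2 * s) 2 s := by
        simpa using (hasDerivAt_id s).const_mul 2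
      refine (((hlin.pow (j + 1)).div_const
        ((j + 1).factorial : ℝ)).const_mul (2 * c)).congr_deriv ?_
      have : (j.factorial : ℝ) ≠ 0 := by positivity
      rw [Nat.factorial_succ]
      push_cast
      field_simp
    · rw [(hf _ (by push_cast; omega)).siteAvg_eq]
      simp

end FiniteSpeed

section BoxSemigroup

variable {p : ℝ} (hp : p ∈ Set.Icc (0 : ℝ) 1) {f g : BoxConfig a b → ℝ} {c t : ℝ}
include hp

lemma boxSemigroup_nonneg (hf : ∀ ω, 0 ≤ f ω) (ht : 0 ≤ t) (ω : BoxConfig a b) :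
    0 ≤ boxSemigroup p t f ω :=
  killedSemigroup_nonneg hp (fun _ => le_rfl) hf ht ω

lemma boxSemigroup_mono (h : ∀ ω, f ω ≤ g ω) (ht : 0 ≤ t) (ω : BoxConfig a b) :
    boxSemigroup p t f ω ≤ boxSemigroup p t g ω :=
  killedSemigroup_mono hp (fun _ => le_rfl) h ht ω

lemma boxSemigroup_le (h : ∀ ω, f ω ≤ c) (ht : 0 ≤ t) (ω : BoxConfig a b) :
    boxSemigroup p t f ω ≤ c :=
  (boxSemigroup_mono hp h ht ω).trans_eq (boxSemigroup_const p t c ω)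

lemma abs_boxSemigroup_le (h : ∀ ω, |f ω| ≤ c) (ht : 0 ≤ t) (ω : BoxConfig a b) :
    |boxSemigroup p t f ω| ≤ c :=
  abs_killedSemigroup_le hp (fun _ => le_rfl) h ht ω

lemma ignoresSite_boxSemigroup {x y : ℤ} (hf : ∀ x < y, IgnoresSite x f) (ht : 0 ≤ t) (hx : x < y) :
    IgnoresSite x (boxSemigroup p t f) :=
  ignoresSite_killedSemigroup hp (fun _ => le_rfl) (fun _ _ _ _ => rfl) hf ht hx

end BoxSemigroup

/-! ### Block averages -/

/-- Averaging over the Bernoulli(`p`) resampling of the block of sites `y + 1, …, y + n`. -/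
def blockAvg (p : ℝ) (y : ℤ) : ℕ → ((BoxConfig a b → ℝ) →ₗ[ℝ] (BoxConfig a b → ℝ))
  | 0 => LinearMap.id
  | n + 1 => siteAvg p (y + n + 1) ∘ₗ blockAvg p y n

section BlockAvg

variable {p : ℝ} {y x : ℤ} {n : ℕ}

lemma blockAvg_zero (p : ℝ) (y : ℤ) (f : BoxConfig a b → ℝ) : blockAvg p y 0 f = f := rfl

lemma blockAvg_succ (p : ℝ) (y : ℤ) (n : ℕ) (f : BoxConfig a b → ℝ) :
    blockAvg p y (n + 1) f = siteAvg p (y + n + 1) (blockAvg p y n f) := rfl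

lemma blockAvg_add (p : ℝ) (y : ℤ) (n m : ℕ) (f : BoxConfig a b → ℝ) :
    blockAvg p y (n + m) f = blockAvg p (y + n) m (blockAvg p y n f) := by
  induction m with
  | zero => rfl
  | succ m ih =>
    rw [← add_assoc, blockAvg_succ, blockAvg_succ, ih, Nat.cast_add, ← add_assoc]

lemma blockAvg_const (p : ℝ) (y : ℤ) (n : ℕ) (c : ℝ) (ω : BoxConfig a b) :
    blockAvg p y n (fun _ => c) ω = c := by
  induction n generalizing ω with
  | zero => rfl
  | succ n ih =>
    rw [blockAvg_succ, siteAvg_apply, ih, ih]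
    ring

lemma blockAvg_siteAvg (p : ℝ) (y : ℤ) (n : ℕ) (x : ℤ) (f : BoxConfig a b → ℝ) :
    blockAvg p y n (siteAvg p x f) = siteAvg p x (blockAvg p y n f) := by
  induction n with
  | zero => rfl
  | succ n ih => rw [blockAvg_succ, blockAvg_succ, ih, siteAvg_comm]

protected lemma IgnoresSite.blockAvg {f : BoxConfig a b → ℝ} (h : IgnoresSite x f) (p : ℝ)
    (y : ℤ) (n : ℕ) : IgnoresSite x (blockAvg p y n f) := by
  induction n with
  | zero => exact h
  | succ n ih => rw [blockAvg_succ]; exact ih.siteAvg p _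

lemma ignoresSite_blockAvg (hyx : y < x) (hx : x ≤ y + n) (f : BoxConfig a b → ℝ) :
    IgnoresSite x (blockAvg p y n f) := by
  induction n with
  | zero => rw [Nat.cast_zero] at hx; omega
  | succ n ih =>
    rw [blockAvg_succ]
    by_cases hxn : x = y + n + 1
    · exact hxn ▸ ignoresSite_siteAvg p _ _
    · exact (ih (by push_cast at hx; omega)).siteAvg p _

lemma blockAvg_siteAvg_of_mem (hyx : y < x) (hx : x ≤ y + n) (f : BoxConfig a b → ℝ) :
    blockAvg p y n (siteAvg p x f) = blockAvg p y n f := by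
  rw [blockAvg_siteAvg, (ignoresSite_blockAvg hyx hx f).siteAvg_eq]

lemma blockAvg_mul_of_ignoresSite {f : BoxConfig a b → ℝ}
    (h : ∀ x, y < x → x ≤ y + n → IgnoresSite x f) (g : BoxConfig a b → ℝ) :
    blockAvg p y n (f * g) = f * blockAvg p y n g := by
  induction n with
  | zero => rfl
  | succ n ih =>
    rw [blockAvg_succ, blockAvg_succ, ih fun x h1 h2 => h x h1 (by push_cast; omega),
      (h _ (by omega) (by push_cast; omega)).siteAvg_mul]

lemma blockAvg_of_ignoresSite {f : BoxConfig a b → ℝ}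
    (h : ∀ x, y < x → x ≤ y + n → IgnoresSite x f) : blockAvg p y n f = f := by
  have hone : blockAvg p y n (1 : BoxConfig a b → ℝ) = 1 := funext (blockAvg_const p y n 1)
  simpa [hone] using blockAvg_mul_of_ignoresSite (p := p) h 1

end BlockAvg

section Order

variable {p : ℝ} (hp : p ∈ Set.Icc (0 : ℝ) 1) {y : ℤ} {n : ℕ} {f g : BoxConfig a b → ℝ}
  {ω : BoxConfig a b} {c : ℝ}
include hp

lemma blockAvg_mono_at
    (h : ∀ η : BoxConfig a b, (∀ x, (x ≤ y ∨ y + n < x) → extend η x = extend ω x) → f η ≤ g η) :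
    blockAvg p y n f ω ≤ blockAvg p y n g ω := by
  induction n generalizing ω with
  | zero => exact h ω fun _ _ => rfl
  | succ n ih =>
    refine siteAvg_mono hp fun e => ih fun η hη => h η fun x hx => ?_
    push_cast at hx
    rw [hη x (by omega), extend_setSite_of_ne (by omega)]

lemma blockAvg_mono (h : ∀ η, f η ≤ g η) : blockAvg p y n f ω ≤ blockAvg p y n g ω :=
  blockAvg_mono_at hp fun η _ => h η

lemma blockAvg_le
    (h : ∀ η : BoxConfig a b, (∀ x, (x ≤ y ∨ y + n < x) → extend η x = extend ω x) → f η ≤ c) :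
    blockAvg p y n f ω ≤ c :=
  (blockAvg_mono_at hp (g := fun _ => c) h).trans_eq (blockAvg_const p y n c ω)

lemma blockAvg_nonneg (h : ∀ η, 0 ≤ f η) : 0 ≤ blockAvg p y n f ω :=
  (blockAvg_const p y n 0 ω).ge.trans (blockAvg_mono hp h)

lemma abs_blockAvg_le_blockAvg_abs :
    |blockAvg p y n f ω| ≤ blockAvg p y n (fun η => |f η|) ω := by
  have hneg : blockAvg p y n (-f) ω ≤ blockAvg p y n (fun η => |f η|) ω :=
    blockAvg_mono hp fun η => neg_le_abs (f η)
  rw [map_neg, Pi.neg_apply] at hneg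
  exact abs_le.2 ⟨by linarith, blockAvg_mono hp fun η => le_abs_self (f η)⟩

lemma abs_blockAvg_le (h : ∀ η, |f η| ≤ c) : |blockAvg p y n f ω| ≤ c :=
  (abs_blockAvg_le_blockAvg_abs hp).trans (blockAvg_le hp fun η _ => h η)

lemma siteAvg_sq_le (x : ℤ) (f : BoxConfig a b → ℝ) (ω : BoxConfig a b) :
    siteAvg p x f ω ^ 2 ≤ siteAvg p x (f ^ 2) ω := by
  have hvar := mul_nonneg (mul_nonneg hp.1 (sub_nonneg.2 hp.2))
    (sq_nonneg (f (setSite x true ω) - f (setSite x false ω)))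
  simp only [siteAvg_apply, Pi.pow_apply]
  linarith

lemma blockAvg_sq_le (f : BoxConfig a b → ℝ) (ω : BoxConfig a b) :
    blockAvg p y n f ω ^ 2 ≤ blockAvg p y n (f ^ 2) ω := by
  induction n generalizing ω with
  | zero => exact le_rfl
  | succ n ih => exact (siteAvg_sq_le hp _ _ ω).trans (siteAvg_mono hp fun e => ih _)

lemma min_mul_le_siteAvg (x : ℤ) (hf : ∀ η, 0 ≤ f η) (ω : BoxConfig a b) :
    min p (1 - p) * f ω ≤ siteAvg p x f ω := by
  have htrue := mul_nonneg hp.1 (hf (setSite x true ω))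
  have hfalse := mul_nonneg (sub_nonneg.2 hp.2) (hf (setSite x false ω))
  have hω := setSite_extend x ω
  rw [siteAvg_apply]
  cases hc : extend ω x <;> rw [hc] at hω <;> rw [hω] at *
  · linarith [mul_le_mul_of_nonneg_right (min_le_right p (1 - p)) (hf ω)]
  · linarith [mul_le_mul_of_nonneg_right (min_le_left p (1 - p)) (hf ω)]

lemma min_pow_mul_le_blockAvg (hf : ∀ η, 0 ≤ f η) (ω : BoxConfig a b) :
    min p (1 - p) ^ n * f ω ≤ blockAvg p y n f ω := by
  have hmin : 0 ≤ min p (1 - p) := le_min hp.1 (sub_nonneg.2 hp.2)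
  induction n generalizing ω with
  | zero => simp [blockAvg_zero]
  | succ n ih =>
    rw [pow_succ', mul_assoc, blockAvg_succ]
    exact (mul_le_mul_of_nonneg_left (ih ω) hmin).trans
      (min_mul_le_siteAvg hp _ (f := blockAvg p y n f) (fun η => blockAvg_nonneg hp hf) ω)

end Order

section Dirichlet

variable {p : ℝ} {y z : ℤ} {n : ℕ}

lemma siteAvg_mul_siteAvg_sub (p : ℝ) (z : ℤ) (G : BoxConfig a b → ℝ) :
    siteAvg p z (G * (siteAvg p z G - G)) = -siteAvg p z ((G - siteAvg p z G) ^ 2) := by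
  funext ω
  simp only [siteAvg_apply, Pi.mul_apply, Pi.sub_apply, Pi.neg_apply, Pi.pow_apply, setSite_setSite]
  ring

lemma blockAvg_mul_siteGen (hyz : y < z) (hz : z ≤ y + n) (G : BoxConfig a b → ℝ) :
    blockAvg p y n (G * siteGen p z G) =
      -blockAvg p y n (boxConstraint z * (G - siteAvg p z G) ^ 2) := by
  have hcz : IgnoresSite z (boxConstraint z : BoxConfig a b → ℝ) :=
    ignoresSite_boxConstraint (by omega)
  have hG : G * siteGen p z G = boxConstraint z * (G * (siteAvg p z G - G)) := mul_left_comm _ _ _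
  rw [← blockAvg_siteAvg_of_mem hyz hz, hG, hcz.siteAvg_mul, siteAvg_mul_siteAvg_sub, mul_neg,
    ← hcz.siteAvg_mul, map_neg, blockAvg_siteAvg_of_mem hyz hz]

end Dirichlet

/-! ### Product laws and the Poincaré inequality in a block -/

/-- The event that the configuration agrees with `σ` on `S`. -/
def cylinderEvent (S : Finset ℤ) (σ : Config) : Set Config := {ω | ∀ x ∈ S, ω x = σ x}

lemma cylinderEvent_eq_restrict_preimage (S : Finset ℤ) (σ : Config) :
    cylinderEvent S σ = S.restrict (π := fun _ => Bool) ⁻¹' {S.restrict σ} := by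
  ext ω
  simp [cylinderEvent, funext_iff]

lemma measurableSet_cylinderEvent (S : Finset ℤ) (σ : Config) :
    MeasurableSet (cylinderEvent S σ) := by
  rw [cylinderEvent_eq_restrict_preimage]
  exact Finset.measurable_restrict S (measurableSet_singleton _)

lemma ext_of_cylinderEvent {m m' : Measure Config} [IsFiniteMeasure m]
    (h : ∀ S σ, m (cylinderEvent S σ) = m' (cylinderEvent S σ)) : m = m' := by
  refine IsProjectiveLimit.unique (P := fun S => m.map S.restrict) (fun _ => rfl) fun S => ?_
  refine Measure.ext_of_singleton fun τ => ?_
  obtain ⟨σ, rfl⟩ : ∃ σ : Config, S.restrict σ = τ :=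
    ⟨fun x => if hx : x ∈ S then τ ⟨x, hx⟩ else true, by ext x; simp⟩
  simp_rw [Measure.map_apply (Finset.measurable_restrict S) (measurableSet_singleton _),
    ← cylinderEvent_eq_restrict_preimage, h]

/-- `m` is the product measure giving weight `w x c` to the value `c` at the site `x`. -/
def IsProductLaw (w : ℤ → Bool → ℝ) (m : Measure Config) : Prop :=
  ∀ S σ, m (cylinderEvent S σ) = ∏ x ∈ S, ENNReal.ofReal (w x (σ x))

/-- The one-site weights of the Bernoulli(`p`) law, `p` being the density of ones. -/
def bernoulliWeight (p : ℝ) (c : Bool) : ℝ := if c then p else 1 - p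

lemma IsProductLaw.isProbabilityMeasure {w : ℤ → Bool → ℝ} {m : Measure Config}
    (hm : IsProductLaw w m) : IsProbabilityMeasure m :=
  ⟨by simpa [cylinderEvent] using hm ∅ (fun _ => true)⟩

lemma preimage_update_cylinderEvent (S : Finset ℤ) (σ : Config) (x : ℤ) (c : Bool) :
    (fun η : Config => Function.update η x c) ⁻¹' cylinderEvent S σ =
      if x ∈ S ∧ σ x ≠ c then ∅ else cylinderEvent (S.erase x) σ := by
  ext η
  split_ifs with h
  · simp only [cylinderEvent, Set.mem_preimage, Set.mem_ofPred_eq, Set.mem_empty_iff_false,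
      iff_false]
    exact fun hη => h.2 (by simpa using (hη x h.1).symm)
  · simp only [cylinderEvent, Set.mem_preimage, Set.mem_ofPred_eq, Finset.mem_erase]
    refine ⟨fun hη z hz => by simpa [hz.1] using hη z hz.2, fun hη z hz => ?_⟩
    by_cases hzx : z = x
    · subst hzx
      simp only [hz, true_and, not_not] at h
      simp [h]
    · simpa [hzx] using hη z ⟨hzx, hz⟩

/-- Averaging a function of the whole configuration over the Bernoulli(`p`) resampling of `x`. -/
def latticeAvg (p : ℝ) (x : ℤ) (f : Config → ℝ) (η : Config) : ℝ :=
  p * f (Function.update η x true) + (1 - p) * f (Function.update η x false)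

namespace IsProductLaw

variable {w : ℤ → Bool → ℝ} {m : Measure Config} {p : ℝ} {x : ℤ}

lemma eq_add_map_update (hm : IsProductLaw w m) (hp : p ∈ Set.Icc (0 : ℝ) 1)
    (hx : w x = bernoulliWeight p) :
    m = ENNReal.ofReal p • m.map (fun η => Function.update η x true) +
      ENNReal.ofReal (1 - p) • m.map (fun η => Function.update η x false) := by
  have := hm.isProbabilityMeasure
  refine ext_of_cylinderEvent fun S σ => ?_
  rw [Measure.add_apply, Measure.smul_apply, Measure.smul_apply,
    Measure.map_apply measurable_update_left (measurableSet_cylinderEvent S σ),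
    Measure.map_apply measurable_update_left (measurableSet_cylinderEvent S σ),
    preimage_update_cylinderEvent, preimage_update_cylinderEvent]
  by_cases hxS : x ∈ S
  · rw [hm S, ← Finset.mul_prod_erase S _ hxS, ← hm, hx]
    cases hσ : σ x <;> simp [hxS, bernoulliWeight]
  · simp [hxS, ← add_mul, ← ENNReal.ofReal_add hp.1 (sub_nonneg.2 hp.2)]

lemma integral_latticeAvg (hm : IsProductLaw w m) (hp : p ∈ Set.Icc (0 : ℝ) 1)
    (hx : w x = bernoulliWeight p) {f : Config → ℝ} (hf : Measurable f) {c : ℝ}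
    (hc : ∀ η, |f η| ≤ c) : ∫ η, latticeAvg p x f η ∂m = ∫ η, f η ∂m := by
  have := hm.isProbabilityMeasure
  have hint : ∀ m' : Measure Config, IsFiniteMeasure m' → Integrable f m' := fun m' _ =>
    Integrable.of_bound hf.aestronglyMeasurable c (ae_of_all _ hc)
  have hupd : ∀ d, Integrable (fun η => f (Function.update η x d)) m := fun d =>
    Integrable.of_bound (hf.comp measurable_update_left).aestronglyMeasurable c
      (ae_of_all _ fun η => hc _)
  have hmap : ∀ d, ∫ η, f η ∂(m.map fun η => Function.update η x d) =
      ∫ η, f (Function.update η x d) ∂m := fun d =>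
    integral_map measurable_update_left.aemeasurable hf.aestronglyMeasurable
  conv_rhs => rw [hm.eq_add_map_update hp hx]
  rw [integral_add_measure ((hint _ inferInstance).smul_measure ENNReal.ofReal_ne_top)
    ((hint _ inferInstance).smul_measure ENNReal.ofReal_ne_top), integral_smul_measure,
    integral_smul_measure, hmap, hmap, ENNReal.toReal_ofReal hp.1,
    ENNReal.toReal_ofReal (sub_nonneg.2 hp.2), smul_eq_mul, smul_eq_mul]
  simp_rw [latticeAvg]
  rw [integral_add ((hupd true).const_mul p) ((hupd false).const_mul (1 - p)), integral_const_mul,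
    integral_const_mul]

end IsProductLaw

/-- The configuration `ω` with the values of `η` on the block `y + 1, …, y + n`. -/
def overwrite (y : ℤ) (n : ℕ) (ω : BoxConfig a b) (η : Config) : BoxConfig a b :=
  fun i => if y < i.1 ∧ i.1 ≤ y + n then η i.1 else ω i

section Overwrite

variable {y x : ℤ} {n : ℕ}

lemma measurable_comp_overwrite (y : ℤ) (n : ℕ) (ω : BoxConfig a b) (H : BoxConfig a b → ℝ) :
    Measurable fun η => H (overwrite y n ω η) := by
  refine (measurable_of_finite H).comp (measurable_pi_iff.2 fun i => ?_)
  unfold overwrite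
  split_ifs
  exacts [measurable_pi_apply _, measurable_const]

lemma overwrite_zero (y : ℤ) (ω : BoxConfig a b) (η : Config) : overwrite y 0 ω η = ω := by
  funext i
  exact if_neg (by rw [Nat.cast_zero]; omega)

lemma overwrite_update (hyx : y < x) (hx : x ≤ y + n) (c : Bool) (ω : BoxConfig a b) (η : Config) :
    overwrite y n ω (Function.update η x c) = setSite x c (overwrite y n ω η) := by
  funext i
  by_cases hi : i.1 = x
  · simp [overwrite, setSite, hi, hyx, hx]
  · simp [overwrite, setSite, hi]

lemma overwrite_succ_update (y : ℤ) (n : ℕ) (c : Bool) (ω : BoxConfig a b) (η : Config) :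
    overwrite y (n + 1) ω (Function.update η (y + n + 1) c) =
      overwrite y n (setSite (y + n + 1) c ω) η := by
  funext i
  by_cases hi : i.1 = y + n + 1
  · simp [overwrite, setSite, hi]
  · simp only [overwrite, setSite, Function.update_of_ne hi, if_neg hi, Nat.cast_succ]
    congr 1
    exact propext (by omega)

lemma dependsOnF_comp_overwrite (y : ℤ) (n : ℕ) (ω : BoxConfig a b) (H : BoxConfig a b → ℝ) :
    DependsOnF (fun η => H (overwrite y n ω η)) (Finset.Icc (y + 1) (y + n)) := by
  refine fun η η' h => congrArg H (funext fun i => ?_)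
  unfold overwrite
  split_ifs with hi
  · exact h _ (by rw [Finset.coe_Icc]; exact ⟨by omega, hi.2⟩)
  · rfl

lemma exists_forall_abs_le {α : Type*} [Finite α] (f : α → ℝ) : ∃ c, ∀ x, |f x| ≤ c := by
  obtain ⟨c, hc⟩ := (Set.finite_range fun x => |f x|).bddAbove
  exact ⟨c, fun x => hc ⟨x, rfl⟩⟩

lemma IsProductLaw.integral_overwrite {w : ℤ → Bool → ℝ} {m : Measure Config}
    (hm : IsProductLaw w m) {p : ℝ} (hp : p ∈ Set.Icc (0 : ℝ) 1)
    (hw : ∀ x, y < x → w x = bernoulliWeight p) (n : ℕ) (H : BoxConfig a b → ℝ)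
    (ω : BoxConfig a b) : ∫ η, H (overwrite y n ω η) ∂m = blockAvg p y n H ω := by
  have := hm.isProbabilityMeasure
  induction n generalizing ω with
  | zero => simp [overwrite_zero, blockAvg_zero]
  | succ n ih =>
    obtain ⟨c, hc⟩ := exists_forall_abs_le H
    have hint : ∀ ω, Integrable (fun η => H (overwrite y n ω η)) m := fun ω =>
      Integrable.of_bound (measurable_comp_overwrite y n ω H).aestronglyMeasurable c
        (ae_of_all _ fun η => hc _)
    rw [← hm.integral_latticeAvg hp (hw (y + n + 1) (by omega))
      (measurable_comp_overwrite y (n + 1) ω H) (fun η => hc _)]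
    simp_rw [latticeAvg, overwrite_succ_update]
    rw [integral_add ((hint _).const_mul p) ((hint _).const_mul (1 - p)), integral_const_mul,
      integral_const_mul, ih, ih]
    rfl

end Overwrite

lemma flip_rate_mul_sub (p : ℝ) (x : ℤ) (f : Config → ℝ) (η : Config) :
    (if η x = false then p else 1 - p) * (f (flipAt η x) - f η) = latticeAvg p x f η - f η := by
  have hflip : flipAt η x = Function.update η x (!η x) := by
    funext z
    by_cases hz : z = x
    · simp [flipAt, hz]
    · simp [flipAt, hz]
  have hself : Function.update η x (η x) = η := Function.update_eq_self x η
  rw [hflip, latticeAvg]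
  cases hc : η x <;> rw [hc] at hself <;> rw [hself] <;>
    simp only [reduceCtorEq, if_false, if_true, Bool.not_true, Bool.not_false] <;> ring

lemma eastGen_eq_sum {p : ℝ} {f : Config → ℝ} {S : Finset ℤ} (hf : DependsOnF f S) (η : Config) :
    eastGen p f η = ∑ x ∈ S, constraint x η * (latticeAvg p x f η - f η) := by
  rw [eastGen, tsum_eq_sum (s := S)]
  · refine Finset.sum_congr rfl fun x _ => ?_
    rw [mul_assoc, flip_rate_mul_sub, constraint]
  · intro x hx
    have hflip : f (flipAt η x) = f η :=
      hf _ _ fun z hz => if_neg (ne_of_mem_of_not_mem hz hx)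
    rw [hflip, sub_self, mul_zero]

lemma gap_mul_variance_le {E : EastProcess} (hgap : 0 < gap E) {f : Config → ℝ}
    (hf : IsCylinder f) (hvar : 0 < variance f E.μ) :
    gap E * variance f E.μ ≤ -∫ ω, f ω * eastGen E.p f ω ∂E.μ := by
  have hbdd : BddBelow (gapSet E) := by
    by_contra h
    exact hgap.ne' (Real.sInf_of_not_bddBelow h)
  rw [← le_div_iff₀ hvar]
  exact csInf_le hbdd ⟨f, hf, hvar, rfl⟩

section Poincare

variable {w : ℤ → Bool → ℝ} {m : Measure Config} {p : ℝ} {y z : ℤ} {n : ℕ}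

lemma measurable_constraint (z : ℤ) : Measurable (constraint z) :=
  Measurable.ite (measurableSet_eq_fun (measurable_pi_apply (z + 1)) measurable_const)
    measurable_const measurable_const

lemma abs_constraint_mul_le {z : ℤ} {r c : ℝ} (hr : |r| ≤ c) (η : Config) :
    |constraint z η * r| ≤ c := by
  rw [abs_mul, abs_of_nonneg (constraint_nonneg z η)]
  exact (mul_le_of_le_one_left (abs_nonneg r) (constraint_le_one z η)).trans hr

lemma integrable_constraint_mul_overwrite [IsFiniteMeasure m] (z y : ℤ) (n : ℕ)
    (ω : BoxConfig a b) (H : BoxConfig a b → ℝ) :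
    Integrable (fun η => constraint z η * H (overwrite y n ω η)) m := by
  obtain ⟨c, hc⟩ := exists_forall_abs_le H
  exact Integrable.of_bound
    ((measurable_constraint z).mul (measurable_comp_overwrite y n ω H)).aestronglyMeasurable c
    (ae_of_all _ fun η => abs_constraint_mul_le (hc _) η)

lemma latticeAvg_constraint_mul_overwrite (hyz : y < z) (hz : z ≤ y + n) (H : BoxConfig a b → ℝ)
    (ω : BoxConfig a b) (η : Config) :
    latticeAvg p z (fun η => constraint z η * H (overwrite y n ω η)) η =
      constraint z η * siteAvg p z H (overwrite y n ω η) := by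
  have hconstraint : ∀ c, constraint z (Function.update η z c) = constraint z η := fun c => by
    rw [constraint, Function.update_of_ne (by omega), constraint]
  simp_rw [latticeAvg, hconstraint, overwrite_update hyz hz, siteAvg_apply]
  ring

lemma integral_constraint_mul_siteAvg (hm : IsProductLaw w m) (hp : p ∈ Set.Icc (0 : ℝ) 1)
    (hw : w z = bernoulliWeight p) (hyz : y < z) (hz : z ≤ y + n) (H : BoxConfig a b → ℝ)
    (ω : BoxConfig a b) :
    ∫ η, constraint z η * siteAvg p z H (overwrite y n ω η) ∂m =
      ∫ η, constraint z η * H (overwrite y n ω η) ∂m := by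
  obtain ⟨c, hc⟩ := exists_forall_abs_le H
  rw [← hm.integral_latticeAvg hp hw (f := fun η => constraint z η * H (overwrite y n ω η))
    ((measurable_constraint z).mul (measurable_comp_overwrite y n ω H))
    (fun η => abs_constraint_mul_le (hc _) η)]
  simp_rw [latticeAvg_constraint_mul_overwrite hyz hz]

lemma integral_constraint_mul_siteAvg_sub (hm : IsProductLaw w m) (hp : p ∈ Set.Icc (0 : ℝ) 1)
    (hw : w z = bernoulliWeight p) (hyz : y < z) (hz : z ≤ y + n) (G : BoxConfig a b → ℝ)
    (ω : BoxConfig a b) :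
    ∫ η, constraint z η * (G * (siteAvg p z G - G)) (overwrite y n ω η) ∂m =
      -∫ η, constraint z η * ((G - siteAvg p z G) ^ 2) (overwrite y n ω η) ∂m := by
  rw [← integral_constraint_mul_siteAvg hm hp hw hyz hz, siteAvg_mul_siteAvg_sub,
    ← integral_constraint_mul_siteAvg hm hp hw hyz hz ((G - siteAvg p z G) ^ 2), ← integral_neg]
  simp_rw [Pi.neg_apply, mul_neg]

lemma neg_integral_mul_eastGen_overwrite (hm : IsProductLaw w m) (hp : p ∈ Set.Icc (0 : ℝ) 1)
    (hw : ∀ z, y < z → w z = bernoulliWeight p) (G : BoxConfig a b → ℝ) (ω : BoxConfig a b) :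
    -∫ η, G (overwrite y n ω η) * eastGen p (fun η => G (overwrite y n ω η)) η ∂m =
      ∑ z ∈ Finset.Icc (y + 1) (y + n),
        ∫ η, constraint z η * ((G - siteAvg p z G) ^ 2) (overwrite y n ω η) ∂m := by
  have := hm.isProbabilityMeasure
  have hgen : ∀ η, G (overwrite y n ω η) * eastGen p (fun η => G (overwrite y n ω η)) η =
      ∑ z ∈ Finset.Icc (y + 1) (y + n),
        constraint z η * (G * (siteAvg p z G - G)) (overwrite y n ω η) := fun η => by
    rw [eastGen_eq_sum (dependsOnF_comp_overwrite y n ω G), Finset.mul_sum]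
    refine Finset.sum_congr rfl fun z hz => ?_
    rw [Finset.mem_Icc] at hz
    simp only [latticeAvg, overwrite_update (show y < z by omega) hz.2, Pi.mul_apply,
      Pi.sub_apply, siteAvg_apply]
    ring
  simp_rw [hgen]
  rw [integral_finsetSum _ fun z _ => integrable_constraint_mul_overwrite z y n ω _,
    ← Finset.sum_neg_distrib]
  refine Finset.sum_congr rfl fun z hz => ?_
  rw [Finset.mem_Icc] at hz
  rw [integral_constraint_mul_siteAvg_sub hm hp (hw z (by omega)) (by omega) hz.2, neg_neg]

lemma constraint_le_boxConstraint_overwrite (hy : a - 1 ≤ y) (hn : y + n ≤ b) (hyz : y < z)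
    (hz : z ≤ y + n) {ω : BoxConfig a b} (hω : extend ω (y + n + 1) = false) (η : Config) :
    constraint z η ≤ boxConstraint z (overwrite y n ω η) := by
  rcases hz.eq_or_lt with rfl | hz
  · have hext : extend (overwrite y n ω η) (y + n + 1) = false := by
      rw [← hω]
      unfold extend overwrite
      simp
    refine (constraint_le_one _ η).trans_eq ?_
    simp [boxConstraint, constraint, hext]
  · have hext : extend (overwrite y n ω η) (z + 1) = η (z + 1) := by
      rw [extend, dif_pos (by simp; omega), overwrite, if_pos (by dsimp only; omega)]
    simp [boxConstraint, constraint, hext]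

lemma p_mem_Icc (E : EastProcess) : E.p ∈ Set.Icc (0 : ℝ) 1 := ⟨E.hp0.le, E.hp1.le⟩

/-- The gap inequality for `η ↦ G (overwrite y n ω η)`; the zero of `ω` at `y + n + 1` makes the
box constraint at `y + n` at least as large as the one felt on the lattice. -/
lemma gap_mul_blockAvg_sq_sub_le {E : EastProcess} (hgap : 0 < gap E) (hy : a - 1 ≤ y)
    (hn : y + n ≤ b) (G : BoxConfig a b → ℝ) {ω : BoxConfig a b}
    (hω : extend ω (y + n + 1) = false) :
    gap E * (blockAvg E.p y n (G ^ 2) ω - blockAvg E.p y n G ω ^ 2) ≤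
      ∑ z ∈ Finset.Icc (y + 1) (y + n),
        blockAvg E.p y n (boxConstraint z * (G - siteAvg E.p z G) ^ 2) ω := by
  have hp := p_mem_Icc E
  have hμ : IsProductLaw (fun _ => bernoulliWeight E.p) E.μ := E.μprod
  have hint := hμ.integral_overwrite (y := y) hp (fun _ _ => rfl) n (ω := ω)
  have := E.μprob
  have hvar : variance (fun η => G (overwrite y n ω η)) E.μ =
      blockAvg E.p y n (G ^ 2) ω - blockAvg E.p y n G ω ^ 2 := by
    obtain ⟨c, hc⟩ := exists_forall_abs_le G
    rw [variance_eq_sub (MemLp.of_bound (measurable_comp_overwrite y n ω G).aestronglyMeasurable c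
      (ae_of_all _ fun η => hc _)), ← hint, ← hint]
    rfl
  rw [← hvar]
  rcases (variance_nonneg (fun η => G (overwrite y n ω η)) E.μ).eq_or_lt with h0 | hpos
  · rw [← h0, mul_zero]
    exact Finset.sum_nonneg fun z _ => blockAvg_nonneg hp fun η =>
      mul_nonneg (boxConstraint_nonneg z η) (sq_nonneg _)
  refine (gap_mul_variance_le hgap ⟨_, dependsOnF_comp_overwrite y n ω G⟩ hpos).trans ?_
  rw [neg_integral_mul_eastGen_overwrite hμ hp fun _ _ => rfl]
  refine Finset.sum_le_sum fun z hz => ?_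
  rw [Finset.mem_Icc] at hz
  rw [← hint]
  obtain ⟨c, hc⟩ := exists_forall_abs_le (boxConstraint z * (G - siteAvg E.p z G) ^ 2)
  exact integral_mono (integrable_constraint_mul_overwrite z y n ω _)
    (Integrable.of_bound (measurable_comp_overwrite y n ω _).aestronglyMeasurable c
      (ae_of_all _ fun η => hc _))
    fun η => mul_le_mul_of_nonneg_right
      (constraint_le_boxConstraint_overwrite hy hn (by omega) hz.2 hω η) (sq_nonneg _)

end Poincare

/-! ### Decay of the killed semigroup -/

lemma siteGen_eq_mul (p : ℝ) (x : ℤ) (f : BoxConfig a b → ℝ) :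
    siteGen p x f = boxConstraint x * (siteAvg p x f - f) := rfl

lemma siteAvg_siteGen (p : ℝ) (x : ℤ) (f : BoxConfig a b → ℝ) :
    siteAvg p x (siteGen p x f) = 0 := by
  rw [siteGen_eq_mul, (ignoresSite_boxConstraint (by omega)).siteAvg_mul, map_sub,
    (ignoresSite_siteAvg p x f).siteAvg_eq, sub_self, mul_zero]

lemma IgnoresSite.siteGen_eq_zero {x : ℤ} {f : BoxConfig a b → ℝ} (h : IgnoresSite x f) (p : ℝ) :
    siteGen p x f = 0 := by
  rw [siteGen_eq_mul, h.siteAvg_eq, sub_self, mul_zero]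

lemma killedGen_eq (p : ℝ) (V f : BoxConfig a b → ℝ) :
    killedGen p V f = ∑ x ∈ Finset.Icc a b, siteGen p x f - V * f := by
  simp [killedGen]

lemma blockAvg_siteGen_of_lt {p : ℝ} {y z : ℤ} {n : ℕ} (hz : y + n < z) (f : BoxConfig a b → ℝ) :
    blockAvg p y n (siteGen p z f) = siteGen p z (blockAvg p y n f) := by
  rw [siteGen_eq_mul, siteGen_eq_mul,
    blockAvg_mul_of_ignoresSite fun x _ _ => ignoresSite_boxConstraint (by omega), map_sub,
    blockAvg_siteAvg]

lemma hasDerivAt_blockAvg (p : ℝ) (y : ℤ) (n : ℕ) {u : ℝ → BoxConfig a b → ℝ}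
    {u' : BoxConfig a b → ℝ} {s : ℝ} (h : ∀ ω, HasDerivAt (fun r => u r ω) (u' ω) s)
    (ω : BoxConfig a b) : HasDerivAt (fun r => blockAvg p y n (u r) ω) (blockAvg p y n u' ω) s := by
  induction n generalizing ω with
  | zero => exact h ω
  | succ n ih => exact ((ih _).const_mul p).add ((ih _).const_mul (1 - p))

/-- The pairs `(n, ω)`, `n ≥ n₀`, such that the block `y + 1, …, y + n` lies in the box and is
followed by a zero of `ω`. -/
def zeroEndedBlocks (y : ℤ) (n₀ : ℕ) : Finset (ℕ × BoxConfig a b) :=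
  ((Finset.range ((b - y).toNat + 1)) ×ˢ Finset.univ).filter
    fun i => n₀ ≤ i.1 ∧ y + i.1 ≤ b ∧ extend i.2 (y + i.1 + 1) = false

lemma mem_zeroEndedBlocks {y : ℤ} {n₀ n : ℕ} {ω : BoxConfig a b} :
    (n, ω) ∈ zeroEndedBlocks y n₀ ↔ n₀ ≤ n ∧ y + n ≤ b ∧ extend ω (y + n + 1) = false := by
  simp only [zeroEndedBlocks, Finset.mem_filter, Finset.mem_product, Finset.mem_range,
    Finset.mem_univ, and_true, and_iff_right_iff_imp]
  omega

/-- The Dirichlet form, with killing rate `V`, of the block `y + 1, …, y + n`. -/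
def blockDirichletForm (p : ℝ) (V : BoxConfig a b → ℝ) (y : ℤ) (n : ℕ) (G : BoxConfig a b → ℝ)
    (ω : BoxConfig a b) : ℝ :=
  ∑ z ∈ Finset.Icc (y + 1) (y + n), blockAvg p y n (boxConstraint z * (G - siteAvg p z G) ^ 2) ω +
    blockAvg p y n (V * G ^ 2) ω

lemma gap_mul_blockAvg_sq_sub_le_blockDirichletForm {E : EastProcess} (hgap : 0 < gap E) {y : ℤ}
    (hy : a - 1 ≤ y) {n : ℕ} (hn : y + n ≤ b) (G : BoxConfig a b → ℝ) {ω : BoxConfig a b}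
    (hω : extend ω (y + n + 1) = false) :
    gap E * (blockAvg E.p y n (G ^ 2) ω - blockAvg E.p y n G ω ^ 2) ≤
      blockDirichletForm E.p 0 y n G ω := by
  simpa [blockDirichletForm] using gap_mul_blockAvg_sq_sub_le hgap hy hn G hω

section Maximum

variable {p : ℝ} (hp : p ∈ Set.Icc (0 : ℝ) 1) {V G H : BoxConfig a b → ℝ} {y z : ℤ} {n n₀ : ℕ}
  {ω : BoxConfig a b}
include hp

/-- A site right of the block either extends the block or keeps it ended by a zero, so it cannot
increase a maximal average. -/
lemma blockAvg_siteGen_nonpos_of_lt (hi : (n, ω) ∈ zeroEndedBlocks y n₀)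
    (hmax : ∀ j ∈ zeroEndedBlocks y n₀, blockAvg p y j.1 H j.2 ≤ blockAvg p y n H ω)
    (hz : y + n < z) (hzb : z ≤ b) : blockAvg p y n (siteGen p z H) ω ≤ 0 := by
  obtain ⟨hn₀, hnb, hω⟩ := mem_zeroEndedBlocks.1 hi
  rw [blockAvg_siteGen_of_lt hz, siteGen_apply]
  by_cases hc : extend ω (z + 1) = false
  · refine mul_nonpos_of_nonneg_of_nonpos (boxConstraint_nonneg z ω) (sub_nonpos.2 ?_)
    rcases eq_or_ne z (y + n + 1) with rfl | hne
    · refine hmax (n + 1, ω) (mem_zeroEndedBlocks.2 ⟨by omega, by push_cast; omega, ?_⟩)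
      rwa [Nat.cast_succ, ← add_assoc]
    · refine siteAvg_le hp fun e => hmax (n, setSite z e ω) (mem_zeroEndedBlocks.2 ⟨hn₀, hnb, ?_⟩)
      rwa [extend_setSite_of_ne hne.symm]
  · simp [boxConstraint, constraint, hc]

lemma blockAvg_siteGen_nonpos (hi : (n, ω) ∈ zeroEndedBlocks y n₀)
    (hmax : ∀ j ∈ zeroEndedBlocks y n₀, blockAvg p y j.1 H j.2 ≤ blockAvg p y n H ω)
    (hH : ∀ x < y + 1, IgnoresSite x H) (hzb : z ≤ b) : blockAvg p y n (siteGen p z H) ω ≤ 0 := by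
  rcases lt_or_ge z (y + 1) with hzy | hzy
  · rw [(hH z hzy).siteGen_eq_zero, map_zero, Pi.zero_apply]
  rcases le_or_gt z (y + n) with hzn | hzn
  · rw [← blockAvg_siteAvg_of_mem (by omega) hzn, siteAvg_siteGen, map_zero, Pi.zero_apply]
  · exact blockAvg_siteGen_nonpos_of_lt hp hi hmax hzn hzb

lemma two_mul_mul_siteGen_le (z : ℤ) (G : BoxConfig a b → ℝ) (ω : BoxConfig a b) :
    2 * (G ω * siteGen p z G ω) ≤ siteGen p z (G ^ 2) ω := by
  have hsq : 2 * (G ω * (siteAvg p z G ω - G ω)) ≤ siteAvg p z (G ^ 2) ω - G ω ^ 2 := by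
    linarith [siteAvg_sq_le hp z G ω, sq_nonneg (siteAvg p z G ω - G ω)]
  rw [siteGen_apply, siteGen_apply, Pi.pow_apply]
  linarith [mul_le_mul_of_nonneg_left hsq (boxConstraint_nonneg z ω)]

lemma blockAvg_mul_siteGen_le (hi : (n, ω) ∈ zeroEndedBlocks y n₀)
    (hmax : ∀ j ∈ zeroEndedBlocks y n₀, blockAvg p y j.1 (G ^ 2) j.2 ≤ blockAvg p y n (G ^ 2) ω)
    (hG : ∀ x < y + 1, IgnoresSite x G) (hzb : z ≤ b) :
    blockAvg p y n (G * siteGen p z G) ω ≤ if z ∈ Finset.Icc (y + 1) (y + n) then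
      -blockAvg p y n (boxConstraint z * (G - siteAvg p z G) ^ 2) ω else 0 := by
  simp only [Finset.mem_Icc]
  rcases lt_or_ge z (y + 1) with hzy | hzy
  · rw [if_neg (by omega), (hG z hzy).siteGen_eq_zero, mul_zero, map_zero, Pi.zero_apply]
  rcases le_or_gt z (y + n) with hzn | hzn
  · rw [if_pos ⟨hzy, hzn⟩, blockAvg_mul_siteGen (by omega) hzn, Pi.neg_apply]
  · rw [if_neg (by omega)]
    have hle : blockAvg p y n ((2 : ℝ) • (G * siteGen p z G)) ω ≤
        blockAvg p y n (siteGen p z (G ^ 2)) ω :=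
      blockAvg_mono hp fun η => two_mul_mul_siteGen_le hp z G η
    rw [map_smul, Pi.smul_apply, smul_eq_mul] at hle
    linarith [blockAvg_siteGen_nonpos_of_lt hp hi hmax hzn hzb]

lemma blockAvg_mul_killedGen_le (hy : a - 1 ≤ y) (hi : (n, ω) ∈ zeroEndedBlocks y n₀)
    (hmax : ∀ j ∈ zeroEndedBlocks y n₀, blockAvg p y j.1 (G ^ 2) j.2 ≤ blockAvg p y n (G ^ 2) ω)
    (hG : ∀ x < y + 1, IgnoresSite x G) :
    blockAvg p y n (G * killedGen p V G) ω ≤ -blockDirichletForm p V y n G ω := by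
  have hexpand : G * killedGen p V G =
      ∑ z ∈ Finset.Icc a b, G * siteGen p z G - V * G ^ 2 := by
    rw [killedGen_eq, mul_sub, Finset.mul_sum, mul_left_comm, sq]
  have hnb := (mem_zeroEndedBlocks.1 hi).2.1
  have hfilter : (Finset.Icc a b).filter (· ∈ Finset.Icc (y + 1) (y + n)) =
      Finset.Icc (y + 1) (y + n) := by
    ext z
    simp only [Finset.mem_filter, Finset.mem_Icc]
    omega
  have hsum := Finset.sum_le_sum fun z (hz : z ∈ Finset.Icc a b) =>
    blockAvg_mul_siteGen_le hp hi hmax hG (Finset.mem_Icc.1 hz).2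
  rw [← Finset.sum_filter, Finset.sum_neg_distrib, hfilter] at hsum
  rw [hexpand, map_sub, map_sum, Pi.sub_apply, Finset.sum_apply, blockDirichletForm]
  linarith

lemma blockAvg_boxSemigroup_nonpos (hH : ∀ x < y + 1, IgnoresSite x H)
    (h0 : ∀ i ∈ zeroEndedBlocks y n₀, blockAvg p y i.1 H i.2 ≤ 0) {s : ℝ} (hs : 0 ≤ s)
    (hi : (n, ω) ∈ zeroEndedBlocks y n₀) : blockAvg p y n (boxSemigroup p s H) ω ≤ 0 := by
  refine le_of_hasDerivAt_le_at_max
    (u := fun s i => blockAvg p y i.1 (boxSemigroup p s H) i.2) (B := fun _ => 0)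
    (fun s _ i _ => hasDerivAt_blockAvg p y i.1 (hasDerivAt_boxSemigroup p H s) i.2)
    (fun s _ => hasDerivAt_const s 0) (fun i hi => by simpa using h0 i hi) ?_ hs hi
  rintro s hs ⟨n, ω⟩ hi hmax -
  rw [killedGen_eq, zero_mul, sub_zero, map_sum, Finset.sum_apply]
  exact Finset.sum_nonpos fun z hz => blockAvg_siteGen_nonpos hp hi hmax
    (fun x hx => ignoresSite_boxSemigroup hp hH hs hx) (Finset.mem_Icc.1 hz).2

lemma blockAvg_boxSemigroup_eq_zero (hH : ∀ x < y + 1, IgnoresSite x H)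
    (h0 : ∀ i ∈ zeroEndedBlocks y n₀, blockAvg p y i.1 H i.2 = 0) {s : ℝ} (hs : 0 ≤ s)
    (hi : (n, ω) ∈ zeroEndedBlocks y n₀) : blockAvg p y n (boxSemigroup p s H) ω = 0 := by
  have hneg := blockAvg_boxSemigroup_nonpos hp (H := -H)
    (fun x hx ω c => by rw [Pi.neg_apply, Pi.neg_apply, hH x hx ω c])
    (fun i hi => by rw [map_neg, Pi.neg_apply, h0 i hi, neg_zero]) hs hi
  rw [map_neg, map_neg, Pi.neg_apply] at hneg
  linarith [blockAvg_boxSemigroup_nonpos hp hH (fun i hi => (h0 i hi).le) hs hi]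

lemma blockAvg_killedSemigroup_sq_le (hy : a - 1 ≤ y) (hV : ∀ ω, 0 ≤ V ω)
    (hVy : ∀ x < y + 1, IgnoresSite x V) (hG : ∀ x < y + 1, IgnoresSite x G) {lam M : ℝ}
    (hlam : 0 ≤ lam)
    (hcoercive : ∀ s, 0 ≤ s → ∀ i ∈ zeroEndedBlocks y n₀,
      lam * blockAvg p y i.1 (killedSemigroup p V s G ^ 2) i.2 ≤
        blockDirichletForm p V y i.1 (killedSemigroup p V s G) i.2)
    (h0 : ∀ i ∈ zeroEndedBlocks y n₀, blockAvg p y i.1 (G ^ 2) i.2 ≤ M) {s : ℝ} (hs : 0 ≤ s)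
    (hi : (n, ω) ∈ zeroEndedBlocks y n₀) :
    blockAvg p y n (killedSemigroup p V s G ^ 2) ω ≤ M * Real.exp (-2 * lam * s) := by
  refine le_of_hasDerivAt_le_at_max (I := zeroEndedBlocks y n₀)
    (u := fun s i => blockAvg p y i.1 (killedSemigroup p V s G ^ 2) i.2)
    (u' := fun s i => blockAvg p y i.1
      ((2 : ℝ) • (killedSemigroup p V s G * killedGen p V (killedSemigroup p V s G))) i.2)
    (B := fun s => M * Real.exp (-2 * lam * s))
    (B' := fun s => -2 * lam * (M * Real.exp (-2 * lam * s))) (fun s _ i _ => ?_) (fun s _ => ?_)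
    (fun i hi => by simpa using h0 i hi) ?_ hs hi
  · refine hasDerivAt_blockAvg p y i.1 (fun ω => ?_) i.2
    refine ((hasDerivAt_killedSemigroup p V G s ω).pow 2).congr_deriv ?_
    simp [mul_assoc]
  · have hlin : HasDerivAt (fun s : ℝ => -2 * lam * s) (-2 * lam) s := by
      simpa using (hasDerivAt_id s).const_mul (-2 * lam)
    exact (hlin.exp.const_mul M).congr_deriv (by ring)
  rintro s hs ⟨n, ω⟩ hi hmax hB
  have hderiv := blockAvg_mul_killedGen_le (V := V) hp hy hi hmax
    fun x hx => ignoresSite_killedSemigroup hp hV hVy hG hs hx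
  rw [map_smul, Pi.smul_apply, smul_eq_mul]
  linarith [hcoercive s hs (n, ω) hi, mul_le_mul_of_nonneg_left hB hlam]

end Maximum

/-! ### Survival of the killed process -/

/-- The cost `-log (min p (1 - p))` per site of prescribing the configuration. -/
def pointCost (p : ℝ) : ℝ := -Real.log (min p (1 - p))

lemma min_pow_eq_exp_pointCost {p : ℝ} (hp : p ∈ Set.Ioo (0 : ℝ) 1) (n : ℕ) :
    min p (1 - p) ^ n = Real.exp (-(pointCost p * n)) := by
  have hpos : 0 < min p (1 - p) := lt_min hp.1 (sub_pos.2 hp.2)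
  rw [pointCost, neg_mul, neg_neg, mul_comm, Real.exp_nat_mul, Real.exp_log hpos]

lemma pointCost_nonneg {p : ℝ} (hp : p ∈ Set.Icc (0 : ℝ) 1) : 0 ≤ pointCost p :=
  neg_nonneg.2 (Real.log_nonpos (le_min hp.1 (sub_nonneg.2 hp.2)) ((min_le_left _ _).trans hp.2))

lemma abs_le_exp_of_blockAvg_sq_le {p : ℝ} (hp : p ∈ Set.Ioo (0 : ℝ) 1) {y : ℤ} {n : ℕ}
    {F : BoxConfig a b → ℝ} {ω : BoxConfig a b} {c : ℝ}
    (h : blockAvg p y n (F ^ 2) ω ≤ Real.exp (-2 * c)) :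
    |F ω| ≤ Real.exp (pointCost p * n / 2 - c) := by
  have hpoint := (min_pow_mul_le_blockAvg (y := y) (n := n) (Set.Ioo_subset_Icc_self hp)
    (fun η => sq_nonneg (F η)) ω).trans h
  rw [min_pow_eq_exp_pointCost hp, Real.exp_neg, inv_mul_le_iff₀ (Real.exp_pos _),
    ← Real.exp_add] at hpoint
  refine abs_le_of_sq_le_sq (hpoint.trans_eq ?_) (Real.exp_nonneg _)
  rw [← Real.exp_nat_mul]
  push_cast
  ring_nf

/-- A decay rate of the survival probability. -/
def killedRate (E : EastProcess) : ℝ := min (gap E / 2) (min 1 (gap E / 2) * (1 - E.p) / 2)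

lemma killedRate_pos {E : EastProcess} (hgap : 0 < gap E) : 0 < killedRate E := by
  have hq : 0 < 1 - E.p := sub_pos.2 E.hp1
  exact lt_min (by positivity) (by positivity)

section Coercivity

variable {p : ℝ} (hp : p ∈ Set.Icc (0 : ℝ) 1) {y : ℤ} {n : ℕ} {ω : BoxConfig a b}
include hp

lemma one_sub_le_blockAvg_boxConstraint (hy : a - 1 ≤ y) (hn : y + n ≤ b)
    (hω : extend ω (y + n + 1) = false) : 1 - p ≤ blockAvg p y n (boxConstraint y) ω := by
  rcases n with _ | n
  · have hω' : extend ω (y + 1) = false := by simpa using hω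
    simp [blockAvg_zero, boxConstraint, constraint, hω', hp.1]
  · push_cast at hn
    have hmem : y + 1 ∈ Finset.Icc a b := by rw [Finset.mem_Icc]; omega
    have havg : siteAvg p (y + 1) (boxConstraint y : BoxConfig a b → ℝ) = fun _ => 1 - p := by
      funext η
      simp [siteAvg_apply, boxConstraint, constraint, extend_setSite_self hmem]
    rw [← blockAvg_siteAvg_of_mem (x := y + 1) (by omega) (by push_cast; omega), havg,
      blockAvg_const]

lemma sub_variance_le_blockAvg_boxConstraint_mul_sq (hy : a - 1 ≤ y) (hn : y + n ≤ b)
    (hω : extend ω (y + n + 1) = false) (G : BoxConfig a b → ℝ) :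
    (1 - p) * (blockAvg p y n G ω ^ 2 / 2) -
        (blockAvg p y n (G ^ 2) ω - blockAvg p y n G ω ^ 2) ≤
      blockAvg p y n (boxConstraint y * G ^ 2) ω := by
  set m := blockAvg p y n G ω
  have hpointwise : blockAvg p y n ((m ^ 2 / 2) • boxConstraint y -
      ((G ^ 2 - (2 * m) • G) + fun _ => m ^ 2)) ω ≤ blockAvg p y n (boxConstraint y * G ^ 2) ω := by
    refine blockAvg_mono hp fun η => ?_
    simp only [Pi.sub_apply, Pi.add_apply, Pi.smul_apply, Pi.mul_apply, Pi.pow_apply, smul_eq_mul]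
    linarith [mul_nonneg (boxConstraint_nonneg y η) (sq_nonneg (2 * G η - m)),
      mul_nonneg (sub_nonneg.2 (boxConstraint_le_one y η)) (sq_nonneg (G η - m))]
  simp only [map_sub, map_add, map_smul, Pi.sub_apply, Pi.add_apply, Pi.smul_apply, smul_eq_mul,
    blockAvg_const] at hpointwise
  have hq := mul_le_mul_of_nonneg_left (one_sub_le_blockAvg_boxConstraint hp hy hn hω)
    (show 0 ≤ m ^ 2 / 2 by positivity)
  linarith

end Coercivity

lemma min_mul_le_add {γ q A m D W : ℝ} (hγ : 0 < γ) (hvar : m ^ 2 ≤ A)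
    (hD : γ * (A - m ^ 2) ≤ D) (hW : q * (m ^ 2 / 2) - (A - m ^ 2) ≤ W) (hW0 : 0 ≤ W) :
    min (γ / 2) (min 1 (γ / 2) * q / 2) * A ≤ D + W := by
  set α := min 1 (γ / 2)
  have hα0 : 0 ≤ α := le_min zero_le_one (by positivity)
  have hvar0 : 0 ≤ A - m ^ 2 := sub_nonneg.2 hvar
  have hvariance := mul_le_mul_of_nonneg_right (min_le_left (γ / 2) (α * q / 2)) hvar0
  have hmean := mul_le_mul_of_nonneg_right (min_le_right (γ / 2) (α * q / 2)) (sq_nonneg m)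
  have hαγ := mul_le_mul_of_nonneg_right (min_le_right 1 (γ / 2)) hvar0
  have hαW := mul_le_mul_of_nonneg_left hW hα0
  have hα1 := mul_le_mul_of_nonneg_right (min_le_left 1 (γ / 2)) hW0
  linarith

lemma killedRate_mul_blockAvg_sq_le {E : EastProcess} (hgap : 0 < gap E) {y : ℤ}
    (hy : a - 1 ≤ y) {n : ℕ} {ω : BoxConfig a b} (hi : (n, ω) ∈ zeroEndedBlocks y 0)
    (G : BoxConfig a b → ℝ) : killedRate E * blockAvg E.p y n (G ^ 2) ω ≤
      blockDirichletForm E.p (boxConstraint y) y n G ω := by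
  obtain ⟨-, hn, hω⟩ := mem_zeroEndedBlocks.1 hi
  exact min_mul_le_add hgap (blockAvg_sq_le (p_mem_Icc E) G ω)
    (gap_mul_blockAvg_sq_sub_le hgap hy hn G hω)
    (sub_variance_le_blockAvg_boxConstraint_mul_sq (p_mem_Icc E) hy hn hω G)
    (blockAvg_nonneg (p_mem_Icc E) fun η => mul_nonneg (boxConstraint_nonneg y η) (sq_nonneg _))

/-- The probability that the process killed at rate one while the constraint at `y` is satisfied
survives up to time `T`. -/
def survival (p : ℝ) (y : ℤ) (T : ℝ) : BoxConfig a b → ℝ :=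
  killedSemigroup p (boxConstraint y) T 1

section Survival

variable {p : ℝ} (hp : p ∈ Set.Icc (0 : ℝ) 1) {y : ℤ} {T : ℝ} (hT : 0 ≤ T)
include hp hT

lemma ignoresSite_survival {x : ℤ} (hx : x < y + 1) :
    IgnoresSite x (survival p y T : BoxConfig a b → ℝ) :=
  ignoresSite_killedSemigroup hp (boxConstraint_nonneg y)
    (fun _ hx => ignoresSite_boxConstraint (by omega)) (fun _ _ _ _ => rfl) hT hx

lemma survival_nonneg (ω : BoxConfig a b) : 0 ≤ survival p y T ω :=
  killedSemigroup_nonneg hp (boxConstraint_nonneg y) (fun _ => zero_le_one) hT ω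

lemma survival_le_one (ω : BoxConfig a b) : survival p y T ω ≤ 1 :=
  killedSemigroup_le hp (boxConstraint_nonneg y) zero_le_one (fun _ => le_rfl) hT ω

end Survival

section SurvivalDecay

variable {E : EastProcess} (hgap : 0 < gap E) {y : ℤ} (hy : a - 1 ≤ y) {T u : ℝ} (hT : 0 ≤ T)
  (hu : 0 ≤ u) {n : ℕ} {ω : BoxConfig a b}
include hgap hy hT

lemma blockAvg_survival_sq_le (hi : (n, ω) ∈ zeroEndedBlocks y 0) :
    blockAvg E.p y n (survival E.p y T ^ 2) ω ≤ Real.exp (-2 * (killedRate E * T)) := by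
  have hdecay := blockAvg_killedSemigroup_sq_le (M := 1) (p_mem_Icc E) hy (boxConstraint_nonneg y)
    (fun _ hx => ignoresSite_boxConstraint (by omega)) (fun _ _ _ _ => rfl)
    (killedRate_pos hgap).le (fun s _ i hi => killedRate_mul_blockAvg_sq_le hgap hy hi _)
    (fun i _ => by
      have : (1 : BoxConfig a b → ℝ) ^ 2 = fun _ => 1 := by rw [one_pow]; rfl
      rw [this, blockAvg_const]) hT hi
  rwa [one_mul, mul_assoc] at hdecay

include hu

lemma blockAvg_boxSemigroup_survival_sq_le (hi : (n, ω) ∈ zeroEndedBlocks y 0) :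
    blockAvg E.p y n (boxSemigroup E.p u (survival E.p y T) ^ 2) ω ≤
      Real.exp (-2 * (killedRate E * T)) := by
  have hdecay := blockAvg_killedSemigroup_sq_le (V := 0) (lam := 0) (p_mem_Icc E) hy
    (fun _ => le_rfl) (fun _ _ _ _ => rfl)
    (fun _ hx => ignoresSite_survival (p_mem_Icc E) hT hx) le_rfl
    (fun _ _ _ _ => by
      rw [zero_mul, blockDirichletForm, zero_mul, map_zero, Pi.zero_apply, add_zero]
      exact Finset.sum_nonneg fun z _ => blockAvg_nonneg (p_mem_Icc E) fun η =>
        mul_nonneg (boxConstraint_nonneg z η) (sq_nonneg _))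
    (fun i hi => blockAvg_survival_sq_le hgap hy hT hi) hu hi
  simpa [boxSemigroup] using hdecay

lemma boxSemigroup_survival_le (hn : y + n ≤ b) (hω : extend ω (y + n + 1) = false) :
    boxSemigroup E.p u (survival E.p y T) ω ≤
      Real.exp (pointCost E.p * n / 2 - killedRate E * T) :=
  (le_abs_self _).trans (abs_le_exp_of_blockAvg_sq_le ⟨E.hp0, E.hp1⟩
    (blockAvg_boxSemigroup_survival_sq_le hgap hy hT hu
      (mem_zeroEndedBlocks.2 ⟨n.zero_le, hn, hω⟩)))

lemma blockAvg_boxSemigroup_survival_le (hab : a ≤ b + 1) (hn : y + n = b) (ω : BoxConfig a b) :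
    blockAvg E.p y n (boxSemigroup E.p u (survival E.p y T)) ω ≤
      Real.exp (-(killedRate E * T)) := by
  have hω : extend ω (y + n + 1) = false := extend_of_gt hab (by omega) ω
  have hsq := (blockAvg_sq_le (p_mem_Icc E) _ ω).trans (blockAvg_boxSemigroup_survival_sq_le hgap
    hy hT hu (mem_zeroEndedBlocks.2 ⟨n.zero_le, hn.le, hω⟩))
  have hexp : Real.exp (-2 * (killedRate E * T)) = Real.exp (-(killedRate E * T)) ^ 2 := by
    rw [← Real.exp_nat_mul]
    push_cast
    ring_nf
  exact (abs_le_of_sq_le_sq' (hsq.trans_eq hexp) (Real.exp_nonneg _)).2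

end SurvivalDecay

/-- The indicator of the event that the sites `y + 1, …, y + d` are all occupied. -/
def onesIndicator (y : ℤ) (d : ℕ) (ω : BoxConfig a b) : ℝ :=
  if ∀ x, y < x → x ≤ y + d → extend ω x = true then 1 else 0

lemma onesIndicator_nonneg (y : ℤ) (d : ℕ) (ω : BoxConfig a b) : 0 ≤ onesIndicator y d ω := by
  unfold onesIndicator
  split_ifs <;> norm_num

lemma onesIndicator_le_one (y : ℤ) (d : ℕ) (ω : BoxConfig a b) : onesIndicator y d ω ≤ 1 := by
  unfold onesIndicator
  split_ifs <;> norm_num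

lemma onesIndicator_succ (y : ℤ) (d : ℕ) :
    (onesIndicator y (d + 1) : BoxConfig a b → ℝ) =
      (fun ω => if extend ω (y + d + 1) = true then 1 else 0) * onesIndicator y d := by
  funext ω
  have hsplit : (∀ x, y < x → x ≤ y + ((d + 1 : ℕ) : ℤ) → extend ω x = true) ↔
      extend ω (y + d + 1) = true ∧ ∀ x, y < x → x ≤ y + d → extend ω x = true := by
    refine ⟨fun h => ⟨h _ (by omega) (by push_cast; omega),
      fun x hyx hx => h x hyx (by push_cast; omega)⟩, fun ⟨hlast, h⟩ x hyx hx => ?_⟩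
    rcases eq_or_ne x (y + d + 1) with rfl | hne
    · exact hlast
    · exact h x hyx (by push_cast at hx; omega)
  rw [Pi.mul_apply, onesIndicator, onesIndicator, ite_zero_mul_ite_zero, mul_one]
  exact if_congr hsplit rfl rfl

lemma blockAvg_onesIndicator (p : ℝ) {y : ℤ} {d : ℕ} (hy : a - 1 ≤ y) (hd : y + d ≤ b) :
    blockAvg p y d (onesIndicator y d : BoxConfig a b → ℝ) = fun _ => p ^ d := by
  induction d with
  | zero =>
    funext ω
    rw [blockAvg_zero, pow_zero, onesIndicator, if_pos]
    intro x hyx hx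
    rw [Nat.cast_zero] at hx
    omega
  | succ d ih =>
    push_cast at hd
    have hmem : y + d + 1 ∈ Finset.Icc a b := by rw [Finset.mem_Icc]; omega
    rw [blockAvg_succ, onesIndicator_succ, blockAvg_mul_of_ignoresSite, ih (by omega)]
    · funext ω
      simp [siteAvg_apply, extend_setSite_self hmem, pow_succ']
    · intro x _ hx ω c
      simp only [extend_setSite_of_ne (show y + (d : ℤ) + 1 ≠ x by omega)]

/-- The sites left of a zero relax to equilibrium at the rate of the spectral gap. -/
lemma boxSemigroup_onesIndicator_le {E : EastProcess} (hgap : 0 < gap E) {y : ℤ} (hy : a - 1 ≤ y)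
    {s : ℝ} (hs : 0 ≤ s) {d n : ℕ} (hdn : d ≤ n) (hn : y + n ≤ b) {ω : BoxConfig a b}
    (hω : extend ω (y + n + 1) = false) :
    boxSemigroup E.p s (onesIndicator y d) ω ≤
      E.p ^ d + Real.exp (pointCost E.p * n / 2 - gap E * s) := by
  have hp := p_mem_Icc E
  set G : BoxConfig a b → ℝ := onesIndicator y d - fun _ => E.p ^ d with hG
  have hGy : ∀ x < y + 1, IgnoresSite x G := by
    intro x hx η c
    simp only [hG, Pi.sub_apply, onesIndicator]
    congr 2
    exact propext (forall₃_congr fun z _ _ => by rw [extend_setSite_of_ne (by omega)])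
  have hmean : ∀ i ∈ zeroEndedBlocks y d, blockAvg E.p y i.1 G i.2 = 0 := by
    rintro ⟨m, η⟩ hi
    obtain ⟨hdm, hm, -⟩ := mem_zeroEndedBlocks.1 hi
    obtain ⟨k, rfl⟩ := Nat.exists_eq_add_of_le hdm
    push_cast at hm
    rw [hG, map_sub, Pi.sub_apply, blockAvg_const, blockAvg_add,
      blockAvg_onesIndicator E.p hy (by omega), blockAvg_const, sub_self]
  have hGsq : ∀ η, (G ^ 2) η ≤ 1 := fun η => by
    have hpow : E.p ^ d ∈ Set.Icc (0 : ℝ) 1 := ⟨pow_nonneg hp.1 d, pow_le_one₀ hp.1 hp.2⟩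
    rw [Pi.pow_apply, sq_le_one_iff_abs_le_one, hG, Pi.sub_apply]
    exact abs_sub_le_of_nonneg_of_le (onesIndicator_nonneg y d η) (onesIndicator_le_one y d η)
      hpow.1 hpow.2
  have hdecay := blockAvg_killedSemigroup_sq_le (V := 0) (M := 1) hp hy (fun _ => le_rfl)
    (fun _ _ _ _ => rfl) hGy hgap.le (fun s hs i hi => by
      obtain ⟨-, hi_le, hi_zero⟩ := mem_zeroEndedBlocks.1 hi
      have hpoincare := gap_mul_blockAvg_sq_sub_le_blockDirichletForm hgap hy hi_le
        (boxSemigroup E.p s G) hi_zero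
      rwa [blockAvg_boxSemigroup_eq_zero hp hGy hmean hs hi, zero_pow two_ne_zero,
        sub_zero] at hpoincare)
    (fun i _ => blockAvg_le hp fun η _ => hGsq η) hs (mem_zeroEndedBlocks.2 ⟨hdn, hn, hω⟩)
  rw [one_mul, mul_assoc] at hdecay
  have hpoint := (le_abs_self _).trans (abs_le_exp_of_blockAvg_sq_le ⟨E.hp0, E.hp1⟩ hdecay)
  rw [hG, map_sub, Pi.sub_apply, ← boxSemigroup, boxSemigroup_const] at hpoint
  linarith

/-! ### The front in a box -/

lemma bddBelow_setOf_eq_false {η : Config} (hη : η ∈ LO) : BddBelow {x : ℤ | η x = false} := by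
  obtain ⟨⟨y, hy⟩, -⟩ := hη
  refine ⟨y, fun x (hx : η x = false) => not_lt.1 fun hxy => ?_⟩
  rw [hy x hxy] at hx
  exact Bool.noConfusion hx

lemma apply_front {η : Config} (hη : η ∈ LO) : η (front η) = false :=
  Int.csInf_mem hη.2 (bddBelow_setOf_eq_false hη)

lemma apply_of_lt_front {η : Config} (hη : η ∈ LO) {x : ℤ} (hx : x < front η) : η x = true :=
  Bool.of_not_eq_false fun h => hx.not_ge (csInf_le (bddBelow_setOf_eq_false hη) h)

lemma front_eq_of_forall_lt {η : Config} {z : ℤ} (hz : η z = false) (hlt : ∀ x < z, η x = true) :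
    front η = z := by
  refine IsLeast.csInf_eq ⟨hz, fun x (hx : η x = false) => not_lt.1 fun hxz => ?_⟩
  rw [hlt x hxz] at hx
  exact Bool.noConfusion hx

/-- The front of a box configuration, extended by ones to the left and zeros to the right. -/
def boxFront (ω : BoxConfig a b) : ℤ := front (extend ω)

section Front

variable (hab : a ≤ b + 1) (ω : BoxConfig a b)
include hab

lemma extend_mem_LO : extend ω ∈ LO :=
  ⟨⟨a, fun _ hx => extend_of_lt hx ω⟩, b + 1, extend_of_gt hab (by omega) ω⟩

lemma extend_boxFront : extend ω (boxFront ω) = false := apply_front (extend_mem_LO hab ω)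

lemma extend_of_lt_boxFront {x : ℤ} (hx : x < boxFront ω) : extend ω x = true :=
  apply_of_lt_front (extend_mem_LO hab ω) hx

lemma boxFront_le_of_extend_eq_false {x : ℤ} (hx : extend ω x = false) : boxFront ω ≤ x := by
  by_contra! h
  rw [extend_of_lt_boxFront hab ω h] at hx
  exact Bool.noConfusion hx

lemma boxFront_le : boxFront ω ≤ b + 1 :=
  boxFront_le_of_extend_eq_false hab ω (extend_of_gt hab (by omega) ω)

lemma le_boxFront : a ≤ boxFront ω := by
  by_contra! h
  have := extend_boxFront hab ω
  rw [extend_of_lt h] at this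
  exact Bool.noConfusion this

lemma boxFront_eq_iff {z : ℤ} :
    boxFront ω = z ↔ extend ω z = false ∧ ∀ x < z, extend ω x = true :=
  ⟨fun h => h ▸ ⟨extend_boxFront hab ω, fun _ => extend_of_lt_boxFront hab ω⟩,
    fun h => front_eq_of_forall_lt h.1 h.2⟩

variable {ω} {x : ℤ} (hopen : extend ω (x + 1) = false) (c : Bool)
include hopen

lemma boxFront_setSite_le :
    boxFront (setSite x c ω) ≤ boxFront ω + if x = boxFront ω then 1 else 0 := by
  split_ifs with h
  · refine boxFront_le_of_extend_eq_false hab _ ?_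
    rw [← h, extend_setSite_of_ne (by omega), hopen]
  · refine boxFront_le_of_extend_eq_false hab _ ?_
    rw [add_zero, extend_setSite_of_ne (Ne.symm h), extend_boxFront hab]

lemma le_boxFront_setSite :
    boxFront ω - (if x = boxFront ω - 1 then 1 else 0) ≤ boxFront (setSite x c ω) := by
  have hx : boxFront ω ≤ x + 1 := boxFront_le_of_extend_eq_false hab ω hopen
  have hnew := extend_boxFront hab (setSite x c ω)
  rw [extend_setSite] at hnew
  split_ifs at hnew with h
  · split_ifs <;> omega
  · have := boxFront_le_of_extend_eq_false hab ω hnew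
    split_ifs <;> omega

end Front

lemma boxSemigroup_le_exp_mul {p κ : ℝ} (hp : p ∈ Set.Icc (0 : ℝ) 1) {f : BoxConfig a b → ℝ}
    (hf : ∀ ω, killedGen p 0 f ω ≤ κ * f ω) {t : ℝ} (ht : 0 ≤ t) (ω : BoxConfig a b) :
    boxSemigroup p t f ω ≤ Real.exp (κ * t) * f ω := by
  have hle : (boxSemigroup p t f - Real.exp (κ * t) • f) ω ≤ 0 := by
    refine le_of_hasDerivAt_killedGen_add hp (V := 0) (fun _ => le_rfl)
      (u := fun s => boxSemigroup p s f - Real.exp (κ * s) • f)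
      (F := fun s ω => Real.exp (κ * s) * (killedGen p 0 f ω - κ * f ω))
      (B := fun _ => 0) (B' := fun _ => 0) (fun s _ η => ?_) (fun s _ η => ?_)
      (fun s _ => hasDerivAt_const s _) (fun _ _ => le_rfl) (by simp) ht ω
    · have hexp : HasDerivAt (fun r => Real.exp (κ * r)) (Real.exp (κ * s) * κ) s := by
        simpa using ((hasDerivAt_id s).const_mul κ).exp
      refine ((hasDerivAt_boxSemigroup p f s η).sub (hexp.mul_const (f η))).congr_deriv ?_
      rw [map_sub, map_smul]
      simp only [Pi.sub_apply, Pi.smul_apply, smul_eq_mul]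
      ring
    · exact mul_nonpos_of_nonneg_of_nonpos (Real.exp_nonneg _) (by linarith [hf η])
  simpa using hle

section SingleJump

variable {p : ℝ} (hp : p ∈ Set.Icc (0 : ℝ) 1) {g : BoxConfig a b → ℝ} {x₀ : BoxConfig a b → ℤ}
  (hg : ∀ ω, ∀ x, extend ω (x + 1) = false → ∀ c,
    g (setSite x c ω) ≤ g ω + if x = x₀ ω then 1 else 0)
include hp hg

lemma killedGen_exp_le (ω : BoxConfig a b) :
    killedGen p 0 (fun ω => Real.exp (g ω)) ω ≤ 2 * Real.exp (g ω) := by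
  have hterm : ∀ x ∈ Finset.Icc a b, siteGen p x (fun ω => Real.exp (g ω)) ω ≤
      if x = x₀ ω then 2 * Real.exp (g ω) else 0 := by
    intro x _
    by_cases hopen : extend ω (x + 1) = false
    · have hjump : siteAvg p x (fun ω => Real.exp (g ω)) ω ≤
          Real.exp (g ω + if x = x₀ ω then 1 else 0) :=
        siteAvg_le hp fun c => Real.exp_le_exp.2 (hg ω x hopen c)
      rw [siteGen_apply, boxConstraint, constraint, if_pos hopen, one_mul]
      split_ifs at hjump ⊢
      · rw [Real.exp_add] at hjump
        nlinarith [Real.exp_one_lt_d9, Real.exp_pos (g ω)]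
      · rw [add_zero] at hjump
        linarith
    · rw [siteGen_apply, boxConstraint, constraint, if_neg hopen, zero_mul]
      split_ifs <;> positivity
  rw [killedGen_eq]
  simp only [zero_mul, sub_zero, Finset.sum_apply]
  refine (Finset.sum_le_sum hterm).trans ?_
  rw [Finset.sum_ite_eq']
  split_ifs
  · exact le_rfl
  · positivity

lemma boxSemigroup_increment_le {T : ℝ} (hT : 0 ≤ T) (r : ℝ) (ω : BoxConfig a b) :
    boxSemigroup p T (fun ω' => if g ω + r ≤ g ω' then 1 else 0) ω ≤ Real.exp (2 * T - r) := by
  have chernoff : ∀ ω', (if g ω + r ≤ g ω' then 1 else 0) ≤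
      (Real.exp (-(g ω + r)) • fun ω' => Real.exp (g ω')) ω' := by
    intro ω'
    simp only [Pi.smul_apply, smul_eq_mul, ← Real.exp_add]
    split_ifs with h
    · exact Real.one_le_exp (by linarith)
    · positivity
  refine (boxSemigroup_mono hp chernoff hT ω).trans ?_
  rw [map_smul, Pi.smul_apply, smul_eq_mul]
  calc _ ≤ Real.exp (-(g ω + r)) * (Real.exp (2 * T) * Real.exp (g ω)) := by
        gcongr
        exact boxSemigroup_le_exp_mul hp (killedGen_exp_le hp hg) hT ω
    _ = Real.exp (2 * T - r) := by rw [← Real.exp_add, ← Real.exp_add]; congr 1; ring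

end SingleJump

section FrontTail

variable (hab : a ≤ b + 1) {p : ℝ} (hp : p ∈ Set.Icc (0 : ℝ) 1) {T : ℝ} (hT : 0 ≤ T) (d : ℤ)
  (ω : BoxConfig a b)
include hab hp hT

lemma boxSemigroup_boxFront_ge_le :
    boxSemigroup p T (fun ω' => if boxFront ω + d ≤ boxFront ω' then 1 else 0) ω ≤
      Real.exp (2 * T - d) := by
  have := boxSemigroup_increment_le hp (g := fun ω : BoxConfig a b => boxFront ω)
    (x₀ := boxFront) (fun ω x hopen c => by exact_mod_cast boxFront_setSite_le hab hopen c)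
    hT d ω
  exact_mod_cast this

lemma boxSemigroup_boxFront_le_le :
    boxSemigroup p T (fun ω' => if boxFront ω' ≤ boxFront ω - d then 1 else 0) ω ≤
      Real.exp (2 * T - d) := by
  have := boxSemigroup_increment_le hp (g := fun ω : BoxConfig a b => (-boxFront ω : ℤ))
    (x₀ := fun ω => boxFront ω - 1)
    (fun ω x hopen c => by
      have := le_boxFront_setSite hab hopen c
      exact_mod_cast (by linarith :
        -boxFront (setSite x c ω) ≤ -boxFront ω + if x = boxFront ω - 1 then 1 else 0))
    hT d ω
  convert this using 5
  norm_cast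
  grind

end FrontTail

/-! ### Finite speed of propagation and decorrelation -/

lemma two_mul_pow_div_factorial_le_exp {s : ℝ} (hs : 0 ≤ s) (j : ℕ) :
    (2 * s) ^ j / j.factorial ≤ Real.exp (16 * s - 2 * j) := by
  have hexp : Real.exp 2 ≤ 8 := by
    rw [show (2 : ℝ) = 1 + 1 by norm_num, Real.exp_add]
    nlinarith [Real.exp_one_lt_d9, Real.exp_pos 1]
  rw [Real.exp_sub, le_div_iff₀ (Real.exp_pos _)]
  calc (2 * s) ^ j / j.factorial * Real.exp (2 * j)
      = (2 * s * Real.exp 2) ^ j / j.factorial := by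
        rw [mul_pow _ (Real.exp 2), ← Real.exp_nat_mul]; ring_nf
    _ ≤ Real.exp (2 * s * Real.exp 2) := Real.pow_div_factorial_le_exp _ (by positivity) j
    _ ≤ Real.exp (16 * s) := Real.exp_le_exp.2 (by nlinarith)

lemma sum_exp_neg_two_mul_sub_le (a b y : ℤ) :
    ∑ x ∈ Finset.Icc a b with y ≤ x, Real.exp (-2 * ((x : ℝ) - y)) ≤ 2 := by
  have hsub : {x ∈ Finset.Icc a b | y ≤ x} ⊆
      (Finset.range ((b - y).toNat + 1)).image (fun k : ℕ => y + (k : ℤ)) := by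
    intro x hx
    simp only [Finset.mem_filter, Finset.mem_Icc, Finset.mem_image, Finset.mem_range] at hx ⊢
    exact ⟨(x - y).toNat, by omega, by omega⟩
  have hexp : Real.exp (-2) ≤ 1 / 2 := by
    rw [Real.exp_neg, ← one_div]
    exact one_div_le_one_div_of_le two_pos (by linarith [Real.add_one_le_exp (2 : ℝ)])
  calc _ ≤ ∑ k ∈ Finset.range ((b - y).toNat + 1), Real.exp (-2) ^ k := by
        refine (Finset.sum_le_sum_of_subset_of_nonneg hsub fun _ _ _ => Real.exp_nonneg _).trans ?_
        rw [Finset.sum_image fun i _ j _ h => by simpa using h]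
        refine Finset.sum_le_sum fun k _ => le_of_eq ?_
        rw [← Real.exp_nat_mul]
        congr 1
        push_cast
        ring
    _ ≤ ∑ k ∈ Finset.range ((b - y).toNat + 1), (1 / 2 : ℝ) ^ k := by gcongr
    _ ≤ ∑' k : ℕ, (1 / 2 : ℝ) ^ k :=
        summable_geometric_two.sum_le_tsum _ fun _ _ => by positivity
    _ = 2 := tsum_geometric_two

lemma IgnoresSite.siteGen_mul {x : ℤ} {G : BoxConfig a b → ℝ} (hG : IgnoresSite x G) (p : ℝ)
    (Φ : BoxConfig a b → ℝ) : siteGen p x (Φ * G) = siteGen p x Φ * G := by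
  rw [siteGen_eq_mul, siteGen_eq_mul, mul_comm Φ, hG.siteAvg_mul]
  ring

lemma IgnoresSite.neg {x : ℤ} {f : BoxConfig a b → ℝ} (hf : IgnoresSite x f) :
    IgnoresSite x (-f) := fun ω c => congrArg Neg.neg (hf ω c)

section Decorrelation

variable {p : ℝ} (hp : p ∈ Set.Icc (0 : ℝ) 1) {c : ℝ}
include hp

lemma abs_boxSemigroup_sub_siteAvg_le_exp {z x : ℤ} (hzx : z ≤ x) {f : BoxConfig a b → ℝ}
    (hf : ∀ x, z < x → IgnoresSite x f) (hc : ∀ ω, |f ω| ≤ c) {s : ℝ} (hs : 0 ≤ s)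
    (ω : BoxConfig a b) : |boxSemigroup p s f ω - siteAvg p x (boxSemigroup p s f) ω| ≤
      2 * c * Real.exp (16 * s - 2 * ((x : ℝ) - z)) := by
  obtain ⟨j, rfl⟩ := Int.le.dest hzx
  have hc0 : 0 ≤ c := (abs_nonneg _).trans (hc ω)
  refine (abs_boxSemigroup_sub_siteAvg_le hp hf hc j hs ω).trans ?_
  gcongr
  refine (two_mul_pow_div_factorial_le_exp hs j).trans_eq ?_
  push_cast
  ring_nf

lemma siteGen_mul_sub_le {x : ℤ} {Φ G : BoxConfig a b → ℝ} {δ : ℝ}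
    (hΦ : ∀ ω, |Φ ω - siteAvg p x Φ ω| ≤ δ) (hG : ∀ ω, |G ω| ≤ c) (ω : BoxConfig a b) :
    siteGen p x (Φ * G) ω - siteGen p x Φ ω * G ω - Φ ω * siteGen p x G ω ≤ 3 * c * δ := by
  have hδ : 0 ≤ δ := (abs_nonneg _).trans (hΦ ω)
  have hc : 0 ≤ c := (abs_nonneg _).trans (hG ω)
  have hGavg : |G ω - siteAvg p x G ω| ≤ 2 * c :=
    (abs_sub _ _).trans (by linarith [hG ω, abs_siteAvg_le hp (x := x) (ω := ω) fun e => hG _])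
  have hcov : |siteAvg p x ((Φ - siteAvg p x Φ) * G) ω| ≤ δ * c := abs_siteAvg_le hp fun e => by
    rw [Pi.mul_apply, abs_mul]
    exact mul_le_mul (hΦ _) (hG _) (abs_nonneg _) hδ
  have hprod : |(Φ ω - siteAvg p x Φ ω) * (G ω - siteAvg p x G ω)| ≤ δ * (2 * c) := by
    rw [abs_mul]
    exact mul_le_mul (hΦ ω) hGavg (abs_nonneg _) hδ
  have hsplit : siteGen p x (Φ * G) ω - siteGen p x Φ ω * G ω - Φ ω * siteGen p x G ω =
      boxConstraint x ω * (siteAvg p x ((Φ - siteAvg p x Φ) * G) ω +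
        (Φ ω - siteAvg p x Φ ω) * (G ω - siteAvg p x G ω)) := by
    rw [sub_mul, map_sub, (ignoresSite_siteAvg p x Φ).siteAvg_mul]
    simp only [siteGen_apply, Pi.sub_apply, Pi.mul_apply]
    ring
  rw [hsplit]
  refine (mul_le_mul_of_nonneg_left (c := 3 * c * δ) ?_
    (boxConstraint_nonneg x ω)).trans (mul_le_of_le_one_left (by positivity)
      (boxConstraint_le_one x ω))
  linarith [(abs_le.1 hcov).2, (abs_le.1 hprod).2]

variable {z y : ℤ} {f g : BoxConfig a b → ℝ}

lemma killedGen_mul_sub_le (hzy : z ≤ y) (hf : ∀ x, z < x → IgnoresSite x f)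
    (hf1 : ∀ ω, |f ω| ≤ 1) (hg : ∀ x < y, IgnoresSite x g) (hgc : ∀ ω, |g ω| ≤ c) {s : ℝ}
    (hs : 0 ≤ s) (ω : BoxConfig a b) :
    killedGen p 0 (boxSemigroup p s f * boxSemigroup p s g) ω -
        killedGen p 0 (boxSemigroup p s f) ω * boxSemigroup p s g ω -
        boxSemigroup p s f ω * killedGen p 0 (boxSemigroup p s g) ω ≤
      12 * c * Real.exp (16 * s - 2 * ((y : ℝ) - z)) := by
  have hc : 0 ≤ c := (abs_nonneg _).trans (hgc ω)
  set Φ := boxSemigroup p s f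
  set G := boxSemigroup p s g
  have hterm : ∀ x ∈ Finset.Icc a b,
      siteGen p x (Φ * G) ω - siteGen p x Φ ω * G ω - Φ ω * siteGen p x G ω ≤
        if y ≤ x then 6 * c * Real.exp (16 * s - 2 * ((y : ℝ) - z)) *
          Real.exp (-2 * ((x : ℝ) - y)) else 0 := by
    intro x _
    split_ifs with hx
    · refine (siteGen_mul_sub_le hp
        (fun η => abs_boxSemigroup_sub_siteAvg_le_exp hp (hzy.trans hx) hf hf1 hs η)
        (fun η => abs_boxSemigroup_le hp hgc hs η) ω).trans_eq ?_
      rw [mul_assoc (6 * c), ← Real.exp_add]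
      ring_nf
    · have hGx : IgnoresSite x G := ignoresSite_boxSemigroup hp hg hs (not_le.1 hx)
      rw [hGx.siteGen_mul, hGx.siteGen_eq_zero]
      simp
  calc _ = ∑ x ∈ Finset.Icc a b,
        (siteGen p x (Φ * G) ω - siteGen p x Φ ω * G ω - Φ ω * siteGen p x G ω) := by
        simp only [killedGen_eq, zero_mul, sub_zero, Finset.sum_apply, Finset.sum_sub_distrib,
          Finset.sum_mul, Finset.mul_sum]
    _ ≤ 6 * c * Real.exp (16 * s - 2 * ((y : ℝ) - z)) * 2 := by
        refine (Finset.sum_le_sum hterm).trans ?_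
        rw [← Finset.sum_filter, ← Finset.mul_sum]
        gcongr
        exact sum_exp_neg_two_mul_sub_le a b y
    _ = _ := by ring

lemma boxSemigroup_mul_sub_le (hzy : z ≤ y) (hf : ∀ x, z < x → IgnoresSite x f)
    (hf1 : ∀ ω, |f ω| ≤ 1) (hg : ∀ x < y, IgnoresSite x g) (hgc : ∀ ω, |g ω| ≤ c) {T : ℝ}
    (hT : 0 ≤ T) (ω : BoxConfig a b) :
    boxSemigroup p T (f * g) ω - boxSemigroup p T f ω * boxSemigroup p T g ω ≤
      c * Real.exp (16 * T - 2 * ((y : ℝ) - z)) := by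
  have hc : 0 ≤ c := (abs_nonneg _).trans (hgc ω)
  refine le_of_hasDerivAt_killedGen_add hp (V := 0) (fun _ => le_rfl)
    (u := fun s => boxSemigroup p s (f * g) - boxSemigroup p s f * boxSemigroup p s g)
    (F := fun s ω => killedGen p 0 (boxSemigroup p s f * boxSemigroup p s g) ω -
        killedGen p 0 (boxSemigroup p s f) ω * boxSemigroup p s g ω -
        boxSemigroup p s f ω * killedGen p 0 (boxSemigroup p s g) ω)
    (B := fun s => c * Real.exp (16 * s - 2 * ((y : ℝ) - z)))
    (B' := fun s => c * (Real.exp (16 * s - 2 * ((y : ℝ) - z)) * 16))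
    (fun s _ η => ?_) (fun s hs η => ?_) (fun s _ => ?_) (fun s _ => by positivity)
    (fun η => ?_) hT ω
  · refine ((hasDerivAt_boxSemigroup p (f * g) s η).sub
      ((hasDerivAt_boxSemigroup p f s η).mul (hasDerivAt_boxSemigroup p g s η))).congr_deriv ?_
    rw [map_sub, Pi.sub_apply]
    ring
  · refine (killedGen_mul_sub_le hp hzy hf hf1 hg hgc hs η).trans ?_
    have : 0 ≤ c * Real.exp (16 * s - 2 * ((y : ℝ) - z)) := by positivity
    linarith
  · simpa using ((((hasDerivAt_id s).const_mul 16).sub_const (2 * ((y : ℝ) - z))).exp.const_mul c)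
  · simpa using by positivity

lemma abs_boxSemigroup_mul_sub_le (hzy : z ≤ y) (hf : ∀ x, z < x → IgnoresSite x f)
    (hf1 : ∀ ω, |f ω| ≤ 1) (hg : ∀ x < y, IgnoresSite x g) (hgc : ∀ ω, |g ω| ≤ c) {T : ℝ}
    (hT : 0 ≤ T) (ω : BoxConfig a b) :
    |boxSemigroup p T (f * g) ω - boxSemigroup p T f ω * boxSemigroup p T g ω| ≤
      c * Real.exp (16 * T - 2 * ((y : ℝ) - z)) := by
  have hneg := boxSemigroup_mul_sub_le hp hzy (f := -f) (fun x hx => (hf x hx).neg)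
    (fun η => by simpa using hf1 η) hg hgc hT ω
  rw [neg_mul, map_neg, map_neg, Pi.neg_apply, Pi.neg_apply] at hneg
  exact abs_le.2 ⟨by linarith, boxSemigroup_mul_sub_le hp hzy hf hf1 hg hgc hT ω⟩

end Decorrelation

/-! ### Observables with zero mean at a site -/

lemma siteAvg_siteGen_comm {p : ℝ} {x y : ℤ} {f : BoxConfig a b → ℝ}
    (hf : ∀ x < y, IgnoresSite x f) :
    siteAvg p y (siteGen p x f) = siteGen p x (siteAvg p y f) := by
  rcases lt_trichotomy x y with hxy | rfl | hxy
  · rw [(hf x hxy).siteGen_eq_zero, ((hf x hxy).siteAvg p y).siteGen_eq_zero, map_zero]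
  · rw [siteAvg_siteGen, (ignoresSite_siteAvg p x f).siteGen_eq_zero]
  · rw [siteGen_eq_mul, (ignoresSite_boxConstraint (by omega)).siteAvg_mul, map_sub, siteAvg_comm,
      siteGen_eq_mul]

section ZeroMean

variable {p : ℝ} (hp : p ∈ Set.Icc (0 : ℝ) 1) {y : ℤ} {g : BoxConfig a b → ℝ}
  (hg : ∀ x < y, IgnoresSite x g) (h0 : siteAvg p y g = 0) {T : ℝ} (hT : 0 ≤ T)
include hp hg h0 hT

lemma siteAvg_boxSemigroup_nonpos (ω : BoxConfig a b) :
    siteAvg p y (boxSemigroup p T g) ω ≤ 0 := by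
  refine le_of_hasDerivAt_killedGen_add hp (V := 0) (fun _ => le_rfl)
    (u := fun s => siteAvg p y (boxSemigroup p s g)) (F := 0) (B := fun _ => 0) (B' := 0)
    (fun s hs η => ?_) (fun _ _ _ => le_rfl) (fun s _ => hasDerivAt_const s _) (fun _ _ => le_rfl)
    (fun η => by simp [h0]) hT ω
  have hcomm : killedGen p 0 (siteAvg p y (boxSemigroup p s g)) =
      siteAvg p y (killedGen p 0 (boxSemigroup p s g)) := by
    simp only [killedGen_eq, zero_mul, sub_zero, map_sum]
    exact Finset.sum_congr rfl fun x _ =>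
      (siteAvg_siteGen_comm fun x hx => ignoresSite_boxSemigroup hp hg hs hx).symm
  rw [hcomm]
  refine (((hasDerivAt_boxSemigroup p g s _).const_mul p).add
    ((hasDerivAt_boxSemigroup p g s _).const_mul (1 - p))).congr_deriv ?_
  simp [siteAvg_apply]

lemma siteAvg_boxSemigroup_eq_zero : siteAvg p y (boxSemigroup p T g) = 0 := by
  funext ω
  have hneg := siteAvg_boxSemigroup_nonpos hp (g := -g) (fun x hx => (hg x hx).neg)
    (by rw [map_neg, h0, neg_zero]) hT ω
  rw [map_neg, map_neg, Pi.neg_apply, neg_nonpos] at hneg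
  exact le_antisymm (siteAvg_boxSemigroup_nonpos hp hg h0 hT ω) hneg

/-- At a maximum of `P_s g - c • survival`, resampling `y` turns `P_s g` into zero, which is
exactly compensated by the killing in `survival`. -/
lemma boxSemigroup_le_mul_survival {c : ℝ} (hc : 0 ≤ c) (hgc : ∀ ω, g ω ≤ c)
    (ω : BoxConfig a b) : boxSemigroup p T g ω ≤ c * survival p y T ω := by
  by_cases hy : y ∈ Finset.Icc a b
  swap
  · rw [(ignoresSite_of_notMem hy g).siteAvg_eq] at h0
    rw [h0, map_zero]
    exact mul_nonneg hc (survival_nonneg hp hT ω)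
  refine sub_nonpos.1 (le_of_hasDerivAt_le_at_max (I := Finset.univ)
    (u := fun s ω => boxSemigroup p s g ω - c * survival p y s ω)
    (B := fun _ => 0) (B' := 0) (fun s _ η _ => (hasDerivAt_boxSemigroup p g s η).sub
      ((hasDerivAt_killedSemigroup p (boxConstraint y) 1 s η).const_mul c))
    (fun s _ => hasDerivAt_const s _) (fun η _ => by simpa [survival] using hgc η)
    (fun s hs η _ hmax hpos => ?_) hT (Finset.mem_univ ω))
  change killedGen p 0 (boxSemigroup p s g) η -
    c * killedGen p (boxConstraint y) (survival p y s) η ≤ 0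
  set G := boxSemigroup p s g
  set R : BoxConfig a b → ℝ := survival p y s
  have hRy : siteGen p y R = 0 :=
    IgnoresSite.siteGen_eq_zero (ignoresSite_survival hp hs (by omega)) p
  have hGy : siteGen p y G = -(boxConstraint y * G) := by
    rw [siteGen_eq_mul, siteAvg_boxSemigroup_eq_zero hp hg h0 hs]
    ring
  have hterm : ∀ x ∈ Finset.Icc a b, siteGen p x (G - c • R) η ≤
      if x = y then -(boxConstraint y η * G η) else 0 := by
    intro x _
    split_ifs with hx
    · rw [hx, map_sub, map_smul, hRy, hGy]
      simp
    · exact mul_nonpos_of_nonneg_of_nonpos (boxConstraint_nonneg x η)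
        (sub_nonpos.2 (siteAvg_le hp fun e => hmax _ (Finset.mem_univ _)))
  have hsum := Finset.sum_le_sum hterm
  rw [Finset.sum_ite_eq', if_pos hy] at hsum
  simp only [map_sub, map_smul, Pi.sub_apply, Pi.smul_apply, smul_eq_mul,
    Finset.sum_sub_distrib, ← Finset.mul_sum] at hsum
  have hkill := mul_nonneg (boxConstraint_nonneg y η) hpos
  simp only [killedGen_eq, Pi.sub_apply, Pi.mul_apply, Finset.sum_apply, Pi.zero_apply, zero_mul]
  linarith

lemma abs_boxSemigroup_le_mul_survival {c : ℝ} (hgc : ∀ ω, |g ω| ≤ c) (ω : BoxConfig a b) :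
    |boxSemigroup p T g ω| ≤ c * survival p y T ω := by
  have hc : 0 ≤ c := (abs_nonneg _).trans (hgc ω)
  have hneg := boxSemigroup_le_mul_survival hp (g := -g) (fun x hx => (hg x hx).neg)
    (by rw [map_neg, h0, neg_zero]) hT hc (fun η => (neg_le_abs _).trans (hgc η)) ω
  rw [map_neg, Pi.neg_apply] at hneg
  exact abs_le.2 ⟨by linarith, boxSemigroup_le_mul_survival hp hg h0 hT hc
    (fun η => (le_abs_self _).trans (hgc η)) ω⟩

end ZeroMean

/-! ### Survival behind the moving front -/

/-- The survival probability at the site `k` sites behind the front. -/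
def survivalBehind (p : ℝ) (k : ℕ) (T : ℝ) (ω : BoxConfig a b) : ℝ :=
  survival p (boxFront ω + k) T ω

/-- The observable `survivalBehind`, restricted to the event that the site `k` sites behind the
front is to the left of `x`. -/
def survivalBehindBefore (p : ℝ) (k : ℕ) (T : ℝ) (x : ℤ) (ω : BoxConfig a b) : ℝ :=
  if boxFront ω + k < x then survivalBehind p k T ω else 0

/-- The error made in one time step of length `δ`. The first term bounds the survival probability at
the at most `Δ` sites just passed by the front, the second one the probability that the front moves
left by `Δ` sites or more. -/
def gridError (E : EastProcess) (Δ : ℕ) (δ T : ℝ) : ℝ :=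
  Δ * Real.exp (pointCost E.p * Δ / 2 - killedRate E * T) + Real.exp (2 * δ - Δ)

lemma gridError_nonneg (E : EastProcess) (Δ : ℕ) (δ T : ℝ) : 0 ≤ gridError E Δ δ T := by
  unfold gridError
  positivity

section Bounds

variable {p : ℝ} (hp : p ∈ Set.Icc (0 : ℝ) 1) (k : ℕ) {T : ℝ} (hT : 0 ≤ T) (x x' : ℤ)
  (ω : BoxConfig a b)
include hp hT

lemma survivalBehind_nonneg : 0 ≤ survivalBehind p k T ω :=
  survival_nonneg hp hT ω

lemma survivalBehind_le_one : survivalBehind p k T ω ≤ 1 :=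
  survival_le_one hp hT ω

lemma survivalBehindBefore_nonneg : 0 ≤ survivalBehindBefore p k T x ω := by
  unfold survivalBehindBefore
  split_ifs
  exacts [survivalBehind_nonneg hp k hT ω, le_rfl]

lemma survivalBehindBefore_le_one : survivalBehindBefore p k T x ω ≤ 1 := by
  unfold survivalBehindBefore
  split_ifs
  exacts [survivalBehind_le_one hp k hT ω, zero_le_one]

lemma survivalBehindBefore_le_add_sum (hab : a ≤ b + 1) :
    survivalBehindBefore p k T x ω ≤
      survivalBehindBefore p k T x' ω + ∑ y ∈ Finset.Ico (max a x') x, survival p y T ω := by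
  have hsum : 0 ≤ ∑ y ∈ Finset.Ico (max a x') x, survival p y T ω :=
    Finset.sum_nonneg fun y _ => survival_nonneg hp hT ω
  have hnonneg := survivalBehindBefore_nonneg hp k hT x' ω
  by_cases hx : boxFront ω + k < x
  · by_cases hx' : boxFront ω + k < x'
    · rw [survivalBehindBefore, survivalBehindBefore, if_pos hx, if_pos hx']
      linarith
    · have hmem : boxFront ω + k ∈ Finset.Ico (max a x') x := by
        have := le_boxFront hab ω
        rw [Finset.mem_Ico, max_le_iff]
        omega
      have hsingle := Finset.single_le_sum (f := fun y => survival p y T ω)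
        (fun y _ => survival_nonneg hp hT ω) hmem
      rw [survivalBehindBefore, if_pos hx, survivalBehind]
      linarith
  · rw [survivalBehindBefore, if_neg hx]
    linarith

end Bounds

section TimeGrid

variable {E : EastProcess} (hgap : 0 < gap E) (hab : a ≤ b + 1) {T : ℝ} (hT : 0 ≤ T) (k Δ : ℕ)
  {δ : ℝ} (hδ : 0 ≤ δ)
include hgap hab hT

lemma boxSemigroup_survival_le_of_lt_boxFront (ω : BoxConfig a b) {u : ℝ} (hu : 0 ≤ u) {y : ℤ}
    (hy : y ∈ Finset.Ico (max a (boxFront ω - Δ)) (boxFront ω)) :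
    boxSemigroup E.p u (survival E.p y T) ω ≤
      Real.exp (pointCost E.p * Δ / 2 - killedRate E * T) := by
  rw [Finset.mem_Ico, max_le_iff] at hy
  obtain ⟨n, hn⟩ := Int.eq_ofNat_of_zero_le (a := boxFront ω - 1 - y) (by omega)
  have hfront : y + n + 1 = boxFront ω := by omega
  have hb := boxFront_le hab ω
  refine (boxSemigroup_survival_le hgap (by omega) hT hu (n := n) (by omega)
    (by rw [hfront, extend_boxFront hab])).trans ?_
  have := pointCost_nonneg (p_mem_Icc E)
  have hnΔ : (n : ℝ) ≤ Δ := by exact_mod_cast (by omega : n ≤ Δ)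
  gcongr

lemma sum_boxSemigroup_survival_le (ω : BoxConfig a b) {u : ℝ} (hu : 0 ≤ u) :
    ∑ y ∈ Finset.Ico (max a (boxFront ω - Δ)) (boxFront ω),
        boxSemigroup E.p u (survival E.p y T) ω ≤
      Δ * Real.exp (pointCost E.p * Δ / 2 - killedRate E * T) := by
  refine (Finset.sum_le_card_nsmul _ _ _ fun y hy =>
    boxSemigroup_survival_le_of_lt_boxFront hgap hab hT Δ ω hu hy).trans ?_
  have hcard : (Finset.Ico (max a (boxFront ω - Δ)) (boxFront ω)).card ≤ Δ := by
    rw [Int.card_Ico]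
    omega
  rw [nsmul_eq_mul]
  gcongr

omit hgap in
lemma boxSemigroup_survivalBehindBefore_le_of_forall {u c : ℝ} (hu : 0 ≤ u) (hc : 0 ≤ c)
    (h : ∀ ω : BoxConfig a b,
      boxSemigroup E.p u (survivalBehindBefore E.p k T (boxFront ω)) ω ≤ c)
    (x : ℤ) (ω : BoxConfig a b) :
    boxSemigroup E.p u (survivalBehindBefore E.p k T x) ω ≤
      c + (if boxFront ω ≤ x - Δ then 1 else 0) +
        ∑ y ∈ Finset.Ico (max a (x - Δ)) x, boxSemigroup E.p u (survival E.p y T) ω := by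
  have hp := p_mem_Icc E
  by_cases hfront : boxFront ω ≤ x - Δ
  · have hone := boxSemigroup_le hp (survivalBehindBefore_le_one hp k hT x) hu ω
    have hsum : 0 ≤ ∑ y ∈ Finset.Ico (max a (x - Δ)) x, boxSemigroup E.p u (survival E.p y T) ω :=
      Finset.sum_nonneg fun y _ => boxSemigroup_nonneg hp (survival_nonneg hp hT) hu ω
    rw [if_pos hfront]
    linarith
  · have hsplit : ∀ η : BoxConfig a b, survivalBehindBefore E.p k T x η ≤
        (survivalBehindBefore E.p k T (boxFront ω) +
          ∑ y ∈ Finset.Ico (max a (x - Δ)) x, survival E.p y T : BoxConfig a b → ℝ) η := by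
      intro η
      rw [Pi.add_apply, Finset.sum_apply]
      refine (survivalBehindBefore_le_add_sum hp k hT x (boxFront ω) η hab).trans ?_
      gcongr
      · exact fun _ _ _ => survival_nonneg hp hT η
      · omega
    have hmono := boxSemigroup_mono hp hsplit hu ω
    rw [map_add, map_sum, Pi.add_apply, Finset.sum_apply] at hmono
    rw [if_neg hfront]
    linarith [h ω]

include hδ

lemma boxSemigroup_survivalBehindBefore_le (j : ℕ) (ω : BoxConfig a b) :
    boxSemigroup E.p (j * δ) (survivalBehindBefore E.p k T (boxFront ω)) ω ≤
      j * gridError E Δ δ T := by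
  have hp := p_mem_Icc E
  induction j generalizing ω with
  | zero => simp [survivalBehindBefore, (Int.natCast_nonneg k).not_gt]
  | succ j ih =>
    have hjδ : 0 ≤ (j : ℝ) * δ := by positivity
    have hstep := boxSemigroup_mono hp
      (g := ((fun _ => j * gridError E Δ δ T) +
          fun η => if boxFront η ≤ boxFront ω - Δ then 1 else 0) +
        ∑ y ∈ Finset.Ico (max a (boxFront ω - Δ)) (boxFront ω),
          boxSemigroup E.p (j * δ) (survival E.p y T))
      (fun η => by
        simpa only [Pi.add_apply, Finset.sum_apply] using
          boxSemigroup_survivalBehindBefore_le_of_forall hab hT k Δ hjδ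
            (mul_nonneg j.cast_nonneg (gridError_nonneg E Δ δ T)) ih (boxFront ω) η) hδ ω
    simp only [map_add, map_sum, Pi.add_apply, Finset.sum_apply, boxSemigroup_const,
      ← boxSemigroup_add] at hstep
    have hretreat := boxSemigroup_boxFront_le_le hab hp hδ Δ ω
    have hsum := sum_boxSemigroup_survival_le hgap hab hT Δ ω (add_nonneg hδ hjδ)
    push_cast at hretreat ⊢
    rw [show ((j : ℝ) + 1) * δ = δ + j * δ by ring]
    refine hstep.trans ?_
    rw [add_one_mul, gridError] at *
    linarith

end TimeGrid

/-! ### Survival behind the front, started from the law behind a single zero -/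

/-- The configuration whose only zero in the box is the origin. -/
def singleZero : BoxConfig a b := fun i => decide (i.1 ≠ 0)

lemma extend_singleZero (ha : a ≤ 0) {x : ℤ} (hx : x ≤ b) :
    extend (singleZero : BoxConfig a b) x = decide (x ≠ 0) := by
  by_cases hmem : x ∈ Finset.Icc a b
  · simp [extend, singleZero, hmem]
  · rw [Finset.mem_Icc, not_and'] at hmem
    have hxa := not_le.1 (hmem hx)
    rw [extend_of_lt hxa, eq_comm, decide_eq_true_iff]
    omega

lemma boxFront_eq_zero (ha : a ≤ 0) (hb : 0 ≤ b) {n : ℕ} {ω : BoxConfig a b}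
    (hω : ∀ x, (x ≤ 0 ∨ 0 + (n : ℤ) < x) →
      extend ω x = extend (singleZero : BoxConfig a b) x) : boxFront ω = 0 := by
  refine front_eq_of_forall_lt ?_ fun x hx => ?_
  · rw [hω 0 (Or.inl le_rfl), extend_singleZero ha hb]
    rfl
  · rw [hω x (Or.inl hx.le), extend_singleZero ha (by omega), decide_eq_true_iff]
    exact hx.ne

section LateTimes

variable {E : EastProcess} (hgap : 0 < gap E) (hab : a ≤ b + 1) {T : ℝ} (hT : 0 ≤ T)
  (k Δ d : ℕ) {δ : ℝ} (hδ : 0 ≤ δ) (J : ℕ)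

include hab hT

lemma survivalBehind_le_add_onesIndicator (x : ℤ) (ω : BoxConfig a b) :
    survivalBehind E.p k T ω ≤
      survivalBehindBefore E.p k T x ω + onesIndicator (x - k - d - 1) d ω := by
  have hp := p_mem_Icc E
  by_cases hlt : boxFront ω + k < x
  · rw [survivalBehindBefore, if_pos hlt]
    linarith [onesIndicator_nonneg (x - k - d - 1) d ω]
  · have hones : onesIndicator (x - k - d - 1) d ω = 1 :=
      if_pos fun z _ hz => extend_of_lt_boxFront hab ω (by omega)
    rw [hones]
    linarith [survivalBehindBefore_nonneg hp k hT x ω, survivalBehind_le_one hp k hT ω]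

include hgap hδ

lemma boxSemigroup_survivalBehind_le (ω : BoxConfig a b) :
    boxSemigroup E.p (J * δ) (survivalBehind E.p k T) ω ≤
      J * gridError E Δ δ T +
        (E.p ^ d + Real.exp (pointCost E.p * (k + d) / 2 - gap E * (J * δ))) +
        (if boxFront ω ≤ a + k + d then 1 else 0) := by
  have hp := p_mem_Icc E
  have hJ : 0 ≤ (J : ℝ) * δ := by positivity
  have hgrid := boxSemigroup_survivalBehindBefore_le hgap hab hT k Δ hδ J ω
  by_cases hfront : boxFront ω ≤ a + k + d
  · have hone := boxSemigroup_le hp (survivalBehind_le_one hp k hT) hJ ω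
    have hgrid0 := mul_nonneg (J.cast_nonneg (α := ℝ)) (gridError_nonneg E Δ δ T)
    have hpow : 0 ≤ E.p ^ d := pow_nonneg hp.1 d
    have hexp := Real.exp_pos (pointCost E.p * (k + d) / 2 - gap E * (J * δ))
    rw [if_pos hfront]
    linarith
  · have hb := boxFront_le hab ω
    have hmono := boxSemigroup_mono hp (g := survivalBehindBefore E.p k T (boxFront ω) +
      onesIndicator (boxFront ω - k - d - 1) d)
      (survivalBehind_le_add_onesIndicator hab hT k d (boxFront ω)) hJ ω
    have hones := boxSemigroup_onesIndicator_le hgap (y := boxFront ω - k - d - 1) (by omega) hJ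
      (d := d) (n := k + d) (by omega) (by push_cast; omega) (ω := ω)
      (by rw [← extend_boxFront hab ω]; push_cast; ring_nf)
    rw [map_add, Pi.add_apply] at hmono
    rw [if_neg hfront, add_zero]
    push_cast at hones
    linarith

lemma blockAvg_boxSemigroup_survivalBehind_le_of_late (ha : a ≤ 0) (hb : 0 ≤ b) (n : ℕ) {s : ℝ}
    (hs : 0 ≤ s) :
    blockAvg E.p 0 n (boxSemigroup E.p (s + J * δ) (survivalBehind E.p k T))
        (singleZero : BoxConfig a b) ≤
      J * gridError E Δ δ T +
        (E.p ^ d + Real.exp (pointCost E.p * (k + d) / 2 - gap E * (J * δ))) +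
        Real.exp (2 * s + a + k + d) := by
  have hp := p_mem_Icc E
  refine blockAvg_le hp fun ω hω => ?_
  have hmono := boxSemigroup_mono hp
    (g := (fun _ => J * gridError E Δ δ T +
      (E.p ^ d + Real.exp (pointCost E.p * (k + d) / 2 - gap E * (J * δ)))) +
      fun η => if boxFront η ≤ a + k + d then 1 else 0)
    (boxSemigroup_survivalBehind_le hgap hab hT k Δ d hδ J) hs ω
  have hretreat := boxSemigroup_boxFront_le_le hab hp hs (-(a + k + d)) ω
  rw [boxFront_eq_zero ha hb hω, zero_sub, neg_neg] at hretreat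
  rw [boxSemigroup_add]
  rw [map_add, Pi.add_apply, boxSemigroup_const] at hmono
  push_cast at hretreat
  rw [show 2 * s - -((a : ℝ) + k + d) = 2 * s + a + k + d by ring] at hretreat
  linarith

end LateTimes

section EarlyTimes

variable {E : EastProcess} (hgap : 0 < gap E) (hab : a ≤ b + 1) {T : ℝ} (hT : 0 ≤ T)
  (k Δ r : ℕ) {δ : ℝ} (hδ : 0 ≤ δ) (J : ℕ)

include hT

lemma survivalBehind_le_add_sum_range (ω : BoxConfig a b) :
    survivalBehind E.p k T ω ≤
      survivalBehindBefore E.p k T 0 ω + (if (r : ℤ) ≤ boxFront ω then 1 else 0) +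
        ∑ y ∈ Finset.range (r + k + 1), survival E.p (y : ℤ) T ω := by
  have hp := p_mem_Icc E
  have hsum : 0 ≤ ∑ y ∈ Finset.range (r + k + 1), survival E.p (y : ℤ) T ω :=
    Finset.sum_nonneg fun y _ => survival_nonneg hp hT ω
  have hbefore := survivalBehindBefore_nonneg hp k hT 0 ω
  have hind : (0 : ℝ) ≤ if (r : ℤ) ≤ boxFront ω then 1 else 0 := by split_ifs <;> norm_num
  by_cases hleft : boxFront ω + k < 0
  · rw [survivalBehindBefore, if_pos hleft]
    linarith
  by_cases hright : (r : ℤ) ≤ boxFront ω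
  · rw [if_pos hright]
    linarith [survivalBehind_le_one hp k hT ω]
  · obtain ⟨m, hm⟩ := Int.eq_ofNat_of_zero_le (a := boxFront ω + k) (by omega)
    have hsingle := Finset.single_le_sum (f := fun y : ℕ => survival E.p (y : ℤ) T ω)
      (s := Finset.range (r + k + 1)) (fun y _ => survival_nonneg hp hT ω)
      (show m ∈ _ by rw [Finset.mem_range]; omega)
    rw [survivalBehind, hm]
    linarith

include hgap hab

lemma blockAvg_boxSemigroup_survival_le_of_le (ha : a ≤ 0) {n y : ℕ} (hb : (n : ℤ) = b)
    (hy : y ≤ n) {u : ℝ} (hu : 0 ≤ u) (ω : BoxConfig a b) :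
    blockAvg E.p 0 n (boxSemigroup E.p u (survival E.p (y : ℤ) T)) ω ≤
      Real.exp (-(killedRate E * T)) := by
  have hp := p_mem_Icc E
  obtain ⟨m, rfl⟩ := Nat.exists_eq_add_of_le hy
  rw [blockAvg_add, blockAvg_of_ignoresSite (n := y), zero_add]
  · exact blockAvg_boxSemigroup_survival_le hgap (by omega) hT hu hab (by exact_mod_cast hb) ω
  · exact fun x _ hx => ignoresSite_boxSemigroup hp
      (fun z hz => ignoresSite_survival hp hT hz) hu (by omega)

include hδ

lemma boxSemigroup_survivalBehind_le_of_boxFront_eq_zero {ω : BoxConfig a b}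
    (hω : boxFront ω = 0) :
    boxSemigroup E.p (J * δ) (survivalBehind E.p k T) ω ≤
      J * gridError E Δ δ T + Real.exp (2 * (J * δ) - r) +
        ∑ y ∈ Finset.range (r + k + 1), boxSemigroup E.p (J * δ) (survival E.p (y : ℤ) T) ω := by
  have hp := p_mem_Icc E
  have hJ : 0 ≤ (J : ℝ) * δ := by positivity
  have hmono := boxSemigroup_mono hp
    (g := (survivalBehindBefore E.p k T 0 + fun η => if (r : ℤ) ≤ boxFront η then 1 else 0) +
      ∑ y ∈ Finset.range (r + k + 1), survival E.p (y : ℤ) T)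
    (fun η => by
      simpa only [Pi.add_apply, Finset.sum_apply] using
        survivalBehind_le_add_sum_range hT k r η) hJ ω
  rw [map_add, map_add, map_sum, Pi.add_apply, Pi.add_apply, Finset.sum_apply] at hmono
  have hgrid := boxSemigroup_survivalBehindBefore_le hgap hab hT k Δ hδ J ω
  have hadvance := boxSemigroup_boxFront_ge_le hab hp hJ r ω
  rw [hω, zero_add] at hadvance
  rw [hω] at hgrid
  push_cast at hadvance
  linarith

lemma blockAvg_boxSemigroup_survivalBehind_le_of_early (ha : a ≤ 0) {n : ℕ} (hb : (n : ℤ) = b)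
    (hr : r + k ≤ n) :
    blockAvg E.p 0 n (boxSemigroup E.p (J * δ) (survivalBehind E.p k T))
        (singleZero : BoxConfig a b) ≤
      J * gridError E Δ δ T + Real.exp (2 * (J * δ) - r) +
        (r + k + 1) * Real.exp (-(killedRate E * T)) := by
  have hp := p_mem_Icc E
  have hJ : 0 ≤ (J : ℝ) * δ := by positivity
  have hmono := blockAvg_mono_at hp (y := 0) (n := n) (ω := (singleZero : BoxConfig a b))
    (g := (fun _ => J * gridError E Δ δ T + Real.exp (2 * (J * δ) - r)) +
      ∑ y ∈ Finset.range (r + k + 1), boxSemigroup E.p (J * δ) (survival E.p (y : ℤ) T))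
    (fun ω hω => by
      simpa only [Pi.add_apply, Finset.sum_apply] using
        boxSemigroup_survivalBehind_le_of_boxFront_eq_zero hgap hab hT k Δ r hδ J
          (boxFront_eq_zero ha (by omega) hω))
  have hsum := Finset.sum_le_card_nsmul (Finset.range (r + k + 1))
    (fun y => blockAvg E.p 0 n (boxSemigroup E.p (J * δ) (survival E.p (y : ℤ) T))
      (singleZero : BoxConfig a b)) _ fun y hy =>
      blockAvg_boxSemigroup_survival_le_of_le hgap hab hT ha hb
        (by rw [Finset.mem_range] at hy; omega) hJ singleZero
  rw [map_add, map_sum, Pi.add_apply, Finset.sum_apply, blockAvg_const] at hmono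
  rw [Finset.card_range, nsmul_eq_mul] at hsum
  push_cast at hsum
  linarith

end EarlyTimes

/-! ### Uniform decay of the survival probability behind the front -/

/-- The bound on `gridError` obtained with `Δ = d / M` and survival time `d / 16`. -/
def gridErrorBound (E : EastProcess) (M d : ℕ) : ℝ :=
  d * Real.exp (-(killedRate E / 32 * d)) + Real.exp (1 - 1 / (2 * M) * d)

section GridErrorBound

variable {E : EastProcess} (hgap : 0 < gap E) {M : ℕ} (hM : 1 ≤ M)
include hgap hM

lemma expSmall_gridErrorBound : ExpSmall (gridErrorBound E M) := by
  have := killedRate_pos hgap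
  have : (0 : ℝ) < M := by exact_mod_cast hM
  exact (ExpSmall.exp_neg (by positivity)).natCast_mul.add (ExpSmall.exp (by positivity) 1)

lemma gridError_le (hκ : 16 * pointCost E.p ≤ killedRate E * M) (d : ℕ) {δ : ℝ}
    (hδ : δ ≤ d / (4 * M)) : gridError E (d / M) δ (d / 16) ≤ gridErrorBound E M d := by
  have hrate := killedRate_pos hgap
  have hM' : (1 : ℝ) ≤ M := by exact_mod_cast hM
  have hd : (0 : ℝ) ≤ d := d.cast_nonneg
  have hfloor_le : ((d / M : ℕ) : ℝ) ≤ d / M := Nat.cast_div_le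
  have hle_floor : (d : ℝ) / M - 1 ≤ ((d / M : ℕ) : ℝ) := by
    have : (d : ℝ) < M * (((d / M : ℕ) : ℝ) + 1) := by exact_mod_cast Nat.lt_mul_div_succ d hM
    rw [sub_le_iff_le_add, div_le_iff₀ (by positivity)]
    linarith
  have hcost : pointCost E.p * ((d / M : ℕ) : ℝ) ≤ killedRate E * d / 16 := by
    calc pointCost E.p * ((d / M : ℕ) : ℝ) ≤ (killedRate E * M / 16) * (d / M) := by
          gcongr
          linarith
      _ = killedRate E * d / 16 := by field_simp
  have hδ' : δ ≤ d / M / 4 := hδ.trans_eq (by field_simp)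
  have hhalf : 1 / (2 * (M : ℝ)) * d = d / M / 2 := by field_simp
  have hdM : (d : ℝ) / M ≤ d := div_le_self hd hM'
  refine add_le_add (mul_le_mul (by linarith) (Real.exp_le_exp.2 (by linarith))
    (Real.exp_pos _).le hd) (Real.exp_le_exp.2 ?_)
  rw [hhalf]
  linarith

end GridErrorBound

section Uniform

variable {E : EastProcess} (hgap : 0 < gap E) {M N d k : ℕ} (hM : 1 ≤ M)
  (hκM : 16 * pointCost E.p ≤ killedRate E * M) (hk : k ≤ 2 * d) (ha : a ≤ 0) {n : ℕ}
  (hb : (n : ℤ) = b) {s : ℝ}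
include hgap hM hκM hk ha hb

lemma blockAvg_survivalBehind_le_of_late (hκN : 1 + 2 * pointCost E.p ≤ gap E * N)
    (hs : N * d ≤ s) (hsa : 66 * (s + d / 16) ≤ -a) :
    blockAvg E.p 0 n (boxSemigroup E.p s (survivalBehind E.p k (d / 16)))
        (singleZero : BoxConfig a b) ≤
      (4 * N * M : ℕ) * gridErrorBound E M d + (E.p ^ d + 2 * Real.exp (-(1 * d))) := by
  have : (1 : ℝ) ≤ M := by exact_mod_cast hM
  have hκ := pointCost_nonneg (p_mem_Icc E)
  have hk' : (k : ℝ) ≤ 2 * d := by exact_mod_cast hk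
  have hsteps : ((4 * N * M : ℕ) : ℝ) * ((d : ℝ) / (4 * M)) = N * d := by push_cast; field_simp
  have hlate := blockAvg_boxSemigroup_survivalBehind_le_of_late hgap (b := b) (by omega)
    (by positivity : (0 : ℝ) ≤ d / 16) k (d / M) d (by positivity : (0 : ℝ) ≤ d / (4 * M))
    (4 * N * M) ha (by omega) n (sub_nonneg.2 hs)
  rw [hsteps, sub_add_cancel] at hlate
  have hgrid := mul_le_mul_of_nonneg_left (gridError_le hgap hM hκM d le_rfl)
    (Nat.cast_nonneg (α := ℝ) (4 * N * M))
  have hrelax : Real.exp (pointCost E.p * (k + d) / 2 - gap E * (N * d)) ≤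
      Real.exp (-(1 * d)) := by
    have : pointCost E.p * (k + d) ≤ pointCost E.p * (3 * d) := by gcongr; linarith
    exact Real.exp_le_exp.2 (by nlinarith [d.cast_nonneg (α := ℝ)])
  have hretreat : Real.exp (2 * (s - N * d) + a + k + d) ≤ Real.exp (-(1 * d)) := by
    have : 0 ≤ (N : ℝ) * d := by positivity
    exact Real.exp_le_exp.2 (by linarith)
  linarith

lemma blockAvg_survivalBehind_le_of_early (hN : 1 ≤ N) (hs0 : 0 ≤ s) (hs : s ≤ N * d)
    (hsn : (2 * N + 3) * 16 * (s + d / 16) ≤ n) :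
    blockAvg E.p 0 n (boxSemigroup E.p s (survivalBehind E.p k (d / 16)))
        (singleZero : BoxConfig a b) ≤
      (4 * N * M : ℕ) * gridErrorBound E M d + Real.exp (-(1 * d)) +
        ((2 * N + 3) * (d * Real.exp (-(killedRate E / 16 * d))) +
          Real.exp (-(killedRate E / 16 * d))) := by
  have : (1 : ℝ) ≤ M := by exact_mod_cast hM
  have : (1 : ℝ) ≤ N := by exact_mod_cast hN
  have hk' : (k : ℝ) ≤ 2 * d := by exact_mod_cast hk
  have hJ : (0 : ℝ) < (4 * N * M : ℕ) := by push_cast; positivity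
  have hadvance : (2 * N + 1) * d + k ≤ n := by
    have : (0 : ℝ) ≤ (2 * N + 3) * 16 * s := by positivity
    have : (((2 * N + 1) * d + k : ℕ) : ℝ) ≤ n := by push_cast; linarith
    exact_mod_cast this
  have hearly := blockAvg_boxSemigroup_survivalBehind_le_of_early hgap (by omega)
    (by positivity : (0 : ℝ) ≤ d / 16) k (d / M) ((2 * N + 1) * d)
    (by positivity : 0 ≤ s / (4 * N * M : ℕ)) (4 * N * M) ha hb hadvance
  rw [mul_div_cancel₀ _ hJ.ne'] at hearly
  have hgrid := mul_le_mul_of_nonneg_left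
    (gridError_le hgap hM hκM d (δ := s / (4 * N * M : ℕ)) (by
      rw [div_le_div_iff₀ hJ (by positivity)]
      push_cast
      linarith [mul_le_mul_of_nonneg_right hs (show (0 : ℝ) ≤ 4 * M by positivity)])) hJ.le
  have hfar : Real.exp (2 * s - ((2 * N + 1) * d : ℕ)) ≤ Real.exp (-(1 * d)) :=
    Real.exp_le_exp.2 (by push_cast; linarith)
  have hsum := mul_le_mul_of_nonneg_right hk' (Real.exp_nonneg (-(killedRate E / 16 * d)))
  rw [show killedRate E * ((d : ℝ) / 16) = killedRate E / 16 * d by ring] at hearly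
  push_cast at hearly hfar hgrid ⊢
  linarith

end Uniform

lemma exists_blockAvg_survivalBehind_le {E : EastProcess} (hgap : 0 < gap E) :
    ∃ ε > 0, ∃ K : ℝ, 0 ≤ K ∧ ∃ C : ℝ, ∀ (a b : ℤ) (n d k : ℕ) (s : ℝ), a ≤ 0 → (n : ℤ) = b →
      k ≤ 2 * d → 0 ≤ s → C * (s + d / 16) ≤ -a → C * (s + d / 16) ≤ n →
      blockAvg E.p 0 n (boxSemigroup E.p s (survivalBehind E.p k (d / 16)))
        (singleZero : BoxConfig a b) ≤ K * Real.exp (-ε * d) := by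
  have hrate := killedRate_pos hgap
  obtain ⟨N, hN⟩ := exists_nat_ge (max 1 ((1 + 2 * pointCost E.p) / gap E))
  obtain ⟨M, hM⟩ := exists_nat_ge (max 1 (16 * pointCost E.p / killedRate E))
  rw [max_le_iff, div_le_iff₀' hgap, Nat.one_le_cast] at hN
  rw [max_le_iff, div_le_iff₀' hrate, Nat.one_le_cast] at hM
  have hexp : ExpSmall fun d => Real.exp (-(killedRate E / 16 * d)) :=
    ExpSmall.exp_neg (by positivity)
  obtain ⟨ε, hε, K, hK, hB⟩ :=
    (((expSmall_gridErrorBound hgap hM.1).const_mul (4 * N * M : ℕ).cast_nonneg).add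
      ((ExpSmall.pow E.hp0 E.hp1).add ((ExpSmall.exp_neg one_pos).const_mul zero_le_two))).add
    ((hexp.natCast_mul.const_mul (by positivity : (0 : ℝ) ≤ 2 * N + 3)).add hexp)
  refine ⟨ε, hε, K, hK, max 66 ((2 * N + 3) * 16), fun a b n d k s ha hb hk hs hsa hsn =>
    le_trans ?_ (hB d)⟩
  have hst : 0 ≤ s + (d : ℝ) / 16 := by positivity
  rcases le_total (N * d : ℝ) s with hcase | hcase
  · refine (blockAvg_survivalBehind_le_of_late hgap hM.1 hM.2 hk ha hb hN.2 hcase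
      ((mul_le_mul_of_nonneg_right (le_max_left _ _) hst).trans hsa)).trans ?_
    exact le_add_of_nonneg_right (by positivity)
  · refine (blockAvg_survivalBehind_le_of_early hgap hM.1 hM.2 hk ha hb hN.1 hs hcase
      ((mul_le_mul_of_nonneg_right (le_max_right _ _) hst).trans hsn)).trans ?_
    have := pow_nonneg E.hp0.le d
    have := Real.exp_pos (-(1 * (d : ℝ)))
    linarith

/-! ### Observables attached to the front -/

/-- The observable obtained by evaluating `g z` at the position `z` of the front. -/
def atFront (g : ℤ → BoxConfig a b → ℝ) (ω : BoxConfig a b) : ℝ := g (boxFront ω) ω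

/-- The indicator of the event that the front is at `z`. -/
def frontIndicator (z : ℤ) (ω : BoxConfig a b) : ℝ := if boxFront ω = z then 1 else 0

lemma abs_frontIndicator_le_one (z : ℤ) (ω : BoxConfig a b) : |frontIndicator z ω| ≤ 1 := by
  unfold frontIndicator
  split_ifs <;> simp

lemma ignoresSite_frontIndicator (hab : a ≤ b + 1) {z x : ℤ} (hx : z < x) :
    IgnoresSite x (frontIndicator z : BoxConfig a b → ℝ) := by
  intro ω c
  have hiff : boxFront (setSite x c ω) = z ↔ boxFront ω = z := by
    rw [boxFront_eq_iff hab, boxFront_eq_iff hab, extend_setSite_of_ne hx.ne]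
    refine and_congr_right fun _ => forall₂_congr fun y hy => ?_
    rw [extend_setSite_of_ne (hy.trans hx).ne]
  simp only [frontIndicator, hiff]

lemma sum_frontIndicator_mul_apply (I : Finset ℤ) (g : ℤ → BoxConfig a b → ℝ)
    (ω : BoxConfig a b) : (∑ z ∈ I, frontIndicator z * g z : BoxConfig a b → ℝ) ω =
      if boxFront ω ∈ I then atFront g ω else 0 := by
  simp only [Finset.sum_apply, Pi.mul_apply, frontIndicator, ite_mul, one_mul, zero_mul,
    Finset.sum_ite_eq, atFront]

lemma abs_atFront_sub_sum_le {c : ℝ} {g : ℤ → BoxConfig a b → ℝ} (hgc : ∀ z ω, |g z ω| ≤ c)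
    (x : ℤ) (h : ℕ) (ω : BoxConfig a b) :
    |(atFront g - ∑ z ∈ Finset.Icc (x - h) (x + h), frontIndicator z * g z) ω| ≤
      c * ((if x + (h + 1 : ℕ) ≤ boxFront ω then 1 else 0) +
        if boxFront ω ≤ x - (h + 1 : ℕ) then 1 else 0) := by
  have hc : 0 ≤ c := (abs_nonneg _).trans (hgc 0 ω)
  rw [Pi.sub_apply, sum_frontIndicator_mul_apply]
  by_cases hmem : boxFront ω ∈ Finset.Icc (x - h) (x + h)
  · rw [if_pos hmem, sub_self, abs_zero]
    positivity
  rw [if_neg hmem, sub_zero]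
  refine (hgc _ ω).trans (le_mul_of_one_le_right hc ?_)
  rw [Finset.mem_Icc] at hmem
  push_cast
  split_ifs <;> first | omega | norm_num

lemma abs_boxSemigroup_le_boxSemigroup {p : ℝ} (hp : p ∈ Set.Icc (0 : ℝ) 1)
    {F U : BoxConfig a b → ℝ} (hFU : ∀ ω, |F ω| ≤ U ω) {t : ℝ} (ht : 0 ≤ t) (ω : BoxConfig a b) :
    |boxSemigroup p t F ω| ≤ boxSemigroup p t U ω := by
  have hneg := boxSemigroup_mono hp (f := -F) (fun η => (neg_le_abs _).trans (hFU η)) ht ω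
  rw [map_neg, Pi.neg_apply] at hneg
  exact abs_le.2 ⟨by linarith, boxSemigroup_mono hp (fun η => (le_abs_self _).trans (hFU η)) ht ω⟩

/-- The cost of replacing an observable attached to the front, at distance `d`, by a sum of
products over the positions of the front at distance at most `d / 2` from the initial one. -/
def decouplingError (d : ℕ) : ℝ :=
  4 * Real.exp (-(3 / 8 * d)) + 2 * ((d + 1) * Real.exp (-(1 * d)))

lemma expSmall_decouplingError : ExpSmall decouplingError := by
  have hexp : ExpSmall fun d => Real.exp (-(1 * d)) := ExpSmall.exp_neg one_pos
  refine (((ExpSmall.exp_neg (by norm_num : (0 : ℝ) < 3 / 8)).const_mul zero_le_four).add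
    ((hexp.natCast_mul.add hexp).const_mul zero_le_two)).mono fun d => le_of_eq ?_
  unfold decouplingError
  ring

section Decoupling

variable {p : ℝ} (hp : p ∈ Set.Icc (0 : ℝ) 1) (hab : a ≤ b + 1) {d : ℕ}
  {g : ℤ → BoxConfig a b → ℝ} (hgc : ∀ z ω, |g z ω| ≤ 2) {t : ℝ} (ht : 0 ≤ t)
  (htd : t ≤ d / 16)
include hp hab hgc ht htd

lemma abs_boxSemigroup_atFront_sub_sum_le (ω : BoxConfig a b) :
    |boxSemigroup p t (atFront g) ω - ∑ z ∈ Finset.Icc (boxFront ω - (d / 2 : ℕ))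
        (boxFront ω + (d / 2 : ℕ)), boxSemigroup p t (frontIndicator z * g z) ω| ≤
      4 * Real.exp (-(3 / 8 * d)) := by
  have hhalf : (d : ℝ) ≤ 2 * ((d / 2 : ℕ) + 1) := by
    have : d ≤ 2 * (d / 2 + 1) := by omega
    exact_mod_cast this
  have htail : Real.exp (2 * t - ((d / 2 + 1 : ℕ) : ℤ)) ≤ Real.exp (-(3 / 8 * d)) :=
    Real.exp_le_exp.2 (by
      rw [Int.cast_natCast, Nat.cast_add_one]
      linarith)
  have hbound := abs_boxSemigroup_le_boxSemigroup hp
    (abs_atFront_sub_sum_le hgc (boxFront ω) (d / 2)) ht ω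
  rw [map_sub, map_sum, Pi.sub_apply, Finset.sum_apply] at hbound
  refine hbound.trans ?_
  rw [show (fun η : BoxConfig a b => (2 : ℝ) *
      ((if boxFront ω + (d / 2 + 1 : ℕ) ≤ boxFront η then 1 else 0) +
        if boxFront η ≤ boxFront ω - (d / 2 + 1 : ℕ) then 1 else 0)) =
      (2 : ℝ) • ((fun η => if boxFront ω + (d / 2 + 1 : ℕ) ≤ boxFront η then 1 else 0) +
        fun η => if boxFront η ≤ boxFront ω - (d / 2 + 1 : ℕ) then 1 else 0) from rfl,
    map_smul, map_add, Pi.smul_apply, Pi.add_apply, smul_eq_mul]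
  linarith [boxSemigroup_boxFront_ge_le hab hp ht (d / 2 + 1 : ℕ) ω,
    boxSemigroup_boxFront_le_le hab hp ht (d / 2 + 1 : ℕ) ω]

lemma abs_boxSemigroup_atFront_sub_sum_mul_le
    (hg : ∀ z x : ℤ, x < z + d → IgnoresSite x (g z)) (ω : BoxConfig a b) :
    |boxSemigroup p t (atFront g) ω -
        ∑ z ∈ Finset.Icc (boxFront ω - (d / 2 : ℕ)) (boxFront ω + (d / 2 : ℕ)),
          boxSemigroup p t (frontIndicator z) ω * boxSemigroup p t (g z) ω| ≤
      decouplingError d := by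
  set I := Finset.Icc (boxFront ω - (d / 2 : ℕ)) (boxFront ω + (d / 2 : ℕ))
  have hcard : (I.card : ℝ) ≤ d + 1 := by
    have : I.card ≤ d + 1 := by rw [Int.card_Icc]; omega
    exact_mod_cast this
  have hproduct : ∀ z ∈ I, |boxSemigroup p t (frontIndicator z * g z) ω -
      boxSemigroup p t (frontIndicator z) ω * boxSemigroup p t (g z) ω| ≤
        2 * Real.exp (-(1 * d)) := by
    intro z _
    refine (abs_boxSemigroup_mul_sub_le hp (y := z + d) (by omega)
      (fun x hx => ignoresSite_frontIndicator hab hx) (abs_frontIndicator_le_one z) (hg z) (hgc z)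
      ht ω).trans ?_
    gcongr
    push_cast
    linarith
  have hsum : |∑ z ∈ I, boxSemigroup p t (frontIndicator z * g z) ω -
      ∑ z ∈ I, boxSemigroup p t (frontIndicator z) ω * boxSemigroup p t (g z) ω| ≤
        (d + 1) * (2 * Real.exp (-(1 * d))) := by
    rw [← Finset.sum_sub_distrib]
    refine (Finset.abs_sum_le_sum_abs _ _).trans
      ((Finset.sum_le_card_nsmul _ _ _ hproduct).trans ?_)
    rw [nsmul_eq_mul]
    gcongr
  have htriangle := (abs_sub_le _ _ _).trans
    (add_le_add (abs_boxSemigroup_atFront_sub_sum_le hp hab hgc ht htd ω) hsum)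
  unfold decouplingError
  linarith

end Decoupling

/-! ### Zero-mean observables attached to the front -/

section ZeroMeanAtFront

variable {p : ℝ} (hp : p ∈ Set.Icc (0 : ℝ) 1)
include hp

lemma abs_blockAvg_mul_boxSemigroup_le {n : ℕ} (hb : (n : ℤ) = b) {d : ℕ} {z : ℤ}
    (hz : 1 ≤ z + d) {g : BoxConfig a b → ℝ} (hg : ∀ x < z + d, IgnoresSite x g)
    (h0 : siteAvg p (z + d) g = 0) (hgc : ∀ ω, |g ω| ≤ 2) {t : ℝ} (ht : 0 ≤ t)
    (htd : t ≤ d / 16) (ω : BoxConfig a b) :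
    |blockAvg p 0 n (boxSemigroup p t (frontIndicator z) * boxSemigroup p t g) ω| ≤
      4 * Real.exp (-(1 * d)) := by
  have hmean := siteAvg_boxSemigroup_eq_zero hp hg h0 ht
  set u : BoxConfig a b → ℝ := boxSemigroup p t (frontIndicator z)
  set v := boxSemigroup p t g
  by_cases hzb : z + d ∈ Finset.Icc a b
  swap
  · rw [(ignoresSite_of_notMem hzb v).siteAvg_eq] at hmean
    rw [hmean, mul_zero, map_zero, Pi.zero_apply, abs_zero]
    positivity
  have hab : a ≤ b + 1 := by rw [Finset.mem_Icc] at hzb; omega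
  have hcentred : siteAvg p (z + d) (u * v) =
      siteAvg p (z + d) ((u - siteAvg p (z + d) u) * v) := by
    rw [sub_mul, map_sub, (ignoresSite_siteAvg p (z + d) u).siteAvg_mul, hmean, mul_zero, sub_zero]
  rw [← blockAvg_siteAvg_of_mem (x := z + d) (by omega) (by rw [Finset.mem_Icc] at hzb; omega),
    hcentred]
  refine abs_blockAvg_le hp fun η => abs_siteAvg_le hp fun e => ?_
  set σ := setSite (z + d) e η
  have hspeed : |u σ - siteAvg p (z + d) u σ| ≤ 2 * Real.exp (-(1 * d)) := by
    refine (abs_boxSemigroup_sub_siteAvg_le_exp hp (by omega)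
      (fun x hx => ignoresSite_frontIndicator hab hx) (abs_frontIndicator_le_one z) ht _).trans ?_
    rw [mul_one]
    gcongr
    push_cast
    linarith
  calc |(u σ - siteAvg p (z + d) u σ) * v σ|
      = |u σ - siteAvg p (z + d) u σ| * |v σ| := abs_mul _ _
    _ ≤ 2 * Real.exp (-(1 * d)) * 2 := by
        gcongr
        exact abs_boxSemigroup_le hp hgc ht σ
    _ = 4 * Real.exp (-(1 * d)) := by ring

variable (ha : a ≤ 0) {n d : ℕ} (hb : (n : ℤ) = b) {g : ℤ → BoxConfig a b → ℝ}
  (hg : ∀ z x : ℤ, x < z + d → IgnoresSite x (g z)) (h0 : ∀ z : ℤ, siteAvg p (z + d) (g z) = 0)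
  (hgc : ∀ z ω, |g z ω| ≤ 2)
include ha hb hg h0 hgc

lemma abs_blockAvg_boxSemigroup_atFront_le_of_early (hd : 1 ≤ d) {t : ℝ} (ht : 0 ≤ t)
    (htd : t ≤ d / 16) :
    |blockAvg p 0 n (boxSemigroup p t (atFront g)) (singleZero : BoxConfig a b)| ≤
      decouplingError d + (d + 1) * (4 * Real.exp (-(1 * d))) := by
  set I := Finset.Icc (0 - ((d / 2 : ℕ) : ℤ)) (0 + ((d / 2 : ℕ) : ℤ)) with hI
  set S := ∑ z ∈ I, boxSemigroup p t (frontIndicator z) * boxSemigroup p t (g z) with hS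
  have hcard : (I.card : ℝ) ≤ d + 1 := by
    have : I.card ≤ d + 1 := by rw [Int.card_Icc]; omega
    exact_mod_cast this
  have hdecoupled : |blockAvg p 0 n (boxSemigroup p t (atFront g) - S) singleZero| ≤
      decouplingError d := by
    refine (abs_blockAvg_le_blockAvg_abs hp).trans (blockAvg_le hp fun ω hω => ?_)
    have hpoint := abs_boxSemigroup_atFront_sub_sum_mul_le hp (by omega) hgc ht htd hg ω
    rw [boxFront_eq_zero ha (by omega) hω] at hpoint
    simpa only [hS, Pi.sub_apply, Finset.sum_apply, Pi.mul_apply] using hpoint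
  have hsum : |blockAvg p 0 n S singleZero| ≤ (d + 1) * (4 * Real.exp (-(1 * d))) := by
    rw [map_sum, Finset.sum_apply]
    refine (Finset.abs_sum_le_sum_abs _ _).trans ((Finset.sum_le_card_nsmul _ _ _ fun z hz =>
      abs_blockAvg_mul_boxSemigroup_le hp hb (d := d) ?_ (hg z) (h0 z) (hgc z) ht htd _).trans ?_)
    · rw [hI, Finset.mem_Icc] at hz
      omega
    · rw [nsmul_eq_mul]
      gcongr
  rw [map_sub, Pi.sub_apply] at hdecoupled
  rw [abs_le] at hdecoupled hsum ⊢
  constructor <;> linarith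

omit ha hb in
lemma abs_boxSemigroup_atFront_le_sum_survivalBehind (ω : BoxConfig a b) (hab : a ≤ b + 1) :
    |boxSemigroup p (d / 16) (atFront g) ω| ≤ decouplingError d +
      2 * ∑ k ∈ Finset.Icc (d - d / 2) (d + d / 2), survivalBehind p k (d / 16) ω := by
  have hT : (0 : ℝ) ≤ d / 16 := by positivity
  set I := Finset.Icc (boxFront ω - (d / 2 : ℕ)) (boxFront ω + (d / 2 : ℕ)) with hI
  have hterm : ∀ z ∈ I, |boxSemigroup p (d / 16) (frontIndicator z) ω *
      boxSemigroup p (d / 16) (g z) ω| ≤ 2 * survival p (z + d) (d / 16) ω := by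
    intro z _
    rw [abs_mul]
    exact (mul_le_of_le_one_left (abs_nonneg _)
      (abs_boxSemigroup_le hp (abs_frontIndicator_le_one z) hT ω)).trans
        (abs_boxSemigroup_le_mul_survival hp (hg z) (h0 z) hT (hgc z) ω)
  have hreindex : ∑ z ∈ I, 2 * survival p (z + d) (d / 16) ω =
      2 * ∑ k ∈ Finset.Icc (d - d / 2) (d + d / 2), survivalBehind p k (d / 16) ω := by
    rw [← Finset.mul_sum]
    congr 1
    refine Finset.sum_bij' (fun z _ => (z + d - boxFront ω).toNat)
      (fun k _ => boxFront ω + (k : ℤ) - d) ?_ ?_ ?_ ?_ ?_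
    all_goals
      intro i hi
      simp only [hI, Finset.mem_Icc] at hi ⊢
    iterate 4 omega
    · rw [survivalBehind, Int.toNat_of_nonneg (by omega), add_sub_cancel]
  have hsum := ((Finset.abs_sum_le_sum_abs _ _).trans (Finset.sum_le_sum hterm)).trans_eq hreindex
  have hdecoupled := abs_boxSemigroup_atFront_sub_sum_mul_le hp hab hgc hT le_rfl hg ω
  rw [abs_le] at hsum hdecoupled ⊢
  constructor <;> linarith

lemma abs_blockAvg_boxSemigroup_atFront_le_of_late {s B : ℝ} (hs : 0 ≤ s)
    (hB : ∀ k ≤ 2 * d, blockAvg p 0 n (boxSemigroup p s (survivalBehind p k (d / 16)))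
      (singleZero : BoxConfig a b) ≤ B) :
    |blockAvg p 0 n (boxSemigroup p (s + d / 16) (atFront g)) (singleZero : BoxConfig a b)| ≤
      decouplingError d + 2 * ((d + 1) * B) := by
  have hB0 : 0 ≤ B := (blockAvg_nonneg hp fun ω =>
    boxSemigroup_nonneg hp (survivalBehind_nonneg hp 0 (by positivity)) hs ω).trans
      (hB 0 (Nat.zero_le _))
  set I := Finset.Icc (d - d / 2) (d + d / 2) with hI
  have hcard : (I.card : ℝ) ≤ d + 1 := by
    have : I.card ≤ d + 1 := by rw [Nat.card_Icc]; omega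
    exact_mod_cast this
  have hpoint : ∀ ω : BoxConfig a b, |boxSemigroup p (s + d / 16) (atFront g) ω| ≤
      ((fun _ => decouplingError d) + (2 : ℝ) •
        ∑ k ∈ I, boxSemigroup p s (survivalBehind p k (d / 16)) : BoxConfig a b → ℝ) ω := by
    intro ω
    have hevolved := abs_boxSemigroup_le_boxSemigroup hp (F := boxSemigroup p (d / 16) (atFront g))
      (U := (fun _ => decouplingError d) + (2 : ℝ) • ∑ k ∈ I, survivalBehind p k (d / 16))
      (fun η => by
        simpa only [Pi.add_apply, Pi.smul_apply, Finset.sum_apply, smul_eq_mul] using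
          abs_boxSemigroup_atFront_le_sum_survivalBehind hp hg h0 hgc η (by omega)) hs ω
    rwa [← boxSemigroup_add, map_add, map_smul, map_sum, Pi.add_apply, boxSemigroup_const]
      at hevolved
  refine (abs_blockAvg_le_blockAvg_abs hp).trans ((blockAvg_mono hp hpoint).trans ?_)
  rw [map_add, map_smul, map_sum, Pi.add_apply, blockAvg_const, Pi.smul_apply, Finset.sum_apply,
    smul_eq_mul]
  gcongr
  refine (Finset.sum_le_card_nsmul _ _ B fun k hk => hB k ?_).trans ?_
  · rw [hI, Finset.mem_Icc] at hk
    omega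
  · rw [nsmul_eq_mul]
    gcongr

end ZeroMeanAtFront

lemma exists_abs_blockAvg_boxSemigroup_atFront_le {E : EastProcess} (hgap : 0 < gap E) :
    ∃ ε > 0, ∃ K : ℝ, 0 ≤ K ∧ ∃ C : ℝ, ∀ (a b : ℤ) (n d : ℕ) (t : ℝ)
      (g : ℤ → BoxConfig a b → ℝ), a ≤ 0 → (n : ℤ) = b → 1 ≤ d → 0 ≤ t → C * t ≤ -a → C * t ≤ n →
      (∀ z x : ℤ, x < z + d → IgnoresSite x (g z)) → (∀ z : ℤ, siteAvg E.p (z + d) (g z) = 0) →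
      (∀ z ω, |g z ω| ≤ 2) →
      |blockAvg E.p 0 n (boxSemigroup E.p t (atFront g)) singleZero| ≤ K * Real.exp (-ε * d) := by
  have hp := p_mem_Icc E
  obtain ⟨ε₀, hε₀, K₀, hK₀, C, hsurvival⟩ := exists_blockAvg_survivalBehind_le hgap
  have hexp : ExpSmall fun d => Real.exp (-(1 * d)) := ExpSmall.exp_neg one_pos
  have hrate : ExpSmall fun d => K₀ * Real.exp (-ε₀ * d) := ⟨ε₀, hε₀, K₀, hK₀, fun d => le_rfl⟩
  obtain ⟨ε, hε, K, hK, hbound⟩ := (expSmall_decouplingError.add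
    ((hexp.natCast_mul.add hexp).const_mul zero_le_four)).add
      ((hrate.natCast_mul.add hrate).const_mul zero_le_two)
  refine ⟨ε, hε, K, hK, C, fun a b n d t g ha hb hd ht hCa hCn hg h0 hgc =>
    le_trans ?_ (hbound d)⟩
  have hB : 0 ≤ K₀ * Real.exp (-ε₀ * d) := by positivity
  have hexp_pos := Real.exp_pos (-(1 * (d : ℝ)))
  rcases le_or_gt t (d / 16) with htd | htd
  · have := abs_blockAvg_boxSemigroup_atFront_le_of_early hp ha hb hg h0 hgc hd ht htd
    have : 0 ≤ d * (K₀ * Real.exp (-ε₀ * d)) := by positivity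
    linarith
  · have hlate := abs_blockAvg_boxSemigroup_atFront_le_of_late hp ha hb hg h0 hgc
      (sub_nonneg.2 htd.le) fun k hk => hsurvival a b n d k (t - d / 16) ha hb hk
        (sub_nonneg.2 htd.le) (by rwa [sub_add_cancel]) (by rwa [sub_add_cancel])
    rw [sub_add_cancel] at hlate
    have : 0 ≤ d * Real.exp (-(1 * (d : ℝ))) := by positivity
    linarith

/-! ### Telescoping over resampled sites -/

lemma sum_exp_neg_mul_add_le {ε : ℝ} (hε : 0 < ε) (L m : ℕ) :
    ∑ i ∈ Finset.range m, Real.exp (-ε * (L + i + 1 : ℕ)) ≤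
      (1 - Real.exp (-ε))⁻¹ * Real.exp (-ε * L) := by
  have hr : Real.exp (-ε) < 1 := Real.exp_lt_one_iff.2 (neg_lt_zero.2 hε)
  calc ∑ i ∈ Finset.range m, Real.exp (-ε * (L + i + 1 : ℕ))
      ≤ ∑ i ∈ Finset.range m, Real.exp (-ε) ^ i * Real.exp (-ε * L) := by
        refine Finset.sum_le_sum fun i _ => ?_
        rw [← Real.exp_nat_mul, ← Real.exp_add, Real.exp_le_exp]
        push_cast
        linarith
    _ ≤ (1 - Real.exp (-ε))⁻¹ * Real.exp (-ε * L) := by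
        rw [← Finset.sum_mul, ← tsum_geometric_of_lt_one (Real.exp_nonneg _) hr]
        gcongr
        exact (summable_geometric_of_lt_one (Real.exp_nonneg _) hr).sum_le_tsum _
          fun _ _ => by positivity

/-- The effect on `G z` of resampling the site `z + L + i + 1`, once the sites between `z + L` and
this one have been resampled. -/
def resamplingIncrement (p : ℝ) (L : ℕ) (G : ℤ → BoxConfig a b → ℝ) (i : ℕ) (z : ℤ) :
    BoxConfig a b → ℝ :=
  blockAvg p (z + L) i (G z) - blockAvg p (z + L) (i + 1) (G z)

section Increment

variable {p : ℝ} {L : ℕ} {G : ℤ → BoxConfig a b → ℝ} (i : ℕ) (z : ℤ)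

lemma sum_atFront_resamplingIncrement (p : ℝ) (L m : ℕ) (G : ℤ → BoxConfig a b → ℝ) :
    ∑ i ∈ Finset.range m, atFront (resamplingIncrement p L G i) =
      atFront G - atFront fun z => blockAvg p (z + L) m (G z) := by
  funext ω
  simp only [Finset.sum_apply, atFront, resamplingIncrement, Pi.sub_apply]
  rw [Finset.sum_range_sub' fun i => blockAvg p (boxFront ω + L) i (G (boxFront ω)) ω,
    blockAvg_zero]

lemma ignoresSite_resamplingIncrement (hG : ∀ z x : ℤ, x ≤ z + L → IgnoresSite x (G z)) {x : ℤ}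
    (hx : x < z + (L + i + 1 : ℕ)) : IgnoresSite x (resamplingIncrement p L G i z) := by
  have hblock : IgnoresSite x (blockAvg p (z + L) i (G z)) := by
    by_cases hxL : x ≤ z + L
    · exact (hG z x hxL).blockAvg p _ _
    · exact ignoresSite_blockAvg (by omega) (by push_cast at hx; omega) _
  intro ω c
  rw [resamplingIncrement, Pi.sub_apply, Pi.sub_apply, blockAvg_succ, hblock,
    hblock.siteAvg]

lemma siteAvg_resamplingIncrement :
    siteAvg p (z + (L + i + 1 : ℕ)) (resamplingIncrement p L G i z) = 0 := by
  rw [show z + ((L + i + 1 : ℕ) : ℤ) = z + L + i + 1 by push_cast; ring, resamplingIncrement,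
    blockAvg_succ, map_sub, (ignoresSite_siteAvg p _ _).siteAvg_eq, sub_self]

lemma abs_resamplingIncrement_le (hp : p ∈ Set.Icc (0 : ℝ) 1) (hG : ∀ z ω, |G z ω| ≤ 1)
    (ω : BoxConfig a b) : |resamplingIncrement p L G i z ω| ≤ 2 :=
  (abs_sub _ _).trans ((add_le_add (abs_blockAvg_le hp (hG z)) (abs_blockAvg_le hp (hG z))).trans_eq
    one_add_one_eq_two)

end Increment

lemma exists_abs_blockAvg_boxSemigroup_sub_le {E : EastProcess} (hgap : 0 < gap E) :
    ∃ ε > 0, ∃ K : ℝ, 0 ≤ K ∧ ∃ C : ℝ, ∀ (a b : ℤ) (n L m : ℕ) (t : ℝ)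
      (G : ℤ → BoxConfig a b → ℝ), a ≤ 0 → (n : ℤ) = b → 0 ≤ t → C * t ≤ -a → C * t ≤ n →
      (∀ z x : ℤ, x ≤ z + L → IgnoresSite x (G z)) → (∀ z ω, |G z ω| ≤ 1) →
      |blockAvg E.p 0 n (boxSemigroup E.p t
        (atFront G - atFront fun z => blockAvg E.p (z + L) m (G z))) singleZero| ≤
        K * Real.exp (-ε * L) := by
  obtain ⟨ε, hε, K, hK, C, hincrement⟩ := exists_abs_blockAvg_boxSemigroup_atFront_le hgap
  have hr : 0 ≤ (1 - Real.exp (-ε))⁻¹ :=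
    inv_nonneg.2 (sub_nonneg.2 (Real.exp_lt_one_iff.2 (neg_lt_zero.2 hε)).le)
  refine ⟨ε, hε, K * (1 - Real.exp (-ε))⁻¹, mul_nonneg hK hr, C,
    fun a b n L m t G ha hb ht hCa hCn hG hG1 => ?_⟩
  rw [← sum_atFront_resamplingIncrement, map_sum, map_sum, Finset.sum_apply]
  calc _ ≤ ∑ i ∈ Finset.range m, K * Real.exp (-ε * (L + i + 1 : ℕ)) :=
        (Finset.abs_sum_le_sum_abs _ _).trans <| Finset.sum_le_sum fun i _ =>
          hincrement a b n (L + i + 1) t _ ha hb (by omega) ht hCa hCn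
            (fun z x => ignoresSite_resamplingIncrement i z hG)
            (fun z => siteAvg_resamplingIncrement i z)
            (fun z => abs_resamplingIncrement_le i z (p_mem_Icc E) hG1)
    _ ≤ K * (1 - Real.exp (-ε))⁻¹ * Real.exp (-ε * L) := by
        rw [← Finset.mul_sum, mul_assoc]
        exact mul_le_mul_of_nonneg_left (sum_exp_neg_mul_add_le hε L m) hK

/-! ### The Kolmogorov forward equation on the whole line -/

section Evolution

variable (E : EastProcess) (t : ℝ)

/-- The semigroup of the process, acting on functions. -/
def evolve (f : Config → ℝ) (ω : Config) : ℝ := ∫ η, f η ∂(E.P t ω)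

/-- The resolvent of the semigroup at `1`. -/
def resolvent (f : Config → ℝ) (ω : Config) : ℝ :=
  ∫ u in Set.Ioi (0 : ℝ), Real.exp (-u) * evolve E u f ω

variable {E t} {f g : Config → ℝ}

lemma integrable_of_continuous (hf : Continuous f) (m : Measure Config) [IsFiniteMeasure m] :
    Integrable f m :=
  hf.integrable_of_hasCompactSupport (HasCompactSupport.of_compactSpace f)

lemma abs_evolve_le {c : ℝ} (hf : ∀ η, |f η| ≤ c) (ω : Config) : |evolve E t f ω| ≤ c := by
  have := E.markov t
  simpa [evolve] using norm_integral_le_of_norm_le_const (μ := E.P t ω) (f := f) (ae_of_all _ hf)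

lemma measurable_evolve (hf : Measurable f) : Measurable (evolve E t f) := by
  have := E.markov t
  exact (hf.stronglyMeasurable.integral_kernel (κ := E.P t)).measurable

lemma evolve_sub (hf : Continuous f) (hg : Continuous g) :
    evolve E t (f - g) = evolve E t f - evolve E t g := by
  have := E.markov t
  exact funext fun ω => integral_sub (integrable_of_continuous hf _) (integrable_of_continuous hg _)

lemma evolve_zero (f : Config → ℝ) : evolve E 0 f = f := by
  funext ω
  rw [evolve, E.P0, Kernel.id_apply, integral_dirac]

lemma evolve_add (hf : Continuous f) {s u : ℝ} (hs : 0 ≤ s) (hu : 0 ≤ u) (ω : Config) :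
    evolve E (s + u) f ω = evolve E s (evolve E u f) ω := by
  have := E.markov (s + u)
  have hint := integrable_of_continuous hf (E.P (s + u) ω)
  rw [E.semigroup u s hu hs] at hint
  simp only [evolve, E.semigroup u s hu hs, Kernel.integral_comp hint]

lemma continuous_exp_neg_mul_evolve (hf : Continuous f) (ω : Config) :
    Continuous fun u : ℝ => Real.exp (-u) * evolve E u f ω :=
  (Real.continuous_exp.comp continuous_neg).mul (E.timeCont f hf ω)

lemma norm_exp_neg_mul_evolve_le {c : ℝ} (hf : ∀ η, |f η| ≤ c) (u : ℝ) (ω : Config) :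
    ‖Real.exp (-u) * evolve E u f ω‖ ≤ Real.exp (-u) * c := by
  rw [norm_mul, Real.norm_of_nonneg (Real.exp_nonneg _)]
  exact mul_le_mul_of_nonneg_left (abs_evolve_le hf ω) (Real.exp_nonneg _)

lemma exists_forall_abs_le_of_continuous (hf : Continuous f) : ∃ c, ∀ η, |f η| ≤ c := by
  obtain ⟨c, hc⟩ := isCompact_univ.exists_bound_of_continuousOn hf.continuousOn
  exact ⟨c, fun η => hc η trivial⟩

lemma continuous_resolvent (hf : Continuous f) : Continuous (resolvent E f) := by
  obtain ⟨c, hc⟩ := exists_forall_abs_le_of_continuous hf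
  refine continuous_of_dominated (bound := fun u => Real.exp (-u) * c)
    (fun ω => (continuous_exp_neg_mul_evolve hf ω).aestronglyMeasurable)
    (fun ω => ae_of_all _ fun u => norm_exp_neg_mul_evolve_le hc u ω)
    ((integrableOn_exp_neg_Ioi 0).mul_const c) ?_
  exact (ae_restrict_iff' measurableSet_Ioi).2 <| ae_of_all _ fun u hu =>
    continuous_const.mul (E.feller u (le_of_lt hu) f hf)

lemma integrableOn_exp_neg_mul_evolve (hf : Continuous f) (ω : Config) (s : ℝ) :
    IntegrableOn (fun u : ℝ => Real.exp (-u) * evolve E u f ω) (Set.Ioi s) := by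
  obtain ⟨c, hc⟩ := exists_forall_abs_le_of_continuous hf
  exact ((integrableOn_exp_neg_Ioi s).mul_const c).mono'
    (continuous_exp_neg_mul_evolve hf ω).aestronglyMeasurable
    (ae_of_all _ fun u => norm_exp_neg_mul_evolve_le hc u ω)

lemma evolve_resolvent (hf : Continuous f) {s : ℝ} (hs : 0 ≤ s) (ω : Config) :
    evolve E s (resolvent E f) ω =
      ∫ u in Set.Ioi (0 : ℝ), Real.exp (-u) * evolve E (u + s) f ω := by
  have := E.markov s
  obtain ⟨c, hc⟩ := exists_forall_abs_le_of_continuous hf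
  have hmeas : Measurable (Function.uncurry fun (η : Config) (u : ℝ) =>
      Real.exp (-u) * evolve E u f η) :=
    (measurable_uncurry_of_continuous_of_measurable (continuous_exp_neg_mul_evolve hf)
      fun u => (measurable_evolve hf.measurable).const_mul (Real.exp (-u))).comp measurable_swap
  have hbound : Integrable (fun x : Config × ℝ => (1 : ℝ) * (Real.exp (-x.2) * c))
      ((E.P s ω).prod (volume.restrict (Set.Ioi (0 : ℝ)))) :=
    (integrable_const (1 : ℝ)).mul_prod ((integrableOn_exp_neg_Ioi 0).mul_const c)
  calc evolve E s (resolvent E f) ω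
      = ∫ u in Set.Ioi (0 : ℝ), ∫ η, Real.exp (-u) * evolve E u f η ∂(E.P s ω) :=
        integral_integral_swap <| hbound.mono' hmeas.aestronglyMeasurable <| ae_of_all _ fun x => by
          simpa only [one_mul, Function.uncurry_def] using
            norm_exp_neg_mul_evolve_le hc x.2 x.1
    _ = _ := setIntegral_congr_fun measurableSet_Ioi fun u hu => by
        rw [integral_const_mul, add_comm u s, evolve_add hf hs (le_of_lt hu)]
        rfl

lemma evolve_resolvent_eq_exp_mul (hf : Continuous f) {s : ℝ} (hs : 0 ≤ s) (ω : Config) :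
    evolve E s (resolvent E f) ω =
      Real.exp s * (resolvent E f ω - ∫ u in (0 : ℝ)..s, Real.exp (-u) * evolve E u f ω) := by
  have hshift := (measurePreserving_add_right volume s).setIntegral_preimage_emb
    (measurableEmbedding_addRight s) (fun u => Real.exp (-u) * evolve E u f ω) (Set.Ioi s)
  rw [Set.preimage_add_const_Ioi, sub_self] at hshift
  rw [resolvent, ← intervalIntegral.integral_interval_add_Ioi
    (integrableOn_exp_neg_mul_evolve hf ω 0) (integrableOn_exp_neg_mul_evolve hf ω s),
    add_sub_cancel_left, ← hshift, evolve_resolvent hf hs, ← integral_const_mul]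
  refine integral_congr_ae (ae_of_all _ fun u => ?_)
  change _ = Real.exp s * (Real.exp (-(u + s)) * _)
  rw [← mul_assoc, ← Real.exp_add]
  ring_nf

lemma hasDerivWithinAt_evolve_resolvent (hf : Continuous f) (ht : 0 ≤ t) (ω : Config) :
    HasDerivWithinAt (fun s => evolve E s (resolvent E f) ω)
      (evolve E t (resolvent E f) ω - evolve E t f ω) (Set.Ici 0) t := by
  have hintegral := ((continuous_exp_neg_mul_evolve (E := E) hf ω).integral_hasStrictDerivAt 0
    t).hasDerivAt
  have hderiv := (Real.hasDerivAt_exp t).mul (hintegral.const_sub (resolvent E f ω))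
  refine (hderiv.hasDerivWithinAt.congr (fun s hs => evolve_resolvent_eq_exp_mul hf hs ω)
    (evolve_resolvent_eq_exp_mul hf ht ω)).congr_deriv ?_
  rw [evolve_resolvent_eq_exp_mul hf ht, mul_neg, ← mul_assoc, ← Real.exp_add, add_neg_cancel,
    Real.exp_zero, one_mul, ← sub_eq_add_neg]

lemma nonpos_of_hasDerivWithinAt_evolve (hf : Continuous f)
    (hderiv : ∀ ω, HasDerivWithinAt (fun s => evolve E s f ω) (f ω) (Set.Ici 0) 0) (η : Config) :
    f η ≤ 0 := by
  obtain ⟨ω, _, hmax⟩ := isCompact_univ.exists_isMaxOn ⟨η, trivial⟩ hf.continuousOn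
  have hle (s : ℝ) : evolve E s f ω ≤ f ω := by
    have := E.markov s
    simpa [evolve] using integral_mono (integrable_of_continuous hf (E.P s ω))
      (integrable_const (f ω)) fun η => hmax (Set.mem_univ η)
  have hslope := hasDerivWithinAt_iff_tendsto_slope.1 (hderiv ω)
  rw [Set.Ici_sdiff_left] at hslope
  refine (hmax trivial).trans (le_of_tendsto hslope ?_)
  filter_upwards [self_mem_nhdsWithin] with s hs
  rw [slope_def_field, evolve_zero, sub_zero]
  exact div_nonpos_of_nonpos_of_nonneg (sub_nonpos.2 (hle s)) (le_of_lt hs)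

/-- Both sides solve `h - L h = f - L f`, and a solution of `h = L h` vanishes by the maximum
principle. -/
lemma resolvent_sub_eastGen (hf : Continuous f) (hcyl : IsCylinder f)
    (hgen : Continuous (eastGen E.p f)) : resolvent E (f - eastGen E.p f) = f := by
  set R := resolvent E (f - eastGen E.p f)
  have hR : Continuous R := continuous_resolvent (hf.sub hgen)
  have hderiv (ω : Config) :
      HasDerivWithinAt (fun s => evolve E s (f - R) ω) ((f - R) ω) (Set.Ici 0) 0 := by
    have hsub := (E.generator f hcyl ω).sub
      (hasDerivWithinAt_evolve_resolvent (E := E) (hf.sub hgen) le_rfl ω)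
    rw [evolve_zero, evolve_zero] at hsub
    refine (hsub.congr_of_mem (fun s _ => ?_) Set.self_mem_Ici).congr_deriv ?_
    · rw [evolve_sub hf hR]
      rfl
    · simp only [Pi.sub_apply]
      ring
  have hderiv_neg (ω : Config) :
      HasDerivWithinAt (fun s => evolve E s (R - f) ω) ((R - f) ω) (Set.Ici 0) 0 := by
    refine ((hderiv ω).neg.congr_of_mem (fun s _ => ?_) Set.self_mem_Ici).congr_deriv (neg_sub _ _)
    simp only [evolve_sub hf hR, evolve_sub hR hf, Pi.neg_apply, Pi.sub_apply, neg_sub]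
  exact funext fun ω => le_antisymm
    (sub_nonpos.1 (nonpos_of_hasDerivWithinAt_evolve (hR.sub hf) hderiv_neg ω))
    (sub_nonpos.1 (nonpos_of_hasDerivWithinAt_evolve (hf.sub hR) hderiv ω))

lemma hasDerivWithinAt_evolve (hf : Continuous f) (hcyl : IsCylinder f)
    (hgen : Continuous (eastGen E.p f)) (ht : 0 ≤ t) (ω : Config) :
    HasDerivWithinAt (fun s => evolve E s f ω) (evolve E t (eastGen E.p f) ω) (Set.Ici 0) t := by
  have hderiv := hasDerivWithinAt_evolve_resolvent (E := E) (hf.sub hgen) ht ω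
  rwa [resolvent_sub_eastGen hf hcyl hgen, evolve_sub hf hgen, Pi.sub_apply, sub_sub_cancel]
    at hderiv

end Evolution

/-! ### Approximation of the process by its restriction to a box -/

lemma hasDerivWithinAt_linearForm_apply {ι : Type*} [Finite ι]
    {Λ : ℝ → (ι → ℝ) →ₗ[ℝ] ℝ} {Λ' : (ι → ℝ) → ℝ} {F : ℝ → ι → ℝ} {F' : ι → ℝ} {S : Set ℝ} {t : ℝ}
    (hS : UniqueDiffWithinAt ℝ S t)
    (hΛ : ∀ f, HasDerivWithinAt (fun s => Λ s f) (Λ' f) S t) (hF : HasDerivWithinAt F F' S t) :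
    HasDerivWithinAt (fun s => Λ s (F s)) (Λ t F' + Λ' (F t)) S t := by
  classical
  cases nonempty_fintype ι
  set e : ι → ι → ℝ := fun i j => if i = j then 1 else 0
  have hsum (s : ℝ) (f : ι → ℝ) : Λ s f = ∑ i, f i * Λ s (e i) :=
    (Λ s).pi_apply_eq_sum_univ f
  have hderiv (G : ℝ → ι → ℝ) (G' : ι → ℝ) (hG : HasDerivWithinAt G G' S t) :
      HasDerivWithinAt (fun s => Λ s (G s))
        (Λ t G' + ∑ i, G t i * Λ' (e i)) S t := by
    simp only [fun s => hsum s (G s), hsum t G', ← Finset.sum_add_distrib]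
    exact HasDerivWithinAt.fun_sum fun i _ => (hasDerivWithinAt_pi.1 hG i).mul (hΛ _)
  have hΛ' : Λ' (F t) = ∑ i, F t i * Λ' (e i) := by
    simpa using hS.eq_deriv _ (hΛ (F t)) (hderiv _ _ (hasDerivWithinAt_const t S (F t)))
  rw [hΛ']
  exact hderiv F F' hF

/-- The restriction of a configuration to the box. -/
def restrict (η : Config) : BoxConfig a b := fun i => η i.1

lemma continuous_restrict : Continuous (restrict : Config → BoxConfig a b) :=
  continuous_pi fun i => continuous_apply i.1

lemma continuous_comp_restrict (H : BoxConfig a b → ℝ) : Continuous (H ∘ restrict) :=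
  (continuous_of_discreteTopology (f := H)).comp continuous_restrict

lemma dependsOnF_comp_restrict (H : BoxConfig a b → ℝ) :
    DependsOnF (H ∘ restrict) (Finset.Icc a b) := fun _ _ h =>
  congrArg H (funext fun i => h i.1 (Finset.mem_coe.2 i.2))

lemma extend_restrict {x : ℤ} (hx : x ∈ Finset.Icc a b) (η : Config) :
    extend (restrict η : BoxConfig a b) x = η x := dif_pos hx

lemma restrict_update (x : ℤ) (c : Bool) (η : Config) :
    (restrict (Function.update η x c) : BoxConfig a b) = setSite x c (restrict η) :=
  funext fun i => Function.update_apply η x c i.1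

lemma eastGen_comp_restrict (p : ℝ) (H : BoxConfig a b → ℝ) (η : Config) :
    eastGen p (H ∘ restrict) η = ∑ x ∈ Finset.Icc a b,
      constraint x η * (siteAvg p x H (restrict η) - H (restrict η)) := by
  rw [eastGen_eq_sum (dependsOnF_comp_restrict H)]
  simp only [latticeAvg, Function.comp_apply, restrict_update, siteAvg_apply]

lemma continuous_constraint (x : ℤ) : Continuous (constraint x) :=
  (continuous_of_discreteTopology (f := fun c : Bool => if c = false then (1 : ℝ) else 0)).comp
    (continuous_apply (x + 1))

lemma continuous_eastGen_comp_restrict (p : ℝ) (H : BoxConfig a b → ℝ) :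
    Continuous (eastGen p (H ∘ restrict)) := by
  simp_rw [funext (eastGen_comp_restrict p H)]
  exact continuous_finsetSum _ fun x _ => (continuous_constraint x).mul
    (continuous_comp_restrict (siteAvg p x H - H))

lemma eastGen_comp_restrict_sub_killedGen (hab : a ≤ b) (p : ℝ) (H : BoxConfig a b → ℝ)
    (η : Config) :
    eastGen p (H ∘ restrict) η - killedGen p 0 H (restrict η) =
      (constraint b η - 1) * (siteAvg p b H (restrict η) - H (restrict η)) := by
  rw [eastGen_comp_restrict, killedGen_apply, Pi.zero_apply, zero_mul, sub_zero,
    ← Finset.sum_sub_distrib, Finset.sum_eq_single_of_mem b (Finset.right_mem_Icc.2 hab)]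
  · rw [boxConstraint, constraint, constraint, extend_of_gt (by omega) (by omega), if_pos rfl]
    ring
  · intro x hx hxb
    rw [Finset.mem_Icc] at hx
    rw [boxConstraint, constraint, constraint,
      extend_restrict (Finset.mem_Icc.2 ⟨by omega, by omega⟩), sub_self]

section BoxApproximation

variable (E : EastProcess) {H : BoxConfig a b → ℝ} {t : ℝ} (ω : Config)

/-- The expectation at time `s`, as a linear form on the observables of the box. -/
def boxExpectation (s : ℝ) : (BoxConfig a b → ℝ) →ₗ[ℝ] ℝ where
  toFun H := evolve E s (H ∘ restrict) ω
  map_add' H H' := by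
    have := E.markov s
    exact integral_add (integrable_of_continuous (continuous_comp_restrict H) _)
      (integrable_of_continuous (continuous_comp_restrict H') _)
  map_smul' c H := integral_const_mul c _

lemma boxExpectation_apply (s : ℝ) (H : BoxConfig a b → ℝ) :
    boxExpectation E ω s H = evolve E s (H ∘ restrict) ω := rfl

lemma hasDerivWithinAt_boxExpectation (H : BoxConfig a b → ℝ) (ht : 0 ≤ t) :
    HasDerivWithinAt (fun s => boxExpectation E ω s H)
      (evolve E t (eastGen E.p (H ∘ restrict)) ω) (Set.Ici 0) t :=
  hasDerivWithinAt_evolve (continuous_comp_restrict H) ⟨_, dependsOnF_comp_restrict H⟩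
    (continuous_eastGen_comp_restrict E.p H) ht ω

lemma hasDerivWithinAt_boxExpectation_boxSemigroup (hab : a ≤ b) (H : BoxConfig a b → ℝ) {s : ℝ}
    (hs : 0 ≤ s) :
    HasDerivWithinAt (fun s => boxExpectation E ω s (boxSemigroup E.p (t - s) H))
      (evolve E s (fun η => (constraint b η - 1) *
        (siteAvg E.p b (boxSemigroup E.p (t - s) H) (restrict η) -
          boxSemigroup E.p (t - s) H (restrict η))) ω) (Set.Ici 0) s := by
  set G := boxSemigroup E.p (t - s) H with hG
  have hF : HasDerivWithinAt (fun s => boxSemigroup E.p (t - s) H) (-killedGen E.p 0 G)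
      (Set.Ici 0) s := by
    refine hasDerivWithinAt_pi.2 fun σ => HasDerivAt.hasDerivWithinAt ?_
    simpa using (hasDerivAt_boxSemigroup E.p H (t - s) σ).comp_const_sub t s
  have hderiv := hasDerivWithinAt_linearForm_apply (uniqueDiffOn_Ici 0 s hs)
    (fun f => hasDerivWithinAt_boxExpectation E ω f hs) hF
  refine hderiv.congr_deriv ?_
  simp_rw [← eastGen_comp_restrict_sub_killedGen hab]
  rw [map_neg, ← hG, neg_add_eq_sub]
  exact (congrFun (evolve_sub (continuous_eastGen_comp_restrict E.p G)
    (continuous_comp_restrict (killedGen E.p 0 G))) ω).symm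

/-- In the box the site `b` is never constrained; by finite speed of propagation this is not felt
by an observable living at distance `j` from `b`. -/
lemma abs_evolve_comp_restrict_sub_boxSemigroup_le (hab : a ≤ b) {z : ℤ}
    (hH : ∀ x, z < x → IgnoresSite x H) {c : ℝ} (hc : ∀ σ, |H σ| ≤ c) {j : ℕ} (hj : z + j = b)
    (ht : 0 ≤ t) :
    |evolve E t (H ∘ restrict) ω - boxSemigroup E.p t H (restrict ω)| ≤
      2 * c * ((2 * t) ^ j / j.factorial) * t := by
  have hc0 : 0 ≤ c := (abs_nonneg _).trans (hc (restrict ω))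
  have hderiv_le : ∀ s ∈ Set.Ico 0 t, ‖evolve E s (fun η => (constraint b η - 1) *
      (siteAvg E.p b (boxSemigroup E.p (t - s) H) (restrict η) -
        boxSemigroup E.p (t - s) H (restrict η))) ω‖ ≤ 2 * c * ((2 * t) ^ j / j.factorial) := by
    rintro s ⟨hs0, hst⟩
    refine abs_evolve_le (fun η => ?_) ω
    have hspeed := abs_boxSemigroup_sub_siteAvg_le (p_mem_Icc E) hH hc j (sub_nonneg.2 hst.le)
      (restrict η)
    rw [hj] at hspeed
    have hconstraint : |constraint b η - 1| ≤ 1 := abs_le.2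
      ⟨by linarith [constraint_nonneg b η], by linarith [constraint_le_one b η]⟩
    rw [abs_mul, abs_sub_comm (siteAvg _ _ _ _)]
    refine (mul_le_of_le_one_left (abs_nonneg _) hconstraint).trans (hspeed.trans ?_)
    have := sub_nonneg.2 hst.le
    gcongr
    linarith
  have hmean := norm_image_sub_le_of_norm_deriv_le_segment'
    (fun s hs => (hasDerivWithinAt_boxExpectation_boxSemigroup E ω hab H hs.1).mono
      Set.Icc_subset_Ici_self) hderiv_le t (Set.right_mem_Icc.2 ht)
  simpa [boxExpectation_apply, evolve_zero] using hmean

end BoxApproximation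

/-! ### The configuration seen from the front -/

/-- The configuration seen from `y`, with a zero put at the origin and ones to its left. -/
def viewFrom (y : ℤ) (η : Config) : Config := fun x => if 0 < x then η (y + x) else decide (x ≠ 0)

lemma viewFrom_front_add (L : ℤ) (η : Config) : viewFrom (front η + L) η = θL L η := by
  funext x
  rcases lt_trichotomy x 0 with hx | rfl | hx
  · simp [viewFrom, θL, hx, hx.ne, hx.not_gt]
  · simp [viewFrom, θL]
  · simp [viewFrom, θL, hx, hx.ne', hx.not_gt]

lemma measurable_viewFrom (y : ℤ) : Measurable (viewFrom y) := by
  refine measurable_pi_iff.2 fun x => ?_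
  unfold viewFrom
  split_ifs
  exacts [measurable_pi_apply _, measurable_const]

lemma viewFrom_mem_LO (y : ℤ) (η : Config) : viewFrom y η ∈ LO :=
  ⟨⟨0, fun x hx => by simp [viewFrom, hx.not_gt, hx.ne]⟩, 0, by simp [viewFrom]⟩

lemma measurableSet_isLeast_zero (z : ℤ) :
    MeasurableSet {η : Config | η z = false ∧ ∀ x < z, η x = true} := by
  have hset : {η : Config | η z = false ∧ ∀ x < z, η x = true} =
      {η | η z = false} ∩ ⋂ x, ⋂ (_ : x < z), {η | η x = true} := by
    ext η
    simp only [Set.mem_ofPred_eq, Set.mem_inter_iff, Set.mem_iInter]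
  have heval (x : ℤ) (c : Bool) : MeasurableSet {η : Config | η x = c} :=
    measurableSet_eq_fun (measurable_pi_apply x) measurable_const
  rw [hset]
  exact (heval z _).inter (MeasurableSet.iInter fun x => MeasurableSet.iInter fun _ => heval x _)

lemma mem_LO_and_front_eq_iff {η : Config} {z : ℤ} :
    η ∈ LO ∧ front η = z ↔ η z = false ∧ ∀ x < z, η x = true :=
  ⟨fun ⟨hη, hz⟩ => hz ▸ ⟨apply_front hη, fun _ => apply_of_lt_front hη⟩,
    fun h => ⟨⟨⟨z, h.2⟩, z, h.1⟩, front_eq_of_forall_lt h.1 h.2⟩⟩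

lemma measurableSet_LO : MeasurableSet LO := by
  have hLO : LO = ⋃ z, {η : Config | η z = false ∧ ∀ x < z, η x = true} := by
    ext η
    simp [← mem_LO_and_front_eq_iff]
  rw [hLO]
  exact MeasurableSet.iUnion measurableSet_isLeast_zero

lemma front_of_notMem_LO {η : Config} (hη : η ∉ LO) : front η = 0 := by
  by_cases hbdd : BddBelow {x : ℤ | η x = false}
  · have hempty : {x : ℤ | η x = false} = ∅ := by
      refine Set.not_nonempty_iff_eq_empty.1 fun hne => hη ⟨?_, hne⟩
      obtain ⟨y, hy⟩ := hbdd
      exact ⟨y, fun x hx => Bool.of_not_eq_false fun h => hx.not_ge (hy h)⟩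
    rw [front, hempty, Int.csInf_empty]
  · exact Int.csInf_of_not_bddBelow hbdd

lemma measurable_front : Measurable front := by
  have hLO : Measurable fun η : LO => front η := measurable_to_countable' fun z => by
    have hpre : (fun η : LO => front η) ⁻¹' {z} =
        Subtype.val ⁻¹' {η : Config | η z = false ∧ ∀ x < z, η x = true} := by
      ext η
      simp [← mem_LO_and_front_eq_iff]
    rw [hpre]
    exact measurable_subtype_coe (measurableSet_isLeast_zero z)
  have hcompl : Measurable fun η : (LOᶜ : Set Config) => front η := by
    simp only [fun η : (LOᶜ : Set Config) => front_of_notMem_LO η.2]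
    exact measurable_const
  exact measurable_of_restrict_of_restrict_compl measurableSet_LO hLO hcompl

lemma measurable_θL (L : ℤ) : Measurable (θL L) := by
  have hview : Measurable fun q : ℤ × Config => viewFrom (q.1 + L) q.2 :=
    measurable_from_prod_countable_right fun z => measurable_viewFrom (z + L)
  simpa only [Function.comp_def, viewFrom_front_add, id] using
    hview.comp (measurable_front.prodMk measurable_id)

/-- The one-site weights of `μ̃`. -/
def muTildeWeight (p : ℝ) (x : ℤ) (c : Bool) : ℝ :=
  if 0 < x then bernoulliWeight p c else if c = decide (x ≠ 0) then 1 else 0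

lemma isProductLaw_muTildeWeight {p : ℝ} {m : Measure Config} (hm : IsMuTilde p m) :
    IsProductLaw (muTildeWeight p) m := by
  intro S σ
  refine (hm.2 S σ).trans (Finset.prod_congr rfl fun x _ => ?_)
  rcases lt_trichotomy x 0 with hx | rfl | hx
  · simp [muTildeWeight, hx, hx.not_gt, hx.ne]
  · cases σ 0 <;> simp [muTildeWeight]
  · simp [muTildeWeight, bernoulliWeight, hx, hx.not_gt, hx.ne']

lemma preimage_viewFrom_cylinderEvent (y : ℤ) (S : Finset ℤ) (σ : Config)
    (hσ : ∀ x ∈ S, x ≤ 0 → σ x = decide (x ≠ 0)) :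
    viewFrom y ⁻¹' cylinderEvent S σ =
      cylinderEvent ((S.filter (0 < ·)).map (addLeftEmbedding y)) fun x => σ (x - y) := by
  ext η
  simp only [cylinderEvent, Set.mem_preimage, Set.mem_ofPred_eq, Finset.mem_map,
    Finset.mem_filter, addLeftEmbedding_apply, forall_exists_index, and_imp]
  constructor
  · rintro h _ x hxS hx rfl
    rw [add_sub_cancel_left, ← h x hxS, viewFrom, if_pos hx]
  · intro h x hxS
    rw [viewFrom]
    split_ifs with hx
    · rw [h _ x hxS hx rfl, add_sub_cancel_left]
    · exact (hσ x hxS (not_lt.1 hx)).symm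

lemma map_viewFrom {E : EastProcess} {m : Measure Config} (hm : IsMuTilde E.p m) (y : ℤ) :
    E.μ.map (viewFrom y) = m := by
  have := E.μprob
  refine ext_of_cylinderEvent fun S σ => ?_
  rw [Measure.map_apply (measurable_viewFrom y) (measurableSet_cylinderEvent S σ),
    isProductLaw_muTildeWeight hm]
  by_cases hσ : ∀ x ∈ S, x ≤ 0 → σ x = decide (x ≠ 0)
  · rw [preimage_viewFrom_cylinderEvent y S σ hσ]
    have hμ : IsProductLaw (fun _ => bernoulliWeight E.p) E.μ := E.μprod
    rw [hμ, Finset.prod_map, Finset.prod_filter]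
    refine Finset.prod_congr rfl fun x hxS => ?_
    rw [addLeftEmbedding_apply, add_sub_cancel_left, muTildeWeight]
    split_ifs with hx h
    exacts [rfl, ENNReal.ofReal_one.symm, absurd (hσ x hxS (not_lt.1 hx)) h]
  · push Not at hσ
    obtain ⟨x, hxS, hx, hne⟩ := hσ
    rw [Finset.prod_eq_zero hxS (by rw [muTildeWeight, if_neg hx.not_gt, if_neg hne,
      ENNReal.ofReal_zero])]
    convert measure_empty (μ := E.μ)
    refine Set.eq_empty_of_forall_notMem fun η hη => hne ?_
    rw [← hη x hxS, viewFrom, if_neg hx.not_gt]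

section MuTilde

variable {E : EastProcess} {m : Measure Config} (hm : IsMuTilde E.p m)
include hm

lemma integral_comp_restrict {n : ℕ} (hn : (n : ℤ) = b) (H : BoxConfig a b → ℝ) :
    ∫ η, H (restrict η) ∂m = blockAvg E.p 0 n H singleZero := by
  have hμ : IsProductLaw (fun _ => bernoulliWeight E.p) E.μ := E.μprod
  rw [← map_viewFrom hm 0, integral_map (f := fun η => H (restrict η))
    (measurable_viewFrom 0).aemeasurable
    (continuous_comp_restrict H).aestronglyMeasurable,
    ← hμ.integral_overwrite (p_mem_Icc E) (fun _ _ => rfl)]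
  refine integral_congr_ae (ae_of_all _ fun η => congrArg H (funext fun i => ?_))
  have hi := Finset.mem_Icc.1 i.2
  rw [restrict, viewFrom, overwrite, singleZero, zero_add, zero_add, hn]
  simp only [hi.2, and_true]

lemma blockAvg_comp_viewFrom {y : ℤ} {M : ℕ} (hy : a ≤ y + 1) (hM : y + M ≤ b) {g : Config → ℝ}
    (hg : Measurable g) (hdep : DependsOnF g (Finset.Icc (-(M : ℤ)) M)) (ω : BoxConfig a b) :
    blockAvg E.p y M (fun ω => g (viewFrom y (extend ω))) ω = ∫ η, g η ∂m := by
  have hμ : IsProductLaw (fun _ => bernoulliWeight E.p) E.μ := E.μprod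
  rw [← hμ.integral_overwrite (p_mem_Icc E) (fun _ _ => rfl), ← map_viewFrom hm y,
    integral_map (measurable_viewFrom y).aemeasurable hg.aestronglyMeasurable]
  refine integral_congr_ae (ae_of_all _ fun η => hdep _ _ fun x hx => ?_)
  rw [Finset.mem_coe, Finset.mem_Icc] at hx
  unfold viewFrom
  split_ifs with hpos
  · rw [extend, dif_pos (Finset.mem_Icc.2 ⟨by omega, by omega⟩), overwrite,
      if_pos ⟨by dsimp only; omega, by dsimp only; omega⟩]
  · rfl

lemma ae_bind_mem_LO {t : ℝ} (ht : 0 ≤ t) : ∀ᵐ η ∂(m.bind (E.P t)), η ∈ LO := by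
  have := E.markov t
  have hLO : ∀ᵐ ω ∂m, ω ∈ LO := by
    rw [← map_viewFrom hm 0,
      ae_map_iff (p := (· ∈ LO)) (measurable_viewFrom 0).aemeasurable measurableSet_LO]
    exact ae_of_all _ (viewFrom_mem_LO 0)
  refine Measure.ae_comp_of_ae_ae measurableSet_LO (hLO.mono fun ω hω => ?_)
  exact (mem_ae_iff_prob_eq_one measurableSet_LO).2 (E.loStable t ht ω hω)

end MuTilde

/-! ### The infinite-volume limit -/

/-- The centred observable `g (θL L η) - α`, cut off when the front is farther than `k` from the
origin. -/
def centredView (g : Config → ℝ) (L : ℤ) (α : ℝ) (k : ℤ) (η : Config) : ℝ :=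
  if |front η| ≤ k then g (θL L η) - α else 0

lemma abs_centredView_le {g : Config → ℝ} (hg : ∀ η, |g η| ≤ 1) {α : ℝ} (hα : |α| ≤ 1) (L k : ℤ)
    (η : Config) : |centredView g L α k η| ≤ 2 := by
  unfold centredView
  split_ifs
  · linarith [abs_sub (g (θL L η)) α, hg (θL L η)]
  · norm_num

lemma front_congr {η η' : Config} {r : ℤ} (hη : η ∈ LO) (hr : front η ≤ r)
    (h : ∀ x ≤ r, η x = η' x) : front η' = front η :=
  front_eq_of_forall_lt ((h _ hr).symm.trans (apply_front hη)) fun x hx =>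
    (h x (hx.le.trans hr)).symm.trans (apply_of_lt_front hη hx)

/-- The cut-off centred observable `centredView`, evaluated on the configuration in the window on
which it depends when `g` depends on the sites of `[-M, M]`. -/
def windowView (g : Config → ℝ) (L M : ℕ) (α : ℝ) (k : ℕ) (η : Config) : ℝ :=
  centredView g L α k (extend (restrict η : BoxConfig (-(k : ℤ)) (k + L + M)))

section Window

variable {g : Config → ℝ} {L M : ℕ} (hdep : DependsOnF g (Finset.Icc (-(M : ℤ)) M)) (α : ℝ)
include hdep

lemma centredView_congr {k : ℤ} {η η' : Config} (hη : η ∈ LO) (hη' : η' ∈ LO)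
    (h : ∀ x ≤ k + L + M, η x = η' x) : centredView g L α k η = centredView g L α k η' := by
  have hfront : front η' = front η ∨ k < front η ∧ k < front η' := by
    by_contra! hne
    by_cases hk : front η ≤ k
    · exact hne.1 (front_congr hη hk fun x hx => h x (by omega))
    · refine hne.1 (front_congr hη' (hne.2 (not_le.1 hk)) fun x hx => (h x (by omega)).symm).symm
  rcases hfront with hfront | hfront
  · unfold centredView
    rw [hfront]
    split_ifs with hk
    · refine congrArg (· - α) (hdep _ _ fun x hx => ?_)
      rw [Finset.mem_coe, Finset.mem_Icc] at hx
      rw [θL, θL, hfront, h _ (by linarith [le_abs_self (front η)])]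
    · rfl
  · rw [centredView, centredView, if_neg fun hk => hfront.1.not_ge ((le_abs_self _).trans hk),
      if_neg fun hk => hfront.2.not_ge ((le_abs_self _).trans hk)]

lemma windowView_eq_comp_restrict {k : ℕ} (hb : (k : ℤ) + L + M ≤ b) :
    windowView g L M α k =
      (fun σ : BoxConfig (-(k : ℤ)) b => centredView g L α k (extend σ)) ∘ restrict := by
  funext η
  refine centredView_congr hdep α (extend_mem_LO (by omega) _) (extend_mem_LO (by omega) _)
    fun x hx => ?_
  rcases lt_or_ge x (-k) with hxk | hxk
  · rw [extend_of_lt hxk, extend_of_lt hxk]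
  · rw [extend_restrict (Finset.mem_Icc.2 ⟨hxk, hx⟩),
      extend_restrict (Finset.mem_Icc.2 ⟨hxk, hx.trans hb⟩)]

lemma eventually_windowView_eq {η : Config} (hη : η ∈ LO) :
    ∀ᶠ k : ℕ in atTop, windowView g L M α k η = g (θL L η) - α := by
  obtain ⟨y, hy⟩ := hη.1
  filter_upwards [eventually_ge_atTop ((-y).toNat + (front η).natAbs)] with k hk
  have hwindow : windowView g L M α k η = centredView g L α k η := by
    refine centredView_congr hdep α (extend_mem_LO (by omega) _) hη fun x hx => ?_
    rcases lt_or_ge x (-k) with hxk | hxk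
    · rw [extend_of_lt hxk, hy x (by omega)]
    · rw [extend_restrict (Finset.mem_Icc.2 ⟨hxk, hx⟩)]
  rw [hwindow, centredView, if_pos (abs_le.2 ⟨by omega, by omega⟩)]

end Window

lemma continuous_windowView (g : Config → ℝ) (L M : ℕ) (α : ℝ) (k : ℕ) :
    Continuous (windowView g L M α k) :=
  continuous_comp_restrict fun σ => centredView g L α k (extend σ)

/-- The observable `g` of the configuration seen from `z + L`, cut off when `k < |z|`. -/
def cutoffView (g : Config → ℝ) (L k z : ℤ) (ω : BoxConfig a b) : ℝ :=
  if |z| ≤ k then g (viewFrom (z + L) (extend ω)) else 0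

lemma abs_cutoffView_le {g : Config → ℝ} (hg : ∀ η, |g η| ≤ 1) (L k z : ℤ) (ω : BoxConfig a b) :
    |cutoffView g L k z ω| ≤ 1 := by
  unfold cutoffView
  split_ifs
  · exact hg _
  · norm_num

lemma ignoresSite_cutoffView (g : Config → ℝ) (k : ℤ) {L x z : ℤ} (hx : x ≤ z + L) :
    IgnoresSite x (cutoffView (a := a) (b := b) g L k z) := by
  intro ω c
  have hview : viewFrom (z + L) (extend (setSite x c ω)) = viewFrom (z + L) (extend ω) := by
    funext y
    unfold viewFrom
    split_ifs
    · exact extend_setSite_of_ne (by omega) c ω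
    · rfl
  rw [cutoffView, cutoffView, hview]

lemma centredView_extend {E : EastProcess} {m : Measure Config} (hm : IsMuTilde E.p m)
    {g : Config → ℝ} (hg : Measurable g) {L M k : ℕ}
    (hdep : DependsOnF g (Finset.Icc (-(M : ℤ)) M)) (ha : a ≤ -k) (hb : (k : ℤ) + L + M ≤ b) :
    (fun ω : BoxConfig a b => centredView g L (∫ η, g η ∂m) k (extend ω)) =
      atFront (cutoffView g L k) -
        atFront fun z => blockAvg E.p (z + L) M (cutoffView g L k z) := by
  funext ω
  rw [Pi.sub_apply, atFront, atFront]
  unfold cutoffView centredView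
  change (if |boxFront ω| ≤ k then _ else _) = _
  by_cases hk : |boxFront ω| ≤ k
  · have hfront := abs_le.1 hk
    simp only [if_pos hk]
    rw [blockAvg_comp_viewFrom hm (by omega) (by omega) hg hdep, ← viewFrom_front_add]
    rfl
  · simp only [if_neg hk]
    rw [blockAvg_const, sub_zero]

section Limit

variable {E : EastProcess} {m : Measure Config} {t : ℝ}

lemma abs_integral_evolve_sub_integral_boxSemigroup_le [IsProbabilityMeasure m]
    {H : BoxConfig a b → ℝ} {z : ℤ} {j : ℕ} {c : ℝ} (hab : a ≤ b)
    (hH : ∀ x, z < x → IgnoresSite x H) (hc : ∀ σ, |H σ| ≤ c) (hj : z + j = b) (ht : 0 ≤ t) :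
    |∫ ω, evolve E t (H ∘ restrict) ω ∂m - ∫ ω, boxSemigroup E.p t H (restrict ω) ∂m| ≤
      2 * c * ((2 * t) ^ j / j.factorial) * t := by
  have hevolve : Integrable (evolve E t (H ∘ restrict)) m :=
    integrable_of_continuous (E.feller t ht _ (continuous_comp_restrict H)) m
  have hbox : Integrable (fun ω => boxSemigroup E.p t H (restrict ω)) m :=
    integrable_of_continuous (continuous_comp_restrict _) m
  rw [← integral_sub hevolve hbox]
  simpa using norm_integral_le_of_norm_le_const (μ := m)
    (f := fun ω => evolve E t (H ∘ restrict) ω - boxSemigroup E.p t H (restrict ω))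
    (ae_of_all _ fun ω => abs_evolve_comp_restrict_sub_boxSemigroup_le E ω hab hH hc hj ht)

lemma isProbabilityMeasure_bind (E : EastProcess) (m : Measure Config) [IsProbabilityMeasure m]
    (t : ℝ) : IsProbabilityMeasure (m.bind (E.P t)) := by
  have := E.markov t
  exact inferInstanceAs (IsProbabilityMeasure (E.P t ∘ₘ m))

lemma integral_bind_eq_integral_evolve [IsProbabilityMeasure m] {f : Config → ℝ}
    (hf : Continuous f) : ∫ η, f η ∂(m.bind (E.P t)) = ∫ ω, evolve E t f ω ∂m := by
  have := E.markov t
  have hint := integrable_of_continuous hf ((E.P t ∘ₖ Kernel.const Unit m) ())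
  simpa only [Kernel.comp_apply, Kernel.const_apply, evolve] using Kernel.integral_comp hint

lemma abs_integral_le_one [IsProbabilityMeasure m] {g : Config → ℝ} (hg : ∀ η, |g η| ≤ 1) :
    |∫ η, g η ∂m| ≤ 1 := by
  simpa using norm_integral_le_of_norm_le_const (μ := m) (f := g) (ae_of_all _ hg)

lemma exists_abs_integral_evolve_windowView_le (hgap : 0 < gap E) (hm : IsMuTilde E.p m) :
    ∃ ε > 0, ∃ K C : ℝ, ∀ (t : ℝ) (L M k : ℕ) (g : Config → ℝ), 0 ≤ t → Measurable g →
      DependsOnF g (Finset.Icc (-(M : ℤ)) M) → (∀ η, |g η| ≤ 1) → C * t ≤ k →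
      |∫ ω, evolve E t (windowView g L M (∫ η, g η ∂m) k) ω ∂m| ≤ K * Real.exp (-ε * L) := by
  obtain ⟨ε, hε, K, -, C, hbox⟩ := exists_abs_blockAvg_boxSemigroup_sub_le hgap
  refine ⟨ε, hε, K, C, fun t L M k g ht hg hdep hg1 hk => ?_⟩
  have := hm.1
  have hwindow (j : ℕ) : |∫ ω, evolve E t (windowView g L M (∫ η, g η ∂m) k) ω ∂m| ≤
      K * Real.exp (-ε * L) + 2 * 2 * ((2 * t) ^ j / j.factorial) * t := by
    obtain ⟨n, hn⟩ : ∃ n : ℕ, n = k + L + M + j := ⟨_, rfl⟩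
    obtain ⟨b, hb⟩ : ∃ b : ℤ, (n : ℤ) = b := ⟨_, rfl⟩
    have hkn : (k : ℝ) ≤ n := by exact_mod_cast (by omega : k ≤ n)
    set H : BoxConfig (-(k : ℤ)) b → ℝ := fun σ => centredView g L (∫ η, g η ∂m) k (extend σ)
    have hright (x : ℤ) (hx : (k : ℤ) + L + M < x) : IgnoresSite x H := fun σ c =>
      centredView_congr hdep _ (extend_mem_LO (by omega) _) (extend_mem_LO (by omega) _)
        fun y hy => extend_setSite_of_ne (by omega) c σ
    have hspeed := abs_integral_evolve_sub_integral_boxSemigroup_le (E := E) (m := m) (by omega)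
      hright (fun σ => abs_centredView_le hg1 (abs_integral_le_one hg1) _ _ _)
      (by omega : (k : ℤ) + L + M + j = b) ht
    have hboxSemigroup := hbox (-k) b n L M t (cutoffView g L k) (by omega) hb ht (by simpa)
      (hk.trans hkn) (fun z x => ignoresSite_cutoffView g k) (abs_cutoffView_le hg1 L k)
    rw [← centredView_extend hm hg hdep le_rfl (by omega), ← integral_comp_restrict hm hb]
      at hboxSemigroup
    rw [windowView_eq_comp_restrict (b := b) hdep _ (by omega)]
    linarith [abs_sub_abs_le_abs_sub (∫ ω, evolve E t (H ∘ restrict) ω ∂m)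
      (∫ ω, boxSemigroup E.p t H (restrict ω) ∂m)]
  have hlim := (((FloorSemiring.tendsto_pow_div_factorial_atTop (2 * t)).const_mul
    (2 * 2)).mul_const t).const_add (K * Real.exp (-ε * L))
  rw [mul_zero, zero_mul, add_zero] at hlim
  exact ge_of_tendsto' hlim hwindow

lemma tendsto_integral_windowView (hm : IsMuTilde E.p m) (ht : 0 ≤ t) {L M : ℕ} {α : ℝ}
    {g : Config → ℝ} (hg : Measurable g) (hdep : DependsOnF g (Finset.Icc (-(M : ℤ)) M))
    (hg1 : ∀ η, |g η| ≤ 1) (hα : |α| ≤ 1) :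
    Tendsto (fun k => ∫ η, windowView g L M α k η ∂(m.bind (E.P t))) atTop
      (𝓝 (∫ η, g (θL L η) ∂(m.bind (E.P t)) - α)) := by
  have := hm.1
  have := isProbabilityMeasure_bind E m t
  have hint : Integrable (fun η => g (θL L η)) (m.bind (E.P t)) :=
    Integrable.of_bound (hg.comp (measurable_θL L)).aestronglyMeasurable 1
      (ae_of_all _ fun η => hg1 _)
  have hsub : ∫ η, g (θL L η) ∂(m.bind (E.P t)) - α =
      ∫ η, (g (θL L η) - α) ∂(m.bind (E.P t)) := by
    simp [integral_sub hint (integrable_const _)]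
  rw [hsub]
  refine tendsto_integral_of_dominated_convergence (fun _ => 2)
    (fun k => (continuous_windowView g L M α k).measurable.aestronglyMeasurable)
    (integrable_const _) (fun k => ae_of_all _ fun η => abs_centredView_le hg1 hα _ _ _) ?_
  filter_upwards [ae_bind_mem_LO hm ht] with η hη
  exact tendsto_const_nhds.congr' ((eventually_windowView_eq hdep α hη).mono fun k h => h.symm)

lemma exists_abs_integral_θL_sub_le (hgap : 0 < gap E) (hm : IsMuTilde E.p m) :
    ∃ ε > 0, ∃ K : ℝ, ∀ (t : ℝ) (L M : ℕ) (g : Config → ℝ), 0 ≤ t → Measurable g →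
      DependsOnF g (Finset.Icc (-(M : ℤ)) M) → (∀ η, |g η| ≤ 1) →
      |∫ η, g (θL L η) ∂(m.bind (E.P t)) - ∫ η, g η ∂m| ≤ K * Real.exp (-ε * L) := by
  obtain ⟨ε, hε, K, C, hwindow⟩ := exists_abs_integral_evolve_windowView_le hgap hm
  refine ⟨ε, hε, K, fun t L M g ht hg hdep hg1 => ?_⟩
  have := hm.1
  refine le_of_tendsto
    (tendsto_integral_windowView hm ht hg hdep hg1 (abs_integral_le_one hg1)).abs ?_
  filter_upwards [eventually_ge_atTop ⌈C * t⌉₊] with k hk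
  rw [integral_bind_eq_integral_evolve (continuous_windowView _ _ _ _ _)]
  exact hwindow t L M k g ht hg hdep hg1 ((Nat.le_ceil _).trans (by exact_mod_cast hk))

end Limit

/-! ### From cylinder sets to the total variation distance -/

lemma abs_measureReal_sub_le_of_isSetAlgebra {α : Type*} [MeasurableSpace α] {m m' : Measure α}
    [IsFiniteMeasure m] [IsFiniteMeasure m'] {𝒜 : Set (Set α)} (h𝒜 : IsSetAlgebra 𝒜)
    (hgen : ‹MeasurableSpace α› = MeasurableSpace.generateFrom 𝒜) {c : ℝ}
    (hc : ∀ B ∈ 𝒜, |m.real B - m'.real B| ≤ c) {A : Set α} (hA : MeasurableSet A) :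
    |m.real A - m'.real A| ≤ c := by
  have hdense : (m + m').MeasureDense 𝒜 :=
    Measure.MeasureDense.of_generateFrom_isSetAlgebra_finite _ h𝒜 hgen
  refine le_of_forall_pos_le_add fun δ hδ => ?_
  obtain ⟨B, hB, hAB⟩ := hdense.approx A hA (measure_ne_top _ _) δ hδ
  have hBmeas := hdense.measurable B hB
  have hsymmDiff : (m + m').real (symmDiff A B) < δ :=
    (ENNReal.lt_ofReal_iff_toReal_lt (measure_ne_top _ _)).1 hAB
  rw [measureReal_add_apply] at hsymmDiff
  have hm : |m.real A - m.real B| ≤ m.real (symmDiff A B) :=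
    abs_measureReal_sub_le_measureReal_symmDiff hA.nullMeasurableSet hBmeas.nullMeasurableSet
  have hm' : |m'.real A - m'.real B| ≤ m'.real (symmDiff A B) :=
    abs_measureReal_sub_le_measureReal_symmDiff hA.nullMeasurableSet hBmeas.nullMeasurableSet
  have hB := hc B hB
  rw [abs_le] at *
  constructor <;> linarith

lemma exists_dependsOnF_indicator {B : Set Config}
    (hB : B ∈ measurableCylinders fun _ : ℤ => Bool) :
    ∃ M : ℕ, DependsOnF (B.indicator fun _ => 1) (Finset.Icc (-(M : ℤ)) M) := by
  obtain ⟨S, T, -, rfl⟩ := (mem_measurableCylinders _).1 hB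
  have hdep := dependsOn_cylinder_indicator_const (α := fun _ => Bool) T (1 : ℝ)
  refine ⟨S.sup Int.natAbs, fun ω ω' h => hdep fun x hx => h x ?_⟩
  have := Finset.le_sup (f := Int.natAbs) hx
  exact Finset.mem_coe.2 (Finset.mem_Icc.2 ⟨by omega, by omega⟩)

end East

/-- **Invariance of `μ̃` seen from the front up to exponentially small errors**
(Theorem 4.6(2) of the paper): there are constants `ε > 0`, `K < ∞` depending only on `p`
such that for every `t > 0` and `L₀ ∈ ℕ`,
`‖μ̃ − ν^{μ̃}_{t,L₀}‖_TV ≤ K e^{-ε L₀}`, where `ν^{μ̃}_{t,L₀}` is the law of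
`θ_{L₀} η` when the initial configuration is distributed according to `μ̃` and `η` according
to the time-`t` distribution (TV distance being expressed as a supremum over measurable
events). -/
theorem mutilde_almost_invariant (E : EastProcess) (hgap : 0 < gap E)
    (μt : Measure Config) (hμt : IsMuTilde E.p μt) :
    ∃ ε K : ℝ, 0 < ε ∧
      ∀ t : ℝ, 0 < t → ∀ L₀ : ℕ, ∀ A : Set Config, MeasurableSet A →
        |(μt A).toReal -
            ((Measure.map (θL L₀) (μt.bind fun ω => E.P t ω)) A).toReal| ≤
          K * Real.exp (-ε * L₀) := by
  obtain ⟨ε, hε, K, hcylinder⟩ := East.exists_abs_integral_θL_sub_le hgap hμt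
  refine ⟨ε, K, hε, fun t ht L₀ A hA => ?_⟩
  have := hμt.1
  have := East.isProbabilityMeasure_bind E μt t
  have := Measure.isFiniteMeasure_map (μt.bind (E.P t)) (θL L₀)
  refine East.abs_measureReal_sub_le_of_isSetAlgebra isSetAlgebra_measurableCylinders
    generateFrom_measurableCylinders.symm (fun B hB => ?_) hA
  have hBmeas : MeasurableSet B := MeasurableSet.of_mem_measurableCylinders hB
  obtain ⟨M, hM⟩ := East.exists_dependsOnF_indicator hB
  have hB1 (η : Config) : |B.indicator (fun _ => (1 : ℝ)) η| ≤ 1 := by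
    by_cases hη : η ∈ B <;> simp [hη]
  have hbound := hcylinder t L₀ M _ ht.le (measurable_const.indicator hBmeas) hM hB1
  rw [← integral_map (East.measurable_θL L₀).aemeasurable
    (measurable_const.indicator hBmeas).aestronglyMeasurable, abs_sub_comm] at hbound
  simpa [integral_indicator_const _ hBmeas] using hbound

end
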